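/- Let d ≥ 2. For almost all x_d ∈ [0,1] one has sup_{(y₁,…,y_{d−1}) ∈ T_{d−1}} sup_{M ∈ ℤ} D_d(u; M, N) ≤ N^{1−1/(d+2)+o(1)} as N → ∞, where u = (y₁,…,y_{d−1}, x_d). That is, for every ε > 0 there is a constant C (depending on x_d, d, ε) such that for all N ≥ 1, all (y₁,…,y_{d−1}) ∈ T_{d−1} and all M ∈ ℤ, D_d(u; M, N) ≤ C N^{1−1/(d+2)+ε}. -/

import Mathlib

/-!
By Vinogradov's mean value theorem the number of solutions of `∑ nᵢ ^ j = ∑ mᵢ ^ j`, `1 ≤ j ≤ d`,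
in `t = d (d + 1) / 2` variables on each side in `[1, N]` is `O(N ^ (t + ε))`. It follows from
decoupling for families of functions that are translated by characters along a `p`-adic curve
congruent to the moment curve, with `p` a large fixed prime. This class of families is stable under
affine rescaling, and freezing a power of the sum over one residue class turns a separated one into
a family of lower dimension. Inequalities between two separated classes therefore improve by
lower-dimensional decoupling and Hölder's inequality; the gain grows linearly in the number of
rounds, which forces the decoupling exponent down to `0`.

Expanding the `t`-th power of a Weyl sum, grouping the tuples by their power sums of degree less
than `d` and applying Cauchy–Schwarz removes the lower coefficients and leaves a function of the
leading coefficient whose mean is the number of solutions above. A union bound over the frequencies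
`h ≤ j` at the lengths `j ^ (d + 2)` is summable in `j`, so for almost every `x` all Weyl sums with
leading coefficient `h * x` and length `j ^ (d + 2)` are `O(j ^ (d + 1 + ε))`. An inequality of
Erdős–Turán type with cutoff of size `j`, proved by averaging over rotations of an arc, turns this
into a bound for the discrepancy. Intermediate lengths cost `O(j ^ (d + 1))`, and a shift by `M`
changes only the lower coefficients.
-/

open MeasureTheory Finset

noncomputable def e (x : ℝ) : ℂ := Complex.exp (2 * Real.pi * Complex.I * x)

open scoped Classical in
noncomputable def discrepancy (ξ : ℕ → ℝ) (N : ℕ) : ℝ :=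
  sSup {D : ℝ | ∃ a b : ℝ, 0 ≤ a ∧ a < b ∧ b ≤ 1 ∧
    D = |((((Finset.Icc 1 N).filter fun n => Int.fract (ξ n) ∈ Set.Ioo a b)).card : ℝ)
          - (b - a) * (N : ℝ)|}

namespace Vinogradov

/-! ### Hermite interpolation along admissible curves -/

section Admissible
open Polynomial

/-- A polynomial curve that reduces modulo `π` to the moment curve `(X, X², …, X^k)`. -/
def IsAdmissible {R : Type*} [CommRing R] (π : R) {k : ℕ} (φ : Fin k → R[X]) : Prop :=
  ∀ j, ∃ r : R[X], φ j = X ^ ((j : ℕ) + 1) + C π * r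

/-- The data prescribed in two-point Hermite interpolation: the Taylor coefficients of orders
`1, …, l` at `x₀`, followed by those of orders `1, 2, …` at `x₁`. -/
noncomputable def hermiteData {R : Type*} [CommRing R] (l : ℕ) (x₀ x₁ : R) (Q : R[X]) (i : ℕ) : R :=
  if i < l then (taylor x₀ Q).coeff (i + 1) else (taylor x₁ Q).coeff (i - l + 1)

/-- The matrix that sends the coefficients of a linear combination of the `φ j` to the Hermite data
of that combination. -/
noncomputable def hermiteMatrix {R : Type*} [CommRing R] {k : ℕ} (l : ℕ) (x₀ x₁ : R)
    (φ : Fin k → R[X]) : Matrix (Fin k) (Fin k) R :=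
  Matrix.of fun i j => hermiteData l x₀ x₁ (φ j) i

section CommRing
variable {R : Type*} [CommRing R] {k l : ℕ}

lemma hermiteMatrix_mulVec (x₀ x₁ : R) (φ : Fin k → R[X]) (u : Fin k → R) (i : Fin k) :
    (hermiteMatrix l x₀ x₁ φ).mulVec u i = hermiteData l x₀ x₁ (∑ j, C (u j) * φ j) i := by
  simp only [hermiteMatrix, hermiteData, Matrix.mulVec, dotProduct, Matrix.of_apply, map_sum,
    taylor_mul, taylor_C, finsetSum_coeff, coeff_C_mul]
  split_ifs <;> exact Finset.sum_congr rfl fun j _ => mul_comm _ _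

lemma map_hermiteMatrix {S : Type*} [CommRing S] (f : R →+* S) (x₀ x₁ : R) (φ : Fin k → R[X]) :
    f.mapMatrix (hermiteMatrix l x₀ x₁ φ) =
      hermiteMatrix l (f x₀) (f x₁) fun j => (φ j).map f := by
  ext i j
  simp only [hermiteMatrix, hermiteData, RingHom.mapMatrix_apply, Matrix.map_apply, Matrix.of_apply,
    apply_ite f, ← coeff_map, map_taylor]

lemma X_sub_C_pow_dvd_derivative {x : R} {n : ℕ} {P : R[X]}
    (h : ∀ i < n, (taylor x P).coeff (i + 1) = 0) : (X - C x) ^ n ∣ derivative P := by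
  have hcomm : (derivative P).comp (X + C x) = derivative (taylor x P) := by
    simp [taylor_apply, derivative_comp]
  rw [X_sub_C_pow_dvd_iff, hcomm, X_pow_dvd_iff]
  intro i hi
  rw [coeff_derivative, h i hi, zero_mul]

lemma IsAdmissible.map_eq {S : Type*} [CommRing S] {π : R} {φ : Fin k → R[X]}
    (hφ : IsAdmissible π φ) {f : R →+* S} (hπ : f π = 0) (j : Fin k) :
    (φ j).map f = X ^ ((j : ℕ) + 1) := by
  obtain ⟨r, hr⟩ := hφ j
  simp [hr, hπ]

lemma coeff_sum_C_mul_X_pow_succ (v : Fin k → R) (j : Fin k) :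
    (∑ i : Fin k, C (v i) * X ^ ((i : ℕ) + 1)).coeff ((j : ℕ) + 1) = v j := by
  simp [finsetSum_coeff, coeff_X_pow, ← Fin.ext_iff]

end CommRing

section Field
variable {K : Type*} [Field K] {k l : ℕ}

lemma derivative_eq_zero_of_hermiteData_eq_zero (hlk : l ≤ k) {x₀ x₁ : K}
    (hsep : l < k → x₀ ≠ x₁) {P : K[X]} (hP : P.natDegree ≤ k)
    (hdata : ∀ i < k, hermiteData l x₀ x₁ P i = 0) : derivative P = 0 := by
  rcases eq_or_ne P.natDegree 0 with h0 | h0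
  · exact derivative_of_natDegree_zero h0
  have hcop : IsCoprime ((X - C x₀) ^ l) ((X - C x₁ : K[X]) ^ (k - l)) := by
    rcases hlk.lt_or_eq with h | rfl
    · exact (isCoprime_X_sub_C_of_isUnit_sub (sub_ne_zero.2 (hsep h)).isUnit).pow
    · simp [isCoprime_one_right]
  have hdvd : (X - C x₀) ^ l * (X - C x₁ : K[X]) ^ (k - l) ∣ derivative P := by
    refine hcop.mul_dvd (X_sub_C_pow_dvd_derivative fun i hi => ?_)
      (X_sub_C_pow_dvd_derivative fun i hi => ?_)
    · simpa [hermiteData, hi] using hdata i (by omega)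
    · simpa [hermiteData] using hdata (l + i) (by omega)
  have hdeg : ((X - C x₀) ^ l * (X - C x₁ : K[X]) ^ (k - l)).natDegree = k := by
    rw [natDegree_mul (pow_ne_zero _ (X_sub_C_ne_zero _)) (pow_ne_zero _ (X_sub_C_ne_zero _))]
    simp [hlk]
  exact eq_zero_of_dvd_of_natDegree_lt hdvd (by
    rw [hdeg]; exact (natDegree_derivative_lt h0).trans_le hP)

lemma det_hermiteMatrix_X_pow_ne_zero (hK : ∀ j < k, ((j + 1 : ℕ) : K) ≠ 0) (hlk : l ≤ k)
    {x₀ x₁ : K} (hsep : l < k → x₀ ≠ x₁) :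
    (hermiteMatrix l x₀ x₁ fun j : Fin k => (X : K[X]) ^ ((j : ℕ) + 1)).det ≠ 0 := by
  intro hdet
  obtain ⟨v, hv0, hv⟩ := Matrix.exists_mulVec_eq_zero_iff.2 hdet
  refine hv0 (funext fun j => ?_)
  have hdeg : (∑ i : Fin k, C (v i) * X ^ ((i : ℕ) + 1)).natDegree ≤ k :=
    natDegree_sum_le_of_forall_le _ _ fun i _ => (natDegree_C_mul_X_pow_le _ _).trans i.2
  have hder := derivative_eq_zero_of_hermiteData_eq_zero hlk hsep hdeg fun i hi => by
    rw [← hermiteMatrix_mulVec x₀ x₁ _ v ⟨i, hi⟩, hv, Pi.zero_apply]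
  have hj := congrArg (fun Q => Q.coeff (j : ℕ)) hder
  simp only [coeff_derivative, coeff_sum_C_mul_X_pow_succ, coeff_zero] at hj
  exact (mul_eq_zero.1 hj).resolve_right (by exact_mod_cast hK j j.2)

end Field

section LocalHom
variable {R K : Type*} [CommRing R] [Field K] {k l : ℕ} {π : R} {φ : Fin k → R[X]} {x₀ x₁ : R}

lemma IsAdmissible.exists_hermiteData_eq (hφ : IsAdmissible π φ) (f : R →+* K) [IsLocalHom f]
    (hπ : f π = 0) (hK : ∀ j < k, ((j + 1 : ℕ) : K) ≠ 0) (hlk : l ≤ k)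
    (hsep : l < k → IsUnit (x₀ - x₁)) (t : Fin k → R) :
    ∃ u : Fin k → R, ∀ i : Fin k, hermiteData l x₀ x₁ (∑ j, C (u j) * φ j) i = t i := by
  have hunit : IsUnit (hermiteMatrix l x₀ x₁ φ).det := by
    rw [← isUnit_map_iff f, RingHom.map_det, map_hermiteMatrix, isUnit_iff_ne_zero]
    simp only [hφ.map_eq hπ]
    refine det_hermiteMatrix_X_pow_ne_zero hK hlk fun h => ?_
    simpa [sub_ne_zero] using (hsep h).map f
  refine ⟨(hermiteMatrix l x₀ x₁ φ)⁻¹.mulVec t, fun i => ?_⟩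
  rw [← hermiteMatrix_mulVec, Matrix.mulVec_mulVec, Matrix.mul_nonsing_inv _ hunit,
    Matrix.one_mulVec]

lemma IsAdmissible.exists_taylor_eq (hφ : IsAdmissible π φ) (f : R →+* K) [IsLocalHom f]
    (hπ : f π = 0) (hK : ∀ j < k, ((j + 1 : ℕ) : K) ≠ 0) (hlk : l ≤ k)
    (hsep : l < k → IsUnit (x₀ - x₁)) (j : Fin l) (t : R) :
    ∃ (u : Fin k → R) (c₀ c₁ : R) (S S' : R[X]),
      taylor x₀ (∑ i, C (u i) * φ i) = C c₀ + C t * X ^ ((j : ℕ) + 1) + X ^ (l + 1) * S ∧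
      taylor x₁ (∑ i, C (u i) * φ i) = C c₁ + X ^ (k - l + 1) * S' := by
  obtain ⟨u, hu⟩ := hφ.exists_hermiteData_eq f hπ hK hlk hsep
    fun i => if (i : ℕ) = j then t else 0
  set Q := ∑ i, C (u i) * φ i
  have hdvd₀ : X ^ (l + 1) ∣
      taylor x₀ Q - (C ((taylor x₀ Q).coeff 0) + C t * X ^ ((j : ℕ) + 1)) := by
    refine X_pow_dvd_iff.2 fun i hi => ?_
    rcases i with _ | i
    · simp
    · have h := hu ⟨i, by omega⟩
      simp only [hermiteData, show i < l by omega, if_true] at h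
      simp [h, coeff_X_pow]
  have hdvd₁ : X ^ (k - l + 1) ∣ taylor x₁ Q - C ((taylor x₁ Q).coeff 0) := by
    refine X_pow_dvd_iff.2 fun i hi => ?_
    rcases i with _ | i
    · simp
    · have h := hu ⟨l + i, by omega⟩
      have hj : l + i ≠ j := by omega
      simp only [hermiteData, hj, show ¬ l + i < l by omega, if_false, Nat.add_sub_cancel_left] at h
      simp [h]
  obtain ⟨S, hS⟩ := hdvd₀
  obtain ⟨S', hS'⟩ := hdvd₁
  exact ⟨u, _, _, S, S', sub_eq_iff_eq_add'.1 hS, sub_eq_iff_eq_add'.1 hS'⟩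

lemma sum_mul_eval_add (φ : Fin k → R[X]) (u : Fin k → R) (x y : R) :
    ∑ i, u i * (φ i).eval (x + y) = (taylor x (∑ i, C (u i) * φ i)).eval y := by
  simp [taylor_eval, eval_finsetSum, add_comm]

lemma sum_sum_mul_eval (φ : Fin k → R[X]) (v : Fin l → R) (U : Fin l → Fin k → R) (z : R) :
    ∑ i, (∑ j, v j * U j i) * (φ i).eval z = ∑ j, v j * ∑ i, U j i * (φ i).eval z := by
  simp_rw [Finset.sum_mul, Finset.mul_sum, mul_assoc]
  exact Finset.sum_comm

/-- The `l`-dimensional curve seen after zooming into a ball of radius `|π ^ a|`; the `S j` are the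
Taylor remainders of order `l + 1` at its centre. -/
noncomputable def rescaledCurve (π : R) (a : ℕ) (S : Fin l → R[X]) (j : Fin l) : R[X] :=
  X ^ ((j : ℕ) + 1) + C (π ^ a) * (X ^ (l + 1) * (S j).comp (C (π ^ a) * X))

lemma isAdmissible_rescaledCurve {a : ℕ} (ha : 1 ≤ a) (S : Fin l → R[X]) :
    IsAdmissible π (rescaledCurve π a S) := fun j =>
  ⟨C (π ^ (a - 1)) * (X ^ (l + 1) * (S j).comp (C (π ^ a) * X)), by
    rw [rescaledCurve, ← mul_assoc (C π), ← C_mul, ← pow_succ', Nat.sub_add_cancel ha]⟩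

lemma eval_eq_mul_eval_rescaledCurve (a : ℕ) (S : Fin l → R[X]) (c σ : R) (j : Fin l) :
    (C c + C (π ^ (a * (l - 1 - j))) * X ^ ((j : ℕ) + 1) + X ^ (l + 1) * S j).eval (π ^ a * σ) =
      c + π ^ (a * l) * (rescaledCurve π a S j).eval σ := by
  have hsplit : π ^ (a * l) = π ^ (a * (l - 1 - j)) * (π ^ a) ^ ((j : ℕ) + 1) := by
    rw [← pow_mul, ← pow_add, ← mul_add, show l - 1 - (j : ℕ) + (j + 1) = l by omega]
  have hsucc : (π ^ a) ^ (l + 1) = π ^ (a * l) * π ^ a := by rw [pow_succ, ← pow_mul]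
  simp only [rescaledCurve, eval_add, eval_mul, eval_C, eval_pow, eval_X, eval_comp, mul_pow, hsucc]
  rw [← mul_assoc _ ((π ^ a) ^ ((j : ℕ) + 1)), ← hsplit]
  ring

/-- Freezing the value of a power of the curve near `x₁` leaves an `l`-dimensional admissible curve
near `x₀`: this is what makes induction on the dimension possible. For `l = k` it is affine
rescaling. -/
theorem IsAdmissible.exists_rescale (hφ : IsAdmissible π φ) (f : R →+* K) [IsLocalHom f]
    (hπ : f π = 0) (hK : ∀ j < k, ((j + 1 : ℕ) : K) ≠ 0) (hlk : l ≤ k)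
    (hsep : l < k → IsUnit (x₀ - x₁)) {a : ℕ} (ha : 1 ≤ a) :
    ∃ ψ : Fin l → R[X], IsAdmissible π ψ ∧ ∀ v : Fin l → R, ∃ (u : Fin k → R) (c₀ c₁ : R),
      (∀ σ : R, ∑ j, u j * (φ j).eval (x₀ + π ^ a * σ) =
        c₀ + π ^ (a * l) * ∑ j, v j * (ψ j).eval σ) ∧
      (∀ (b : ℕ) (σ : R), π ^ ((k - l + 1) * b) ∣
        ∑ j, u j * (φ j).eval (x₁ + π ^ b * σ) - c₁) := by
  choose U c₀ c₁ S S' h₀ h₁ using fun j : Fin l =>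
    hφ.exists_taylor_eq f hπ hK hlk hsep j (π ^ (a * (l - 1 - j)))
  refine ⟨rescaledCurve π a S, isAdmissible_rescaledCurve ha S, fun v =>
    ⟨fun i => ∑ j, v j * U j i, ∑ j, v j * c₀ j, ∑ j, v j * c₁ j, fun σ => ?_, fun b σ => ?_⟩⟩
  · rw [sum_sum_mul_eval, Finset.mul_sum, ← Finset.sum_add_distrib]
    refine Finset.sum_congr rfl fun j _ => ?_
    rw [sum_mul_eval_add, h₀, eval_eq_mul_eval_rescaledCurve]
    ring
  · rw [sum_sum_mul_eval, ← Finset.sum_sub_distrib]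
    refine Finset.dvd_sum fun j _ => ⟨v j * (σ ^ (k - l + 1) * eval (π ^ b * σ) (S' j)), ?_⟩
    rw [sum_mul_eval_add, h₁]
    simp only [eval_add, eval_mul, eval_C, eval_pow, eval_X]
    rw [mul_pow, ← pow_mul, mul_comm b]
    ring

end LocalHom

end Admissible

/-! ### Systems of functions translated along an admissible curve -/

section PadicInt
variable {p : ℕ} [Fact p.Prime]

/-- The additive character of level `p ^ B` on the `p`-adic integers, `z ↦ e (z / p ^ B)`. -/
noncomputable def levelChar (p : ℕ) [Fact p.Prime] (B : ℕ) : AddChar ℤ_[p] ℂ :=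
  ZMod.stdAddChar.compAddMonoidHom (PadicInt.toZModPow (p := p) B).toAddMonoidHom

lemma levelChar_apply (B : ℕ) (z : ℤ_[p]) :
    levelChar p B z = ZMod.stdAddChar (PadicInt.toZModPow B z) := rfl

lemma norm_levelChar (B : ℕ) (x : ℤ_[p]) : ‖levelChar p B x‖ = 1 := by
  rw [levelChar_apply, ZMod.stdAddChar_apply, Circle.norm_coe]

lemma levelChar_eq_one_iff (B : ℕ) (x : ℤ_[p]) : levelChar p B x = 1 ↔ (p : ℤ_[p]) ^ B ∣ x := by
  rw [← Ideal.mem_span_singleton, ← PadicInt.ker_toZModPow, RingHom.mem_ker, levelChar_apply,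
    ← (ZMod.injective_stdAddChar (N := p ^ B)).eq_iff, AddChar.map_zero_eq_one]

lemma levelChar_add_pow_mul (B C : ℕ) (x : ℤ_[p]) :
    levelChar p (B + C) ((p : ℤ_[p]) ^ B * x) = levelChar p C x := by
  set n : ℤ := ((PadicInt.toZModPow (B + C) x).val : ℤ) with hn
  have hBC : PadicInt.toZModPow (B + C) x = (n : ZMod (p ^ (B + C))) := by simp [hn]
  have hC : PadicInt.toZModPow C x = (n : ZMod (p ^ C)) := by
    rw [← PadicInt.cast_toZModPow C (B + C) (Nat.le_add_left _ _) x, hBC]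
    exact map_intCast (ZMod.castHom (pow_dvd_pow p (Nat.le_add_left C B)) (ZMod (p ^ C))) n
  have hmul : PadicInt.toZModPow (B + C) ((p : ℤ_[p]) ^ B * x) =
      (((p : ℤ) ^ B * n : ℤ) : ZMod (p ^ (B + C))) := by
    rw [map_mul, hBC]
    simp
  have hp : (p : ℂ) ≠ 0 := by exact_mod_cast (Fact.out : p.Prime).ne_zero
  rw [levelChar_apply, levelChar_apply, hmul, hC, ZMod.stdAddChar_coe, ZMod.stdAddChar_coe]
  congr 1
  push_cast
  field_simp
  rw [pow_add]
  ring

lemma isUnit_natCast_sub_natCast {r₀ r₁ : ℕ} (h : r₀ % p ≠ r₁ % p) :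
    IsUnit ((r₀ : ℤ_[p]) - (r₁ : ℤ_[p])) := by
  rw [← isUnit_map_iff (PadicInt.toZMod (p := p)), map_sub, map_natCast, map_natCast,
    isUnit_iff_ne_zero, sub_ne_zero]
  exact fun heq => h ((ZMod.natCast_eq_natCast_iff' _ _ _).1 heq)

lemma natCast_zmod_ne_zero_of_lt {n : ℕ} (h0 : n ≠ 0) (hn : n < p) : (n : ZMod p) ≠ 0 := by
  rw [Ne, ZMod.natCast_eq_zero_iff]
  exact Nat.not_dvd_of_pos_of_lt (Nat.pos_of_ne_zero h0) hn

end PadicInt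

/-- The indices whose location is congruent to `r` modulo `p ^ a`. -/
def residueClass (p : ℕ) {ι : Type*} (s : Finset ι) (loc : ι → ℕ) (a r : ℕ) : Finset ι :=
  s.filter fun i => loc i % p ^ a = r

section ResidueClass
variable {p a n r ρ : ℕ} {ι : Type*} {s : Finset ι} {loc : ι → ℕ}

lemma mem_residueClass {i : ι} : i ∈ residueClass p s loc a r ↔ i ∈ s ∧ loc i % p ^ a = r :=
  Finset.mem_filter

lemma mod_pow_add_eq_iff {x : ℕ} (hr : r < p ^ a) :
    x % p ^ (a + n) = r + p ^ a * ρ ↔ x % p ^ a = r ∧ x / p ^ a % p ^ n = ρ := by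
  have hp : 0 < p ^ a := by omega
  rw [pow_add, Nat.mod_mul]
  refine ⟨fun h => ⟨?_, ?_⟩, fun ⟨hmod, hdiv⟩ => by rw [hmod, hdiv]⟩
  · simpa [Nat.mod_eq_of_lt hr] using congrArg (· % p ^ a) h
  · simpa [Nat.add_mul_div_left _ _ hp, Nat.div_eq_of_lt hr, Nat.div_eq_of_lt (Nat.mod_lt _ hp)]
      using congrArg (· / p ^ a) h

lemma residueClass_residueClass (s : Finset ι) (loc : ι → ℕ) (hr : r < p ^ a) :
    residueClass p (residueClass p s loc a r) (fun i => loc i / p ^ a) n ρ =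
      residueClass p s loc (a + n) (r + p ^ a * ρ) := by
  rw [residueClass, residueClass, Finset.filter_filter]
  exact Finset.filter_congr fun i _ => (mod_pow_add_eq_iff hr).symm

lemma add_pow_mul_lt (hr : r < p ^ a) (hρ : ρ < p ^ n) : r + p ^ a * ρ < p ^ (a + n) :=
  calc r + p ^ a * ρ < p ^ a * (ρ + 1) := by rw [mul_add_one]; omega
    _ ≤ p ^ a * p ^ n := Nat.mul_le_mul_left _ hρ
    _ = p ^ (a + n) := (pow_add _ _ _).symm

lemma add_pow_mul_mod (ha : 1 ≤ a) : (r + p ^ a * ρ) % p = r % p := by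
  obtain ⟨a, rfl⟩ := Nat.exists_eq_add_of_le' ha
  rw [pow_succ', mul_assoc, Nat.add_mul_mod_self_left]

lemma sum_residueClass_refine {M : Type*} [AddCommMonoid M] (hp : 0 < p) (hr : r < p ^ a)
    (f : ι → M) :
    ∑ ρ ∈ range (p ^ n), ∑ i ∈ residueClass p s loc (a + n) (r + p ^ a * ρ), f i =
      ∑ i ∈ residueClass p s loc a r, f i := by
  rw [← Finset.sum_fiberwise_of_maps_to (t := range (p ^ n)) (g := fun i => loc i / p ^ a % p ^ n)
    fun x _ => Finset.mem_range.2 (Nat.mod_lt _ (pow_pos hp _))]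
  refine Finset.sum_congr rfl fun ρ _ => ?_
  rw [← residueClass_residueClass s loc hr]
  rfl

lemma residueClass_range_id (hr : r < p ^ a) : residueClass p (range (p ^ a)) id a r = {r} := by
  ext x
  rw [mem_residueClass, Finset.mem_range, Finset.mem_singleton, id]
  refine ⟨fun ⟨hx, hxr⟩ => by rwa [Nat.mod_eq_of_lt hx] at hxr, ?_⟩
  rintro rfl
  exact ⟨hr, Nat.mod_eq_of_lt hr⟩

lemma natCast_eq_add_pow_mul [Fact p.Prime] {x : ℕ} (h : x % p ^ a = r) :
    (x : ℤ_[p]) = r + (p : ℤ_[p]) ^ a * ((x / p ^ a : ℕ) : ℤ_[p]) := by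
  rw [← h]
  exact_mod_cast (Nat.mod_add_div _ _).symm

end ResidueClass

/-- The weighted family of functions `F i` on a finite set behaves like a family of exponentials
with frequencies on an admissible curve, to precision `p ^ B`: every vector `v` yields a
weight-preserving permutation (a translation by `v`) that multiplies `F i` by the character
`levelChar p B (v · φ (loc i))`, up to a unimodular constant not depending on `i`. -/
def IsMomentSystem (p : ℕ) [Fact p.Prime] (k B : ℕ) {Ω ι : Type*} (w : Ω → ℝ) (s : Finset ι)
    (loc : ι → ℕ) (F : ι → Ω → ℂ) : Prop :=
  ∃ φ : Fin k → Polynomial ℤ_[p], IsAdmissible (p : ℤ_[p]) φ ∧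
    ∀ v : Fin k → ℤ_[p], ∃ τ : Equiv.Perm Ω, (∀ x, w (τ x) = w x) ∧
      ∃ c : ℂ, ‖c‖ = 1 ∧ ∀ i ∈ s, ∀ x,
        F i (τ x) = c * levelChar p B (∑ j, v j * (φ j).eval (loc i : ℤ_[p])) * F i x

namespace IsMomentSystem
variable {p : ℕ} [Fact p.Prime] {k B E : ℕ} {Ω ι : Type*} {w : Ω → ℝ} {s : Finset ι} {loc : ι → ℕ}
  {F : ι → Ω → ℂ}

lemma anti_precision (h : IsMomentSystem p k B w s loc F) (hEB : E ≤ B) :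
    IsMomentSystem p k E w s loc F := by
  obtain ⟨φ, hφ, hτ⟩ := h
  refine ⟨φ, hφ, fun v => ?_⟩
  obtain ⟨τ, hw, c, hc, hF⟩ := hτ fun j => (p : ℤ_[p]) ^ (B - E) * v j
  refine ⟨τ, hw, c, hc, fun i hi x => ?_⟩
  have hchar := levelChar_add_pow_mul (B - E) E (∑ j, v j * (φ j).eval (loc i : ℤ_[p]))
  rw [Nat.sub_add_cancel hEB, Finset.mul_sum] at hchar
  simp only [hF i hi x, mul_assoc, hchar]

/-- On the class of `r₁`, where the frozen combination of the curve is constant to high precision,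
the translation acts by one unimodular factor. Hence it preserves the weight below, while on the
class of `r₀` it acts along an `l`-dimensional curve. -/
theorem exists_weighted_residueClass (h : IsMomentSystem p k B w s loc F) {l a b r₀ r₁ : ℕ}
    (hkp : k < p) (hlk : l ≤ k) (ha : 1 ≤ a) (hsep : l < k → r₀ % p ≠ r₁ % p) (hEB : E ≤ B)
    (haE : a * l ≤ E) (hEb : E ≤ (k - l + 1) * b) (n : ℕ) :
    IsMomentSystem p l (E - a * l)
      (fun x => w x * ‖∑ i ∈ residueClass p s loc b r₁, F i x‖ ^ n) (residueClass p s loc a r₀)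
      (fun i => loc i / p ^ a) F := by
  obtain ⟨φ, hφ, hτ⟩ := h.anti_precision hEB
  obtain ⟨ψ, hψ, hresc⟩ := hφ.exists_rescale (PadicInt.toZMod (p := p)) (by simp)
    (fun j hj => natCast_zmod_ne_zero_of_lt j.succ_ne_zero (by omega)) hlk
    (fun hl => isUnit_natCast_sub_natCast (hsep hl)) ha
  refine ⟨ψ, hψ, fun v => ?_⟩
  obtain ⟨u, c₀, c₁, hnear₀, hnear₁⟩ := hresc v
  obtain ⟨τ, hw, c, hc, hF⟩ := hτ u
  refine ⟨τ, fun x => ?_, c * levelChar p E c₀, by rw [norm_mul, hc, norm_levelChar, one_mul],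
    fun i hi x => ?_⟩
  · have hclass : ∑ i ∈ residueClass p s loc b r₁, F i (τ x) =
        c * levelChar p E c₁ * ∑ i ∈ residueClass p s loc b r₁, F i x := by
      rw [Finset.mul_sum]
      refine Finset.sum_congr rfl fun i hi => ?_
      obtain ⟨hi, hmod⟩ := mem_residueClass.1 hi
      have hdvd := (pow_dvd_pow (p : ℤ_[p]) hEb).trans (hnear₁ b ((loc i / p ^ b : ℕ) : ℤ_[p]))
      rw [← natCast_eq_add_pow_mul hmod, ← levelChar_eq_one_iff] at hdvd
      rw [hF i hi, ← sub_add_cancel (∑ j, u j * (φ j).eval (loc i : ℤ_[p])) c₁,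
        AddChar.map_add_eq_mul, hdvd, one_mul]
    beta_reduce
    rw [hw, hclass, norm_mul, norm_mul, hc, norm_levelChar, one_mul, one_mul]
  · obtain ⟨hi, hmod⟩ := mem_residueClass.1 hi
    have hchar := levelChar_add_pow_mul (a * l) (E - a * l)
      (∑ j, v j * (ψ j).eval ((loc i / p ^ a : ℕ) : ℤ_[p]))
    rw [Nat.add_sub_cancel' haE] at hchar
    rw [hF i hi, natCast_eq_add_pow_mul hmod, hnear₀, AddChar.map_add_eq_mul, hchar]
    ring

end IsMomentSystem

/-- The triangular number `k (k + 1) / 2`; the critical exponent in dimension `k` is `2 * tri k`. -/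
def tri (k : ℕ) : ℕ := k * (k + 1) / 2

lemma two_mul_tri (k : ℕ) : 2 * tri k = k * (k + 1) :=
  Nat.mul_div_cancel' (Nat.even_mul_succ_self k).two_dvd

lemma tri_pos {k : ℕ} (hk : 1 ≤ k) : 1 ≤ tri k := by
  nlinarith [two_mul_tri k]

lemma tri_lt_tri {l k : ℕ} (h : l < k) : tri l < tri k := by
  nlinarith [two_mul_tri k, two_mul_tri l]

/-- A moment system in dimension `k`, precise enough to be decoupled at the scale `p ^ (-m)`,
together with bounds for the critical moments of its pieces at that scale. -/
structure DecouplingData (p : ℕ) [Fact p.Prime] (k m : ℕ) where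
  Ω : Type
  ι : Type
  fintype : Fintype Ω
  weight : Ω → ℝ
  weight_nonneg : ∀ x, 0 ≤ weight x
  index : Finset ι
  loc : ι → ℕ
  F : ι → Ω → ℂ
  bound : ℕ → ℝ
  bound_nonneg : ∀ r, 0 ≤ bound r
  isMomentSystem : IsMomentSystem p k (m * k) weight index loc F
  moment_le : ∀ r < p ^ m,
    ∑ x, weight x * ‖∑ i ∈ residueClass p index loc m r, F i x‖ ^ (2 * tri k) ≤ bound r ^ tri k

attribute [instance] DecouplingData.fintype

namespace DecouplingData
variable {p : ℕ} [Fact p.Prime] {k m : ℕ} (c : DecouplingData p k m) {a n r : ℕ}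

/-- The part of the sum of the functions that belongs to a residue class modulo `p ^ a`. -/
def piece (a r : ℕ) (x : c.Ω) : ℂ := ∑ i ∈ residueClass p c.index c.loc a r, c.F i x

/-- The sum of the bounds over the finest classes inside a class modulo `p ^ a`. -/
def mass (a r : ℕ) : ℝ := ∑ ρ ∈ residueClass p (range (p ^ m)) id a r, c.bound ρ

lemma mass_nonneg (a r : ℕ) : 0 ≤ c.mass a r := Finset.sum_nonneg fun _ _ => c.bound_nonneg _

lemma mass_top (hr : r < p ^ m) : c.mass m r = c.bound r := by
  rw [mass, residueClass_range_id hr, Finset.sum_singleton]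

lemma mass_zero : c.mass 0 0 = ∑ r ∈ range (p ^ m), c.bound r := by
  simp [mass, residueClass, Nat.mod_one]

lemma piece_zero (x : c.Ω) : c.piece 0 0 x = ∑ i ∈ c.index, c.F i x := by
  simp [piece, residueClass, Nat.mod_one]

lemma sum_mass (hr : r < p ^ a) :
    ∑ ρ ∈ range (p ^ n), c.mass (a + n) (r + p ^ a * ρ) = c.mass a r :=
  sum_residueClass_refine (Fact.out : p.Prime).pos hr _

lemma sum_piece (hr : r < p ^ a) (x : c.Ω) :
    ∑ ρ ∈ range (p ^ n), c.piece (a + n) (r + p ^ a * ρ) x = c.piece a r x :=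
  sum_residueClass_refine (Fact.out : p.Prime).pos hr _

end DecouplingData

/-- The decoupling inequality at the critical exponent, at scale `p ^ (-m)` and with constant
`D`. -/
def Decoupling (p : ℕ) [Fact p.Prime] (k m : ℕ) (D : ℝ) : Prop :=
  ∀ c : DecouplingData p k m,
    ∑ x, c.weight x * ‖c.piece 0 0 x‖ ^ (2 * tri k) ≤ D * c.mass 0 0 ^ tri k

/-- The bilinear decoupling inequality with constant `E` between classes modulo `p ^ a` and `p ^ b`
that are separated modulo `p`. -/
def BilinearDecoupling (p : ℕ) [Fact p.Prime] (k m l a b : ℕ) (E : ℝ) : Prop :=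
  ∀ c : DecouplingData p k m, ∀ r₀ < p ^ a, ∀ r₁ < p ^ b, r₀ % p ≠ r₁ % p →
    ∑ x, c.weight x * ((‖c.piece a r₀ x‖ ^ 2) ^ tri l * (‖c.piece b r₁ x‖ ^ 2) ^ (tri k - tri l)) ≤
      E * (c.mass a r₀ ^ tri l * c.mass b r₁ ^ (tri k - tri l))

section Rescaling
variable {p : ℕ} [Fact p.Prime] {k l m a b a' : ℕ} {D D' E E' : ℝ}

lemma BilinearDecoupling.mono (h : BilinearDecoupling p k m l a b E) (hE : E ≤ E') :
    BilinearDecoupling p k m l a b E' := fun c r₀ h₀ r₁ h₁ hsep =>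
  (h c r₀ h₀ r₁ h₁ hsep).trans (mul_le_mul_of_nonneg_right hE
    (mul_nonneg (pow_nonneg (c.mass_nonneg _ _) _) (pow_nonneg (c.mass_nonneg _ _) _)))

lemma Decoupling.mono (h : Decoupling p k m D) (hD : D ≤ D') : Decoupling p k m D' := fun c =>
  (h c).trans (mul_le_mul_of_nonneg_right hD (pow_nonneg (c.mass_nonneg _ _) _))

namespace DecouplingData
variable (c : DecouplingData p k m) {r : ℕ}

/-- The class of `r` modulo `p ^ a`, seen as a system of dimension `l` at scale `p ^ (a - a')` with
a new weight `w`. -/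
noncomputable def restrict (hr : r < p ^ a) (haa : a ≤ a') (w : c.Ω → ℝ) (hw : ∀ x, 0 ≤ w x)
    (bound : ℕ → ℝ) (hbound : ∀ ρ, 0 ≤ bound ρ)
    (hsys : IsMomentSystem p l ((a' - a) * l) w (residueClass p c.index c.loc a r)
      (fun i => c.loc i / p ^ a) c.F)
    (hmoment : ∀ ρ < p ^ (a' - a),
      ∑ x, w x * ‖c.piece a' (r + p ^ a * ρ) x‖ ^ (2 * tri l) ≤ bound ρ ^ tri l) :
    DecouplingData p l (a' - a) where
  Ω := c.Ω
  ι := c.ι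
  fintype := c.fintype
  weight := w
  weight_nonneg := hw
  index := residueClass p c.index c.loc a r
  loc i := c.loc i / p ^ a
  F := c.F
  bound := bound
  bound_nonneg := hbound
  isMomentSystem := hsys
  moment_le ρ hρ := by
    rw [residueClass_residueClass _ _ hr, Nat.add_sub_cancel' haa]
    exact hmoment ρ hρ

lemma sum_weight_mul_norm_piece_le (hD : Decoupling p l (a' - a) D) (hr : r < p ^ a) (haa : a ≤ a')
    {w : c.Ω → ℝ} (hw : ∀ x, 0 ≤ w x) {bound : ℕ → ℝ} (hbound : ∀ ρ, 0 ≤ bound ρ)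
    (hsys : IsMomentSystem p l ((a' - a) * l) w (residueClass p c.index c.loc a r)
      (fun i => c.loc i / p ^ a) c.F)
    (hmoment : ∀ ρ < p ^ (a' - a),
      ∑ x, w x * ‖c.piece a' (r + p ^ a * ρ) x‖ ^ (2 * tri l) ≤ bound ρ ^ tri l) :
    ∑ x, w x * ‖c.piece a r x‖ ^ (2 * tri l) ≤
      D * (∑ ρ ∈ range (p ^ (a' - a)), bound ρ) ^ tri l := by
  have h := hD (c.restrict hr haa w hw bound hbound hsys hmoment)
  rw [mass_zero] at h
  simp only [piece_zero] at h
  exact h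

end DecouplingData

/-- Affine rescaling. -/
lemma Decoupling.moment_piece_le (hD : Decoupling p k (m - a) D) (hkp : k < p) (ha : 1 ≤ a)
    (ham : a ≤ m) (c : DecouplingData p k m) {r : ℕ} (hr : r < p ^ a) :
    ∑ x, c.weight x * ‖c.piece a r x‖ ^ (2 * tri k) ≤ D * c.mass a r ^ tri k := by
  have hsys := c.isMomentSystem.exists_weighted_residueClass (l := k) (a := a) (b := m * k)
    (E := m * k) (r₀ := r) (r₁ := 0) hkp le_rfl ha (by omega) le_rfl (Nat.mul_le_mul_right _ ham)
    (by simp) 0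
  simp only [pow_zero, mul_one, ← Nat.sub_mul] at hsys
  have hlt : ∀ ρ < p ^ (m - a), r + p ^ a * ρ < p ^ m := fun ρ hρ => by
    simpa only [Nat.add_sub_cancel' ham] using add_pow_mul_lt hr hρ
  have hmass : ∑ ρ ∈ range (p ^ (m - a)), c.bound (r + p ^ a * ρ) = c.mass a r := by
    rw [← c.sum_mass (n := m - a) hr, Nat.add_sub_cancel' ham]
    exact Finset.sum_congr rfl fun ρ hρ => (c.mass_top (hlt ρ (Finset.mem_range.1 hρ))).symm
  rw [← hmass]
  exact c.sum_weight_mul_norm_piece_le hD hr ham c.weight_nonneg (fun ρ => c.bound_nonneg _) hsys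
    fun ρ hρ => c.moment_le _ (hlt ρ hρ)

/-- The power of the second factor is absorbed into the weight, which leaves a system of dimension
`l` in the first factor. -/
lemma BilinearDecoupling.refine_left (h : BilinearDecoupling p k m l a' b E)
    (hD : Decoupling p l (a' - a) D) (hkp : k < p) (hl : 1 ≤ l) (hlk : l < k) (hE : 0 ≤ E)
    (ha : 1 ≤ a) (haa : a ≤ a') (ham : a' ≤ m) (hab : a' * l = (k - l + 1) * b) :
    BilinearDecoupling p k m l a b (D * E) := by
  intro c r₀ h₀ r₁ h₁ hsep
  set v := tri k - tri l with hv
  set K : ℝ := E * c.mass b r₁ ^ v with hK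
  have hK0 : 0 ≤ K := mul_nonneg hE (pow_nonneg (c.mass_nonneg _ _) _)
  have hKroot : (K ^ ((tri l : ℝ)⁻¹)) ^ tri l = K :=
    Real.rpow_inv_natCast_pow hK0 (Nat.one_le_iff_ne_zero.1 (tri_pos hl))
  have hsys := c.isMomentSystem.exists_weighted_residueClass (E := a' * l) hkp hlk.le ha
    (fun _ => hsep) (Nat.mul_le_mul ham hlk.le) (Nat.mul_le_mul_right _ haa) hab.le (2 * v)
  rw [← Nat.sub_mul] at hsys
  have hcomm : ∀ (a r : ℕ) (x : c.Ω),
      c.weight x * ((‖c.piece a r x‖ ^ 2) ^ tri l * (‖c.piece b r₁ x‖ ^ 2) ^ v) =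
        c.weight x * ‖c.piece b r₁ x‖ ^ (2 * v) * ‖c.piece a r x‖ ^ (2 * tri l) := by
    intro a r x
    rw [pow_mul, pow_mul]
    ring
  have hmoment : ∀ ρ < p ^ (a' - a), ∑ x, c.weight x * ‖c.piece b r₁ x‖ ^ (2 * v) *
      ‖c.piece a' (r₀ + p ^ a * ρ) x‖ ^ (2 * tri l) ≤
        (K ^ ((tri l : ℝ)⁻¹) * c.mass a' (r₀ + p ^ a * ρ)) ^ tri l := by
    intro ρ hρ
    have hlt := add_pow_mul_lt h₀ hρ
    rw [Nat.add_sub_cancel' haa] at hlt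
    have hbil := h c _ hlt r₁ h₁ (by rwa [add_pow_mul_mod ha])
    simp_rw [← hv, hcomm] at hbil
    refine hbil.trans_eq ?_
    rw [mul_pow, hKroot, hK]
    ring
  have hdec := c.sum_weight_mul_norm_piece_le hD h₀ haa
    (fun x => mul_nonneg (c.weight_nonneg x) (by positivity))
    (fun ρ => mul_nonneg (Real.rpow_nonneg hK0 _) (c.mass_nonneg a' _)) hsys hmoment
  have hmass := c.sum_mass (n := a' - a) h₀
  rw [Nat.add_sub_cancel' haa] at hmass
  rw [← Finset.mul_sum, hmass, mul_pow, hKroot] at hdec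
  simp_rw [hcomm]
  refine hdec.trans_eq ?_
  rw [hK]
  ring

end Rescaling

/-! ### Hölder's inequality between bilinear inequalities -/

section Interpolation

lemma sum_rpow_mul_rpow_le {ι : Type*} (s : Finset ι) {f g : ι → ℝ} (hf : ∀ i ∈ s, 0 ≤ f i)
    (hg : ∀ i ∈ s, 0 ≤ g i) {θ : ℝ} (h0 : 0 < θ) (h1 : θ < 1) :
    ∑ i ∈ s, f i ^ θ * g i ^ (1 - θ) ≤ (∑ i ∈ s, f i) ^ θ * (∑ i ∈ s, g i) ^ (1 - θ) := by
  have hθ : 1 - θ ≠ 0 := (sub_pos.2 h1).ne'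
  have hconj : (θ⁻¹).HolderConjugate ((1 - θ)⁻¹) := by
    rw [Real.holderConjugate_iff, inv_inv, inv_inv]
    exact ⟨one_lt_inv_iff₀.2 ⟨h0, h1⟩, by ring⟩
  refine (Real.inner_le_Lp_mul_Lq_of_nonneg s hconj (fun i hi => Real.rpow_nonneg (hf i hi) _)
    (fun i hi => Real.rpow_nonneg (hg i hi) _)).trans_eq ?_
  rw [one_div, one_div, inv_inv, inv_inv,
    Finset.sum_congr rfl fun i hi => Real.rpow_rpow_inv (hf i hi) h0.ne',
    Finset.sum_congr rfl fun i hi => Real.rpow_rpow_inv (hg i hi) hθ]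

lemma pow_eq_rpow_mul_rpow {θ y : ℝ} (hy : 0 ≤ y) (h0 : 0 ≤ θ) (h1 : θ ≤ 1) {C C₁ C₂ : ℕ}
    (hC : (C : ℝ) = θ * C₁ + (1 - θ) * C₂) : y ^ C = (y ^ C₁) ^ θ * (y ^ C₂) ^ (1 - θ) := by
  have : 0 ≤ 1 - θ := sub_nonneg.2 h1
  rw [← Real.rpow_natCast, ← Real.rpow_natCast y C₁, ← Real.rpow_natCast y C₂, ← Real.rpow_mul hy,
    ← Real.rpow_mul hy, ← Real.rpow_add_of_nonneg hy (by positivity) (by positivity), hC]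
  ring_nf

lemma mul_pow_mul_pow_eq_rpow_mul_rpow {θ e₁ e₂ y z : ℝ} (he₁ : 0 ≤ e₁) (he₂ : 0 ≤ e₂)
    (hy : 0 ≤ y) (hz : 0 ≤ z) (h0 : 0 ≤ θ) (h1 : θ ≤ 1) {A A₁ A₂ B B₁ B₂ : ℕ}
    (hA : (A : ℝ) = θ * A₁ + (1 - θ) * A₂) (hB : (B : ℝ) = θ * B₁ + (1 - θ) * B₂) :
    e₁ ^ θ * e₂ ^ (1 - θ) * (y ^ A * z ^ B) =
      (e₁ * (y ^ A₁ * z ^ B₁)) ^ θ * (e₂ * (y ^ A₂ * z ^ B₂)) ^ (1 - θ) := by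
  rw [pow_eq_rpow_mul_rpow hy h0 h1 hA, pow_eq_rpow_mul_rpow hz h0 h1 hB,
    Real.mul_rpow he₁ (by positivity), Real.mul_rpow he₂ (by positivity),
    Real.mul_rpow (by positivity) (by positivity), Real.mul_rpow (by positivity) (by positivity)]
  ring

/-- The moments `∑ w * G ^ A * H ^ B` are log-convex in `(A, B)`. -/
lemma moment_le_of_interpolation {ι : Type*} (s : Finset ι) {w G H : ι → ℝ} (hw : ∀ x, 0 ≤ w x)
    (hG : ∀ x, 0 ≤ G x) (hH : ∀ x, 0 ≤ H x) {A B A₁ B₁ A₂ B₂ : ℕ} {θ E₁ E₂ P Q : ℝ} (h0 : 0 < θ)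
    (h1 : θ < 1) (hA : (A : ℝ) = θ * A₁ + (1 - θ) * A₂) (hB : (B : ℝ) = θ * B₁ + (1 - θ) * B₂)
    (hE₁ : 0 ≤ E₁) (hE₂ : 0 ≤ E₂) (hP : 0 ≤ P) (hQ : 0 ≤ Q)
    (hmoment₁ : ∑ x ∈ s, w x * (G x ^ A₁ * H x ^ B₁) ≤ E₁ * (P ^ A₁ * Q ^ B₁))
    (hmoment₂ : ∑ x ∈ s, w x * (G x ^ A₂ * H x ^ B₂) ≤ E₂ * (P ^ A₂ * Q ^ B₂)) :
    ∑ x ∈ s, w x * (G x ^ A * H x ^ B) ≤ (E₁ ^ θ * E₂ ^ (1 - θ)) * (P ^ A * Q ^ B) := by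
  have hnonneg : ∀ A B : ℕ, ∀ x ∈ s, 0 ≤ w x * (G x ^ A * H x ^ B) := fun A B x _ =>
    mul_nonneg (hw x) (mul_nonneg (pow_nonneg (hG x) _) (pow_nonneg (hH x) _))
  have hterm : ∀ x ∈ s, w x * (G x ^ A * H x ^ B) =
      (w x * (G x ^ A₁ * H x ^ B₁)) ^ θ * (w x * (G x ^ A₂ * H x ^ B₂)) ^ (1 - θ) := fun x _ => by
    rw [← mul_pow_mul_pow_eq_rpow_mul_rpow (hw x) (hw x) (hG x) (hH x) h0.le h1.le hA hB,
      ← Real.rpow_add_of_nonneg (hw x) h0.le (sub_nonneg.2 h1.le), add_sub_cancel, Real.rpow_one]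
  rw [Finset.sum_congr rfl hterm, mul_pow_mul_pow_eq_rpow_mul_rpow hE₁ hE₂ hP hQ h0.le h1.le hA hB]
  refine (sum_rpow_mul_rpow_le s (hnonneg A₁ B₁) (hnonneg A₂ B₂) h0 h1).trans ?_
  have hsum₁ := Finset.sum_nonneg (hnonneg A₁ B₁)
  have hsum₂ := Finset.sum_nonneg (hnonneg A₂ B₂)
  gcongr

end Interpolation

lemma tri_cast (k : ℕ) : (tri k : ℝ) = k * (k + 1) / 2 := by
  have h : (2 : ℝ) * tri k = k * (k + 1) := by exact_mod_cast two_mul_tri k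
  linarith

namespace BilinearDecoupling
variable {p : ℕ} [Fact p.Prime] {k l m a b : ℕ} {D₁ D₂ E₁ E₂ : ℝ}

lemma of_decoupling_right (hkp : k < p) (hb : 1 ≤ b) (hbm : b ≤ m)
    (h : Decoupling p k (m - b) D₁) : BilinearDecoupling p k m 0 a b D₁ := by
  intro c r₀ _ r₁ h₁ _
  simpa [tri, pow_mul] using h.moment_piece_le hkp hb hbm c h₁

lemma of_decoupling (hkp : k < p) (hl : 1 ≤ l) (hlk : l < k) (ha : 1 ≤ a) (ham : a ≤ m)
    (hb : 1 ≤ b) (hbm : b ≤ m) (h₁ : Decoupling p k (m - a) D₁) (h₂ : Decoupling p k (m - b) D₂)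
    (hD₁ : 0 ≤ D₁) (hD₂ : 0 ≤ D₂) :
    BilinearDecoupling p k m l a b
      (D₁ ^ ((tri l : ℝ) / tri k) * D₂ ^ (1 - (tri l : ℝ) / tri k)) := by
  intro c r₀ hr₀ r₁ hr₁ _
  have hlt := tri_lt_tri hlk
  have hl0 : (0 : ℝ) < tri l := by exact_mod_cast tri_pos hl
  have hk0 : (0 : ℝ) < tri k := by exact_mod_cast (Nat.zero_le _).trans_lt hlt
  have hmoment₁ := h₁.moment_piece_le hkp ha ham c hr₀
  have hmoment₂ := h₂.moment_piece_le hkp hb hbm c hr₁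
  refine moment_le_of_interpolation univ (A₁ := tri k) (B₁ := 0) (A₂ := 0) (B₂ := tri k)
    c.weight_nonneg (fun x => by positivity) (fun x => by positivity) (by positivity)
    ((div_lt_one hk0).2 (by exact_mod_cast hlt)) ?_ ?_ hD₁ hD₂ (c.mass_nonneg _ _)
    (c.mass_nonneg _ _) ?_ ?_
  · push_cast; field_simp; ring
  · rw [Nat.cast_sub hlt.le]; push_cast; field_simp; ring
  · simpa [pow_mul] using hmoment₁
  · simpa [pow_mul] using hmoment₂

/-- The exponents match because
`(k - l + 1) * tri l = (tri k - tri (k - l)) + (k - l) * tri (l - 1)`. -/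
lemma interpolate (hl : 1 ≤ l) (hlk : l < k) (h₁ : BilinearDecoupling p k m (k - l) b a E₁)
    (h₂ : BilinearDecoupling p k m (l - 1) a b E₂) (hE₁ : 0 ≤ E₁) (hE₂ : 0 ≤ E₂) :
    BilinearDecoupling p k m l a b
      (E₁ ^ (1 / ((k : ℝ) - l + 1)) * E₂ ^ (1 - 1 / ((k : ℝ) - l + 1))) := by
  intro c r₀ hr₀ r₁ hr₁ hsep
  have hmoment₁ := h₁ c r₁ hr₁ r₀ hr₀ hsep.symm
  have hmoment₂ := h₂ c r₀ hr₀ r₁ hr₁ hsep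
  have hpos : (1 : ℝ) < k - l + 1 := by
    have : (l : ℝ) < k := by exact_mod_cast hlk
    linarith
  have hne := (zero_lt_one.trans hpos).ne'
  refine moment_le_of_interpolation univ (A₁ := tri k - tri (k - l)) (B₁ := tri (k - l))
    (A₂ := tri (l - 1)) (B₂ := tri k - tri (l - 1)) c.weight_nonneg (fun x => by positivity)
    (fun x => by positivity) (by positivity) ((div_lt_one (by linarith)).2 hpos) ?_ ?_ hE₁ hE₂
    (c.mass_nonneg _ _) (c.mass_nonneg _ _) ?_ hmoment₂
  · rw [Nat.cast_sub (tri_lt_tri (by omega)).le]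
    simp only [tri_cast, Nat.cast_sub hlk.le, Nat.cast_sub hl]
    push_cast; field_simp; ring
  · rw [Nat.cast_sub (tri_lt_tri hlk).le, Nat.cast_sub (tri_lt_tri (by omega)).le]
    simp only [tri_cast, Nat.cast_sub hlk.le, Nat.cast_sub hl]
    push_cast; field_simp; ring
  · simpa only [mul_comm (_ ^ tri (k - l))] using hmoment₁

end BilinearDecoupling

/-! ### Iteration of the bilinear inequality -/

section Gain

/-- The gain of the nested iteration: after `n` rounds, the bilinear constant at scale `b` improves
on the trivial bound `p ^ (η * m)` by the factor `p ^ (-η * gain k n l * b)`. -/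
noncomputable def gain (k : ℕ) : ℕ → ℕ → ℝ
  | 0, l => if l = 0 then 1 else 0
  | n + 1, l => if l = 0 then 1 else
      gain k n (k - l) / l + (1 - 1 / ((k : ℝ) - l + 1)) * gain k n (l - 1)

lemma gain_zero_right (k n : ℕ) : gain k n 0 = 1 := by cases n <;> simp [gain]

lemma gain_succ {l : ℕ} (hl : 1 ≤ l) (k n : ℕ) : gain k (n + 1) l =
    gain k n (k - l) / l + (1 - 1 / ((k : ℝ) - l + 1)) * gain k n (l - 1) := by
  rw [gain, if_neg (Nat.one_le_iff_ne_zero.1 hl)]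

/-- The summand of index `k` that the shift of the second term would produce has coefficient `0`. -/
lemma sum_gain_succ {k : ℕ} (hk : 1 ≤ k) (n : ℕ) :
    ∑ l ∈ Ico 1 k, gain k (n + 1) l = (1 - 1 / (k : ℝ)) + ∑ l ∈ Ico 1 k, gain k n l := by
  set f : ℕ → ℝ := fun l => (1 - 1 / ((k : ℝ) - l)) * gain k n l with hf
  have hreflect : ∑ l ∈ Ico 1 k, gain k n (k - l) / (l : ℝ) =
      ∑ l ∈ Ico 1 k, gain k n l / ((k : ℝ) - l) := by
    have h := Finset.sum_Ico_reflect (fun l => gain k n (k - l) / (l : ℝ)) 1 (Nat.le_succ k)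
    rw [Nat.add_sub_cancel_left, Nat.add_sub_cancel] at h
    rw [← h]
    refine Finset.sum_congr rfl fun l hl => ?_
    have hlk := (Finset.mem_Ico.1 hl).2.le
    rw [Nat.sub_sub_self hlk, Nat.cast_sub hlk]
  have hshift : ∑ l ∈ Ico 1 k, (1 - 1 / ((k : ℝ) - l + 1)) * gain k n (l - 1) =
      f 0 + ∑ l ∈ Ico 1 k, f l := by
    obtain ⟨j, rfl⟩ := Nat.exists_eq_add_of_le' hk
    rw [← Finset.sum_eq_sum_Ico_succ_bot (Nat.succ_pos j), Nat.Ico_zero_eq_range,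
      Finset.sum_range_succ, show f j = 0 by simp [hf], add_zero, Finset.sum_Ico_eq_sum_range,
      Nat.add_sub_cancel]
    refine Finset.sum_congr rfl fun l _ => ?_
    simp only [hf, Nat.add_sub_cancel_left]
    push_cast
    ring_nf
  rw [Finset.sum_congr rfl fun l hl => gain_succ (Finset.mem_Ico.1 hl).1 k n,
    Finset.sum_add_distrib, hreflect, hshift, add_left_comm, ← Finset.sum_add_distrib]
  congr 1
  · simp [hf, gain_zero_right]
  · exact Finset.sum_congr rfl fun l _ => by ring

lemma sum_gain {k : ℕ} (hk : 1 ≤ k) (n : ℕ) :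
    ∑ l ∈ Ico 1 k, gain k n l = n * (1 - 1 / (k : ℝ)) := by
  induction n with
  | zero =>
    rw [Nat.cast_zero, zero_mul]
    exact Finset.sum_eq_zero fun l hl => if_neg (by grind)
  | succ n ih => rw [sum_gain_succ hk, ih]; push_cast; ring

lemma exists_div_le_gain {k : ℕ} (hk : 2 ≤ k) (n : ℕ) :
    ∃ l, 1 ≤ l ∧ l < k ∧ (n : ℝ) / k ≤ gain k n l := by
  have hne : (Ico 1 k).Nonempty := Finset.nonempty_Ico.2 hk
  have hsum : ∑ _l ∈ Ico 1 k, (n : ℝ) / k ≤ ∑ l ∈ Ico 1 k, gain k n l := by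
    rw [sum_gain (by omega), Finset.sum_const, Nat.card_Ico, nsmul_eq_mul, Nat.cast_sub (by omega)]
    have : (k : ℝ) ≠ 0 := by positivity
    refine le_of_eq ?_
    push_cast
    field_simp
  obtain ⟨l, hl, hle⟩ := Finset.exists_le_of_sum_le hne hsum
  exact ⟨l, (Finset.mem_Ico.1 hl).1, (Finset.mem_Ico.1 hl).2, hle⟩

/-- The loss of the nested iteration: after `n` rounds, lower-dimensional decoupling with constant
`p ^ (ε * m)` contributes at most the factor `p ^ (ε * loss k n * b)` at scale `b`. -/
def loss (k : ℕ) : ℕ → ℝ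
  | 0 => 0
  | n + 1 => 2 * (loss k n + k)

lemma loss_nonneg (k n : ℕ) : 0 ≤ loss k n := by
  induction n with
  | zero => exact le_rfl
  | succ n ih => rw [loss]; positivity

end Gain

section PairedScale
variable {k l b n : ℕ}

/-- The scale `(k - l + 1) * b / l` at which a class decouples in dimension `l` against a class at
scale `b`. Meaningful when `l` divides `b`, since the division truncates. -/
def pairedScale (k l b : ℕ) : ℕ := (k - l + 1) * (b / l)

lemma pairedScale_mul (h : l ∣ b) : pairedScale k l b * l = (k - l + 1) * b := by
  rw [pairedScale, mul_assoc, Nat.div_mul_cancel h]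

lemma pairedScale_le (hl : 1 ≤ l) (hlk : l < k) : pairedScale k l b ≤ k * b :=
  Nat.mul_le_mul (by omega) (Nat.div_le_self _ _)

lemma pairedScale_pos (hl : 1 ≤ l) (hb : 1 ≤ b) (h : l ∣ b) : 1 ≤ pairedScale k l b :=
  Nat.mul_pos (Nat.succ_pos _) (Nat.div_pos (Nat.le_of_dvd hb h) hl)

lemma pairedScale_anti {l' : ℕ} (hl : 1 ≤ l) (h : l ≤ l') :
    pairedScale k l' b ≤ pairedScale k l b :=
  Nat.mul_le_mul (by omega) (Nat.div_le_div_left h hl)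

lemma le_pairedScale_pairedScale (hlk : l < k) (h : l ∣ b) (h' : k - l ∣ pairedScale k l b) :
    b ≤ pairedScale k (k - l) (pairedScale k l b) := by
  have hinner := pairedScale_mul (k := k) h
  have houter := pairedScale_mul (k := k) h'
  rw [Nat.sub_sub_self hlk.le] at houter
  refine Nat.le_of_mul_le_mul_right ?_ (Nat.sub_pos_of_lt hlk)
  calc b * (k - l) ≤ (k - l + 1) * b := by rw [mul_comm]; gcongr; omega
    _ ≤ (l + 1) * pairedScale k l b := by rw [← hinner, mul_comm]; gcongr; omega
    _ = _ := houter.symm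

lemma dvd_of_factorial_pow_dvd (hl : 1 ≤ l) (hlk : l < k) (h : k.factorial ^ (n + 1) ∣ b) : l ∣ b :=
  (Nat.dvd_factorial hl hlk.le).trans ((dvd_pow_self _ n.succ_ne_zero).trans h)

lemma factorial_pow_dvd_pairedScale (hl : 1 ≤ l) (hlk : l < k)
    (h : k.factorial ^ (n + 1) ∣ b) : k.factorial ^ n ∣ pairedScale k l b := by
  have hdvd : k.factorial ^ n * l ∣ b :=
    (mul_dvd_mul_left _ (Nat.dvd_factorial hl hlk.le)).trans (by rwa [← pow_succ])
  exact (Nat.dvd_div_of_mul_dvd (by rwa [mul_comm])).mul_left _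

end PairedScale

section Iteration
variable {p k l m : ℕ} {C η ε : ℝ}

/-- Decoupling at all scales with constant `C` and exponent `η`. -/
def PowerDecoupling (p : ℕ) [Fact p.Prime] (k : ℕ) (C η : ℝ) : Prop :=
  ∀ m : ℕ, Decoupling p k m (C * (p : ℝ) ^ (η * m))

/-- The bilinear constant reached in the iteration: `n` lower-dimensional decouplings have been
used, the total gain is `g` and the total loss is `L`, at scale `b`. -/
noncomputable def iterBound (p : ℕ) (C η ε : ℝ) (m n : ℕ) (g L : ℝ) (b : ℕ) : ℝ :=
  C ^ n * (p : ℝ) ^ (η * m - η * g * b + ε * L * b)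

lemma iterBound_nonneg (hC : 1 ≤ C) (n : ℕ) (g L : ℝ) (b : ℕ) :
    0 ≤ iterBound p C η ε m n g L b := by
  unfold iterBound
  positivity

lemma iterBound_rpow_mul_rpow_le (hp : 1 ≤ p) (hC : 1 ≤ C) (hε : 0 ≤ ε) {θ g₁ g₂ L : ℝ}
    (hθ : 0 ≤ θ) (hL : 0 ≤ L) (hl : 1 ≤ l) {b c n : ℕ} (hc : c * θ = (b : ℝ) / l) :
    iterBound p C η ε m n g₁ L c ^ θ * iterBound p C η ε m n g₂ L b ^ (1 - θ) ≤
      iterBound p C η ε m n (g₁ / l + (1 - θ) * g₂) (2 * L) b := by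
  have hp1 : (1 : ℝ) ≤ p := by exact_mod_cast hp
  have hp0 : (0 : ℝ) < p := by linarith
  have hscale : (b : ℝ) / l ≤ b := div_le_self (by positivity) (by exact_mod_cast hl)
  have hloss : ε * L * (b / l) + ε * L * b * (1 - θ) ≤ ε * (2 * L) * b := by
    have h₁ : ε * L * (b / l) ≤ ε * L * b := by gcongr
    have h₂ : ε * L * b * (1 - θ) ≤ ε * L * b :=
      mul_le_of_le_one_right (by positivity) (by linarith)
    linarith
  unfold iterBound
  rw [Real.mul_rpow (by positivity) (by positivity), Real.mul_rpow (by positivity) (by positivity),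
    mul_mul_mul_comm, ← Real.rpow_add (by positivity), add_sub_cancel, Real.rpow_one,
    ← Real.rpow_mul hp0.le, ← Real.rpow_mul hp0.le, ← Real.rpow_add hp0]
  refine mul_le_mul_of_nonneg_left (Real.rpow_le_rpow_of_exponent_le hp1 ?_) (by positivity)
  calc (η * m - η * g₁ * c + ε * L * c) * θ + (η * m - η * g₂ * b + ε * L * b) * (1 - θ)
      = η * m - η * g₁ * (c * θ) - η * g₂ * b * (1 - θ) +
        (ε * L * (c * θ) + ε * L * b * (1 - θ)) := by ring
    _ ≤ η * m - η * g₁ * (c * θ) - η * g₂ * b * (1 - θ) + ε * (2 * L) * b := by rw [hc]; gcongr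
    _ = _ := by rw [hc]; ring

namespace BilinearDecoupling
variable [Fact p.Prime] {a b n N : ℕ} {g L : ℝ}

lemma of_powerDecoupling (hC : 1 ≤ C) (hη : 0 ≤ η) (hkp : k < p) (hD : PowerDecoupling p k C η)
    (hl : 1 ≤ l) (hlk : l < k) (ha : 1 ≤ a) (ham : a ≤ m) (hb : 1 ≤ b) (hbm : b ≤ m) :
    BilinearDecoupling p k m l a b (C * (p : ℝ) ^ (η * m)) := by
  have hp1 : (1 : ℝ) ≤ p := by exact_mod_cast (Fact.out : p.Prime).one_le
  have hD' : ∀ a, Decoupling p k (m - a) (C * (p : ℝ) ^ (η * m)) := fun a =>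
    (hD (m - a)).mono (by gcongr; exact Nat.sub_le _ _)
  have h := of_decoupling hkp hl hlk ha ham hb hbm (hD' a) (hD' b) (by positivity) (by positivity)
  rwa [← Real.rpow_add (by positivity), add_sub_cancel, Real.rpow_one] at h

lemma refine_iterBound (hC : 1 ≤ C) (hε : 0 ≤ ε) (hkp : k < p) (hl : 1 ≤ l) (hlk : l < k)
    (hD : PowerDecoupling p l C ε) (hdvd : l ∣ b) (hkb : k * b ≤ m) (ha : 1 ≤ a)
    (hab : a ≤ pairedScale k l b)
    (h : BilinearDecoupling p k m l (pairedScale k l b) b (iterBound p C η ε m n g L b)) :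
    BilinearDecoupling p k m l a b (iterBound p C η ε m (n + 1) g (L + k) b) := by
  have hp1 : (1 : ℝ) ≤ p := by exact_mod_cast (Fact.out : p.Prime).one_le
  have hle : pairedScale k l b ≤ k * b := pairedScale_le hl hlk
  refine (h.refine_left (hD _) hkp hl hlk (iterBound_nonneg hC _ _ _ _) ha hab (hle.trans hkb)
    (pairedScale_mul hdvd)).mono ?_
  have hscale : ((pairedScale k l b - a : ℕ) : ℝ) ≤ k * b := by
    exact_mod_cast (Nat.sub_le _ _).trans hle
  unfold iterBound
  rw [mul_mul_mul_comm, ← Real.rpow_add (by linarith), ← pow_succ']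
  refine mul_le_mul_of_nonneg_left (Real.rpow_le_rpow_of_exponent_le hp1 ?_) (by positivity)
  linarith [mul_le_mul_of_nonneg_left hscale hε]

lemma interpolate_iterBound (hC : 1 ≤ C) (hε : 0 ≤ ε) (hL : 0 ≤ L) (hl : 1 ≤ l) (hlk : l < k)
    (hdvd : l ∣ b)
    (h₁ : BilinearDecoupling p k m (k - l) b (pairedScale k l b)
      (iterBound p C η ε m N (gain k n (k - l)) L (pairedScale k l b)))
    (h₂ : BilinearDecoupling p k m (l - 1) (pairedScale k l b) b
      (iterBound p C η ε m N (gain k n (l - 1)) L b)) :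
    BilinearDecoupling p k m l (pairedScale k l b) b
      (iterBound p C η ε m N (gain k (n + 1) l) (2 * L) b) := by
  have hlk' : (l : ℝ) < k := by exact_mod_cast hlk
  have hscale : (pairedScale k l b : ℝ) * l = ((k : ℝ) - l + 1) * b := by
    rw [← Nat.cast_sub hlk.le]
    exact_mod_cast pairedScale_mul hdvd
  refine (h₁.interpolate hl hlk h₂ (iterBound_nonneg hC _ _ _ _)
    (iterBound_nonneg hC _ _ _ _)).mono ?_
  rw [gain_succ hl]
  refine iterBound_rpow_mul_rpow_le (Fact.out : p.Prime).one_le hC hε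
    (div_nonneg one_pos.le (by linarith)) hL hl ?_
  have : (k : ℝ) - l + 1 ≠ 0 := by linarith
  field_simp
  linarith

lemma of_decoupling_right_iterBound (hC : 1 ≤ C) (hε : 0 ≤ ε) (hL : 0 ≤ L) (hkp : k < p)
    (hD : PowerDecoupling p k C η) (hb : 1 ≤ b) (hbm : b ≤ m) :
    BilinearDecoupling p k m 0 a b (iterBound p C η ε m (n + 1) (gain k N 0) L b) := by
  have hp1 : (1 : ℝ) ≤ p := by exact_mod_cast (Fact.out : p.Prime).one_le
  refine (of_decoupling_right hkp hb hbm (hD _)).mono ?_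
  rw [gain_zero_right, iterBound, mul_one, Nat.cast_sub hbm, mul_sub]
  refine mul_le_mul (le_self_pow₀ hC n.succ_ne_zero) (Real.rpow_le_rpow_of_exponent_le hp1 ?_)
    (by positivity) (by positivity)
  exact le_add_of_nonneg_right (by positivity)

/-- Scales grow by a factor of at most `k` in each round. The divisibility by powers of `k !` keeps
them integral. -/
lemma iterate (hC : 1 ≤ C) (hη : 0 ≤ η) (hε : 0 ≤ ε) (hkp : k < p) (hD : PowerDecoupling p k C η)
    (hlow : ∀ l, 1 ≤ l → l < k → PowerDecoupling p l C ε) (n : ℕ) : ∀ b l : ℕ, 1 ≤ b →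
    k.factorial ^ (n + 1) ∣ b → b * k ^ (n + 1) ≤ m → 1 ≤ l → l < k →
      BilinearDecoupling p k m l (pairedScale k l b) b
        (iterBound p C η ε m (n + 1) (gain k n l) (loss k n) b) := by
  induction n with
  | zero =>
    intro b l hb hdvd hbm hl hlk
    rw [zero_add, pow_one, mul_comm] at hbm
    have h := of_powerDecoupling hC hη hkp hD hl hlk
      (pairedScale_pos hl hb (dvd_of_factorial_pow_dvd hl hlk hdvd))
      ((pairedScale_le hl hlk).trans hbm) hb ((Nat.le_mul_of_pos_left b (by omega)).trans hbm)
    simpa [iterBound, gain, loss, Nat.one_le_iff_ne_zero.1 hl] using h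
  | succ n ih =>
    intro b l hb hdvd hbm hl hlk
    have hlb := dvd_of_factorial_pow_dvd hl hlk hdvd
    have hcpos : 1 ≤ pairedScale k l b := pairedScale_pos hl hb hlb
    have hcdvd := factorial_pow_dvd_pairedScale hl hlk hdvd
    have hcm : pairedScale k l b * k ^ (n + 1) ≤ m :=
      (Nat.mul_le_mul_right _ (pairedScale_le hl hlk)).trans
        (by rwa [mul_right_comm, ← pow_succ', mul_comm])
    have hbdvd : k.factorial ^ (n + 1) ∣ b := (pow_dvd_pow _ (Nat.le_succ _)).trans hdvd
    have hbm' : b * k ^ (n + 1) ≤ m :=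
      (Nat.mul_le_mul_left _ (Nat.pow_le_pow_right (by omega) (Nat.le_succ _))).trans hbm
    have hscale : ∀ {c}, c * k ^ (n + 1) ≤ m → k * c ≤ m := fun h =>
      (mul_comm _ _).trans_le ((Nat.mul_le_mul_left _ (Nat.le_self_pow n.succ_ne_zero k)).trans h)
    have hkl := dvd_of_factorial_pow_dvd (l := k - l) (by omega) (by omega) hcdvd
    have h₁ := refine_iterBound hC hε hkp (by omega) (by omega) (hlow (k - l) (by omega) (by omega))
      hkl (hscale hcm) hb (le_pairedScale_pairedScale hlk hlb hkl)
      (ih _ (k - l) hcpos hcdvd hcm (by omega) (by omega))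
    have hloss : 0 ≤ loss k n + k := add_nonneg (loss_nonneg k n) k.cast_nonneg
    refine interpolate_iterBound hC hε hloss hl hlk hlb h₁ ?_
    rcases hl.eq_or_lt with rfl | hl1
    · exact of_decoupling_right_iterBound hC hε hloss hkp hD hb
        ((Nat.le_mul_of_pos_left b (by omega)).trans (hscale hbm'))
    · exact refine_iterBound hC hε hkp (by omega) (by omega) (hlow (l - 1) (by omega) (by omega))
        (dvd_of_factorial_pow_dvd (by omega) (by omega) hbdvd) (hscale hbm') hcpos
        (pairedScale_anti (by omega) (Nat.sub_le l 1))
        (ih b (l - 1) hb hbdvd hbm' (by omega) (by omega))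

end BilinearDecoupling

end Iteration

/-! ### From bilinear to linear inequalities -/

section Sums
variable {ι E : Type*} [SeminormedAddCommGroup E]

lemma sum_pow_le_pow_sum (s : Finset ι) {y : ι → ℝ} (hy : ∀ i, 0 ≤ y i) {u : ℕ} (hu : 1 ≤ u) :
    ∑ i ∈ s, y i ^ u ≤ (∑ i ∈ s, y i) ^ u := by
  obtain ⟨u, rfl⟩ := Nat.exists_eq_add_of_le' hu
  calc ∑ i ∈ s, y i ^ (u + 1) ≤ ∑ i ∈ s, (∑ j ∈ s, y j) ^ u * y i := by
        refine Finset.sum_le_sum fun i hi => ?_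
        rw [pow_succ]
        have := hy i
        gcongr
        exact Finset.single_le_sum (fun j _ => hy j) hi
    _ = _ := by rw [← Finset.mul_sum, pow_succ]

lemma norm_sum_sq_pow_le (s : Finset ι) (z : ι → E) {u : ℕ} (hu : 1 ≤ u) :
    (‖∑ i ∈ s, z i‖ ^ 2) ^ u ≤ (#s : ℝ) ^ (2 * u - 1) * ∑ i ∈ s, (‖z i‖ ^ 2) ^ u := by
  obtain ⟨n, hn⟩ : ∃ n, 2 * u = n + 1 := ⟨2 * u - 1, by omega⟩
  simp only [← pow_mul, hn, Nat.add_sub_cancel]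
  calc _ ≤ (∑ i ∈ s, ‖z i‖) ^ (n + 1) := by gcongr; exact norm_sum_le _ _
    _ ≤ _ := pow_sum_le_card_mul_sum_pow (fun i _ => norm_nonneg (z i)) n

/-- Compare the second largest term with the average of the remaining ones: either the largest term
dominates the sum, or the two largest terms do. -/
lemma norm_sum_sq_pow_le_broad_narrow {s : Finset ι} (hs : s.Nontrivial) (z : ι → E) (u v : ℕ) :
    (‖∑ i ∈ s, z i‖ ^ 2) ^ (u + v) ≤ 4 ^ (u + v) * ∑ i ∈ s, (‖z i‖ ^ 2) ^ (u + v) +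
      (2 * (#s : ℝ)) ^ (2 * (u + v)) *
        ∑ q ∈ s.offDiag, (‖z q.1‖ ^ 2) ^ u * (‖z q.2‖ ^ 2) ^ v := by
  classical
  obtain ⟨i, hi, hmax⟩ := s.exists_max_image (fun i => ‖z i‖) hs.nonempty
  obtain ⟨j, hj, hsecond⟩ := (s.erase i).exists_max_image (fun i => ‖z i‖) (hs.erase_nonempty)
  obtain ⟨hji, hjs⟩ := Finset.mem_erase.1 hj
  have hsum : ‖∑ i ∈ s, z i‖ ≤ ‖z i‖ + #s * ‖z j‖ := by
    rw [← Finset.add_sum_erase _ _ hi]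
    refine norm_add_le_of_le le_rfl ((norm_sum_le _ _).trans ?_)
    refine (Finset.sum_le_card_nsmul _ _ _ hsecond).trans ?_
    rw [nsmul_eq_mul]
    gcongr
    exact Finset.erase_subset i s
  rcases le_total (#s * ‖z j‖) ‖z i‖ with h | h
  · refine le_add_of_le_of_nonneg ?_ (by positivity)
    calc _ ≤ ((2 * ‖z i‖) ^ 2) ^ (u + v) := by gcongr; linarith
      _ = 4 ^ (u + v) * (‖z i‖ ^ 2) ^ (u + v) := by rw [← mul_pow]; congr 1; ring
      _ ≤ _ := by
        gcongr
        exact Finset.single_le_sum (f := fun i => (‖z i‖ ^ 2) ^ (u + v))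
          (fun i _ => by positivity) hi
  · refine le_add_of_nonneg_of_le (by positivity) ?_
    calc _ ≤ ((2 * #s * ‖z j‖) ^ 2) ^ (u + v) := by gcongr; linarith
      _ = (2 * (#s : ℝ)) ^ (2 * (u + v)) * ((‖z j‖ ^ 2) ^ u * (‖z j‖ ^ 2) ^ v) := by
        rw [pow_mul, ← pow_add, ← mul_pow]; congr 1; ring
      _ ≤ (2 * (#s : ℝ)) ^ (2 * (u + v)) * ((‖z i‖ ^ 2) ^ u * (‖z j‖ ^ 2) ^ v) := by
        gcongr
        exact hmax j hjs
      _ ≤ _ := by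
        gcongr
        exact Finset.single_le_sum (f := fun q : ι × ι => (‖z q.1‖ ^ 2) ^ u * (‖z q.2‖ ^ 2) ^ v)
          (fun _ _ => by positivity) (a := (i, j)) (Finset.mem_offDiag.2 ⟨hi, hjs, hji.symm⟩)

lemma sum_weight_mul_mul_le {Ω κ : Type*} (s : Finset Ω) (I : Finset ι) (J : Finset κ)
    {w A B : Ω → ℝ} {A' : ι → Ω → ℝ} {B' : κ → Ω → ℝ} {P : ι → ℝ} {Q : κ → ℝ} {E : ℝ}
    (hw : ∀ x, 0 ≤ w x) (hB : ∀ x, 0 ≤ B x) (hA' : ∀ i x, 0 ≤ A' i x)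
    (hAsum : ∀ x, A x ≤ ∑ i ∈ I, A' i x) (hBsum : ∀ x, B x ≤ ∑ j ∈ J, B' j x)
    (h : ∀ i ∈ I, ∀ j ∈ J, ∑ x ∈ s, w x * (A' i x * B' j x) ≤ E * (P i * Q j)) :
    ∑ x ∈ s, w x * (A x * B x) ≤ E * ((∑ i ∈ I, P i) * ∑ j ∈ J, Q j) := by
  calc ∑ x ∈ s, w x * (A x * B x)
      ≤ ∑ x ∈ s, w x * ((∑ i ∈ I, A' i x) * ∑ j ∈ J, B' j x) := by
        refine Finset.sum_le_sum fun x _ => mul_le_mul_of_nonneg_left ?_ (hw x)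
        exact mul_le_mul (hAsum x) (hBsum x) (hB x) (Finset.sum_nonneg fun i _ => hA' i x)
    _ = ∑ q ∈ I ×ˢ J, ∑ x ∈ s, w x * (A' q.1 x * B' q.2 x) := by
        rw [Finset.sum_comm]
        exact Finset.sum_congr rfl fun x _ => by
          rw [Finset.sum_mul_sum, ← Finset.sum_product', Finset.mul_sum]
    _ ≤ ∑ q ∈ I ×ˢ J, E * (P q.1 * Q q.2) := Finset.sum_le_sum fun q hq =>
        h q.1 (Finset.mem_product.1 hq).1 q.2 (Finset.mem_product.1 hq).2
    _ = _ := by rw [← Finset.mul_sum, Finset.sum_mul_sum, ← Finset.sum_product']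

end Sums

section BroadNarrow
variable {p : ℕ} [Fact p.Prime] {k l m : ℕ} {D E : ℝ}

namespace DecouplingData
variable (c : DecouplingData p k m)

lemma sum_mass_of_zero (a : ℕ) : ∑ r ∈ range (p ^ a), c.mass a r = c.mass 0 0 := by
  simpa using c.sum_mass (n := a) (r := 0) (a := 0) (by simp)

lemma sum_piece_of_zero (a : ℕ) (x : c.Ω) : ∑ r ∈ range (p ^ a), c.piece a r x = c.piece 0 0 x := by
  simpa using c.sum_piece (n := a) (r := 0) (a := 0) (by simp) x

lemma norm_piece_sq_pow_le {u a n r : ℕ} (hu : 1 ≤ u) (hr : r < p ^ a) (x : c.Ω) :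
    (‖c.piece a r x‖ ^ 2) ^ u ≤ ∑ ρ ∈ range (p ^ n), ((p ^ n : ℕ) : ℝ) ^ (2 * u - 1) *
      (‖c.piece (a + n) (r + p ^ a * ρ) x‖ ^ 2) ^ u := by
  rw [← c.sum_piece (n := n) hr, ← Finset.mul_sum]
  exact (norm_sum_sq_pow_le _ _ hu).trans_eq (by rw [Finset.card_range])

lemma norm_piece_zero_pow_le (u v : ℕ) (x : c.Ω) : ‖c.piece 0 0 x‖ ^ (2 * (u + v)) ≤
    4 ^ (u + v) * ∑ i ∈ range p, ‖c.piece 1 i x‖ ^ (2 * (u + v)) +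
      (2 * (p : ℝ)) ^ (2 * (u + v)) * ∑ q ∈ (range p).offDiag,
        (‖c.piece 1 q.1 x‖ ^ 2) ^ u * (‖c.piece 1 q.2 x‖ ^ 2) ^ v := by
  have hnontrivial : (range p).Nontrivial := by
    rw [← Finset.one_lt_card_iff_nontrivial, Finset.card_range]
    exact (Fact.out : p.Prime).one_lt
  have h := norm_sum_sq_pow_le_broad_narrow hnontrivial (fun i => c.piece 1 i x) u v
  have hpiece := c.sum_piece_of_zero 1 x
  rw [pow_one] at hpiece
  simpa only [hpiece, Finset.card_range, ← pow_mul] using h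

end DecouplingData

/-- The cost of passing to finer classes is a power of `p` that does not depend on `m`. -/
lemma BilinearDecoupling.coarsen {a b : ℕ} (hE : 0 ≤ E) (hl : 1 ≤ l) (hlk : l < k) (ha : 1 ≤ a)
    (hb : 1 ≤ b) (h : BilinearDecoupling p k m l a b E) :
    BilinearDecoupling p k m l 1 1 ((p : ℝ) ^ ((a + b) * (2 * tri k)) * E) := by
  intro c r₀ h₀ r₁ h₁ hsep
  have hlt := tri_lt_tri hlk
  set u := tri l
  set v := tri k - tri l
  obtain ⟨a, rfl⟩ := Nat.exists_eq_add_of_le ha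
  obtain ⟨b, rfl⟩ := Nat.exists_eq_add_of_le hb
  set K : ℝ := ((p ^ a : ℕ) : ℝ) ^ (2 * u - 1) * ((p ^ b : ℕ) : ℝ) ^ (2 * v - 1) with hK
  have hKle : K ≤ (p : ℝ) ^ ((1 + a + (1 + b)) * (2 * tri k)) := by
    rw [hK, Nat.cast_pow, Nat.cast_pow, ← pow_mul, ← pow_mul, ← pow_add]
    refine pow_le_pow_right₀ (by exact_mod_cast (Fact.out : p.Prime).one_le) ?_
    calc a * (2 * u - 1) + b * (2 * v - 1) ≤ (1 + a) * (2 * tri k) + (1 + b) * (2 * tri k) := by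
          gcongr <;> omega
      _ = _ := (add_mul _ _ _).symm
  have hfine : ∀ ρ ∈ range (p ^ a), ∀ ρ' ∈ range (p ^ b), ∑ x, c.weight x *
      (((p ^ a : ℕ) : ℝ) ^ (2 * u - 1) * (‖c.piece (1 + a) (r₀ + p ^ 1 * ρ) x‖ ^ 2) ^ u *
        (((p ^ b : ℕ) : ℝ) ^ (2 * v - 1) * (‖c.piece (1 + b) (r₁ + p ^ 1 * ρ') x‖ ^ 2) ^ v)) ≤
      K * E * (c.mass (1 + a) (r₀ + p ^ 1 * ρ) ^ u * c.mass (1 + b) (r₁ + p ^ 1 * ρ') ^ v) := by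
    intro ρ hρ ρ' hρ'
    have hbil := h c _ (add_pow_mul_lt h₀ (Finset.mem_range.1 hρ)) _
      (add_pow_mul_lt h₁ (Finset.mem_range.1 hρ'))
      (by rwa [add_pow_mul_mod le_rfl, add_pow_mul_mod le_rfl])
    rw [mul_assoc K]
    refine le_trans (le_of_eq ?_) (mul_le_mul_of_nonneg_left hbil (by positivity))
    rw [Finset.mul_sum]
    exact Finset.sum_congr rfl fun x _ => by rw [hK]; ring
  refine (sum_weight_mul_mul_le univ _ _ c.weight_nonneg (fun x => by positivity)
    (fun ρ x => by positivity) (c.norm_piece_sq_pow_le (tri_pos hl) h₀)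
    (c.norm_piece_sq_pow_le (by omega) h₁) hfine).trans ?_
  rw [← c.sum_mass (n := a) h₀, ← c.sum_mass (n := b) h₁]
  have hsum₀ := sum_pow_le_pow_sum (range (p ^ a))
    (fun ρ => c.mass_nonneg (1 + a) (r₀ + p ^ 1 * ρ)) (tri_pos hl)
  have hsum₁ := sum_pow_le_pow_sum (range (p ^ b))
    (fun ρ => c.mass_nonneg (1 + b) (r₁ + p ^ 1 * ρ)) (show 1 ≤ v by omega)
  exact mul_le_mul (by gcongr) (mul_le_mul hsum₀ hsum₁
    (Finset.sum_nonneg fun _ _ => pow_nonneg (c.mass_nonneg _ _) _)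
    (pow_nonneg (Finset.sum_nonneg fun _ _ => c.mass_nonneg _ _) _))
    (mul_nonneg (Finset.sum_nonneg fun _ _ => pow_nonneg (c.mass_nonneg _ _) _)
      (Finset.sum_nonneg fun _ _ => pow_nonneg (c.mass_nonneg _ _) _)) (by positivity)

lemma BilinearDecoupling.sum_offDiag_le (hE : 0 ≤ E) (hl : 1 ≤ l) (hlk : l < k)
    (h : BilinearDecoupling p k m l 1 1 E) (c : DecouplingData p k m) :
    ∑ q ∈ (range p).offDiag, ∑ x, c.weight x *
      ((‖c.piece 1 q.1 x‖ ^ 2) ^ tri l * (‖c.piece 1 q.2 x‖ ^ 2) ^ (tri k - tri l)) ≤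
        E * c.mass 0 0 ^ tri k := by
  have hlt := tri_lt_tri hlk
  have hmass := c.mass_nonneg 1
  have hsum := c.sum_mass_of_zero 1
  rw [pow_one] at hsum
  calc _ ≤ ∑ q ∈ (range p).offDiag,
          E * (c.mass 1 q.1 ^ tri l * c.mass 1 q.2 ^ (tri k - tri l)) := by
        refine Finset.sum_le_sum fun q hq => ?_
        obtain ⟨h₁, h₂, hne⟩ := Finset.mem_offDiag.1 hq
        rw [Finset.mem_range] at h₁ h₂
        exact h c _ (by rwa [pow_one]) _ (by rwa [pow_one])
          (by rwa [Nat.mod_eq_of_lt h₁, Nat.mod_eq_of_lt h₂])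
    _ ≤ ∑ q ∈ range p ×ˢ range p, E * (c.mass 1 q.1 ^ tri l * c.mass 1 q.2 ^ (tri k - tri l)) :=
        Finset.sum_le_sum_of_subset_of_nonneg
          (fun q hq => Finset.mem_product.2 ((Finset.mem_offDiag.1 hq).imp_right And.left))
          fun q _ _ => mul_nonneg hE (mul_nonneg (pow_nonneg (hmass _) _) (pow_nonneg (hmass _) _))
    _ = E * ((∑ i ∈ range p, c.mass 1 i ^ tri l) *
          ∑ j ∈ range p, c.mass 1 j ^ (tri k - tri l)) := by
        rw [← Finset.mul_sum, Finset.sum_mul_sum, ← Finset.sum_product']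
    _ ≤ E * (c.mass 0 0 ^ tri l * c.mass 0 0 ^ (tri k - tri l)) := by
        rw [← hsum]
        refine mul_le_mul_of_nonneg_left (mul_le_mul (sum_pow_le_pow_sum _ hmass (tri_pos hl))
          (sum_pow_le_pow_sum _ hmass (by omega))
          (Finset.sum_nonneg fun _ _ => pow_nonneg (hmass _) _)
          (pow_nonneg (Finset.sum_nonneg fun _ _ => hmass _) _)) hE
    _ = _ := by rw [← pow_add, Nat.add_sub_cancel' hlt.le]

/-- Either one class modulo `p` dominates, which is handled by rescaling, or two separated classes
do, which is handled by the bilinear inequality. -/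
lemma Decoupling.of_bilinear (hkp : k < p) (hl : 1 ≤ l) (hlk : l < k) (hm : 1 ≤ m) (hD0 : 0 ≤ D)
    (hE0 : 0 ≤ E) (hD : Decoupling p k (m - 1) D) (hE : BilinearDecoupling p k m l 1 1 E) :
    Decoupling p k m (4 ^ tri k * D + (2 * (p : ℝ)) ^ (2 * tri k) * E) := by
  intro c
  have hmass := c.mass_nonneg 1
  have hsum := c.sum_mass_of_zero 1
  rw [pow_one] at hsum
  have hnarrow : ∑ i ∈ range p, ∑ x, c.weight x * ‖c.piece 1 i x‖ ^ (2 * tri k) ≤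
      D * c.mass 0 0 ^ tri k := by
    calc _ ≤ ∑ i ∈ range p, D * c.mass 1 i ^ tri k := Finset.sum_le_sum fun i hi =>
          hD.moment_piece_le hkp le_rfl hm c (by simpa using hi)
      _ ≤ _ := by
        rw [← Finset.mul_sum, ← hsum]
        exact mul_le_mul_of_nonneg_left (sum_pow_le_pow_sum _ hmass (tri_pos (by omega))) hD0
  have hpoint := fun x => c.norm_piece_zero_pow_le (tri l) (tri k - tri l) x
  simp only [Nat.add_sub_cancel' (tri_lt_tri hlk).le] at hpoint
  calc _ ≤ ∑ x, (4 ^ tri k * (∑ i ∈ range p, c.weight x * ‖c.piece 1 i x‖ ^ (2 * tri k)) +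
        (2 * (p : ℝ)) ^ (2 * tri k) * ∑ q ∈ (range p).offDiag, c.weight x *
          ((‖c.piece 1 q.1 x‖ ^ 2) ^ tri l * (‖c.piece 1 q.2 x‖ ^ 2) ^ (tri k - tri l))) := by
        refine Finset.sum_le_sum fun x _ =>
          (mul_le_mul_of_nonneg_left (hpoint x) (c.weight_nonneg x)).trans_eq ?_
        rw [← Finset.mul_sum, ← Finset.mul_sum]
        ring
    _ = 4 ^ tri k * (∑ i ∈ range p, ∑ x, c.weight x * ‖c.piece 1 i x‖ ^ (2 * tri k)) +
        (2 * (p : ℝ)) ^ (2 * tri k) * ∑ q ∈ (range p).offDiag, ∑ x, c.weight x *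
          ((‖c.piece 1 q.1 x‖ ^ 2) ^ tri l * (‖c.piece 1 q.2 x‖ ^ 2) ^ (tri k - tri l)) := by
        rw [Finset.sum_add_distrib, ← Finset.mul_sum, ← Finset.mul_sum,
          Finset.sum_comm (s := range p), Finset.sum_comm (s := (range p).offDiag)]
    _ ≤ 4 ^ tri k * (D * c.mass 0 0 ^ tri k) +
        (2 * (p : ℝ)) ^ (2 * tri k) * (E * c.mass 0 0 ^ tri k) := by
        gcongr
        exact hE.sum_offDiag_le hE0 hl hlk c
    _ = _ := by ring

lemma Decoupling.of_pow (hk : 1 ≤ k) :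
    Decoupling p k m (((p ^ m : ℕ) : ℝ) ^ (2 * tri k - 1)) := by
  intro c
  simp_rw [pow_mul _ 2]
  calc _ ≤ ∑ x, c.weight x * ∑ ρ ∈ range (p ^ m), ((p ^ m : ℕ) : ℝ) ^ (2 * tri k - 1) *
          (‖c.piece m ρ x‖ ^ 2) ^ tri k := by
        refine Finset.sum_le_sum fun x _ => mul_le_mul_of_nonneg_left ?_ (c.weight_nonneg x)
        simpa using c.norm_piece_sq_pow_le (n := m) (tri_pos hk) (a := 0) (r := 0) (by simp) x
    _ = ((p ^ m : ℕ) : ℝ) ^ (2 * tri k - 1) *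
          ∑ ρ ∈ range (p ^ m), ∑ x, c.weight x * ‖c.piece m ρ x‖ ^ (2 * tri k) := by
        rw [Finset.sum_comm (s := range _)]
        simp_rw [Finset.mul_sum, pow_mul _ 2, mul_left_comm (c.weight _)]
    _ ≤ ((p ^ m : ℕ) : ℝ) ^ (2 * tri k - 1) * ∑ ρ ∈ range (p ^ m), c.bound ρ ^ tri k := by
        gcongr with ρ hρ
        exact c.moment_le ρ (Finset.mem_range.1 hρ)
    _ ≤ _ := by
        rw [c.mass_zero]
        gcongr
        exact sum_pow_le_pow_sum _ c.bound_nonneg (tri_pos hk)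

end BroadNarrow

/-! ### The decoupling theorem -/

section DimensionOne
variable {p : ℕ} [Fact p.Prime] {k B m : ℕ} {Ω ι : Type*} [Fintype Ω]

lemma sum_mul_norm_sum_sq_of_orthogonal (w : Ω → ℝ) (s : Finset ι) (f : ι → Ω → ℂ)
    (h : ∀ i ∈ s, ∀ j ∈ s, i ≠ j →
      ∑ x, (w x : ℂ) * (f i x * (starRingEnd ℂ) (f j x)) = 0) :
    ∑ x, w x * ‖∑ i ∈ s, f i x‖ ^ 2 = ∑ i ∈ s, ∑ x, w x * ‖f i x‖ ^ 2 := by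
  apply Complex.ofReal_injective
  simp only [Complex.ofReal_sum, Complex.ofReal_mul, Complex.ofReal_pow, ← Complex.mul_conj',
    map_sum]
  simp_rw [Finset.sum_mul_sum, Finset.mul_sum]
  rw [Finset.sum_comm]
  refine Finset.sum_congr rfl fun i hi => ?_
  rw [Finset.sum_comm]
  exact Finset.sum_eq_single i (fun j hj hne => h i hi j hj hne.symm) fun hi' => absurd hi hi'

lemma IsAdmissible.pow_dvd_eval_zero_sub_iff {φ : Fin (k + 1) → Polynomial ℤ_[p]}
    (hφ : IsAdmissible (p : ℤ_[p]) φ) (B x y : ℕ) :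
    (p : ℤ_[p]) ^ B ∣ (φ 0).eval (x : ℤ_[p]) - (φ 0).eval (y : ℤ_[p]) ↔
      x % p ^ B = y % p ^ B := by
  obtain ⟨r, hr⟩ := hφ 0
  obtain ⟨q, hq⟩ := Polynomial.sub_dvd_eval_sub (x : ℤ_[p]) (y : ℤ_[p]) r
  have hfactor : (φ 0).eval (x : ℤ_[p]) - (φ 0).eval (y : ℤ_[p]) =
      (((x : ℤ) - (y : ℤ) : ℤ) : ℤ_[p]) * (1 + p * q) := by
    simp only [hr, Polynomial.eval_add, Polynomial.eval_mul, Polynomial.eval_X, Polynomial.eval_C,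
      Fin.val_zero, zero_add, pow_one]
    push_cast
    linear_combination (p : ℤ_[p]) * hq
  have hunit : IsUnit (1 + (p : ℤ_[p]) * q) := by
    rw [← isUnit_map_iff (PadicInt.toZMod (p := p))]
    simp
  rw [hfactor, hunit.dvd_mul_right, PadicInt.pow_p_dvd_int_iff, eq_comm]
  exact_mod_cast (Int.modEq_iff_dvd (n := (p : ℤ) ^ B) (a := y) (b := x)).symm

lemma IsMomentSystem.sum_mul_conj_eq_zero {w : Ω → ℝ} {s : Finset ι} {loc : ι → ℕ}
    {F : ι → Ω → ℂ} (h : IsMomentSystem p (k + 1) B w s loc F) {i j : ι} (hi : i ∈ s)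
    (hj : j ∈ s) (hne : loc i % p ^ B ≠ loc j % p ^ B) :
    ∑ x, (w x : ℂ) * (F i x * (starRingEnd ℂ) (F j x)) = 0 := by
  obtain ⟨φ, hφ, hv⟩ := h
  obtain ⟨τ, hτ, c, hc, hF⟩ := hv (Pi.single 0 1)
  set S := ∑ x, (w x : ℂ) * (F i x * (starRingEnd ℂ) (F j x)) with hS
  set y := (φ 0).eval (loc i : ℤ_[p])
  set z := (φ 0).eval (loc j : ℤ_[p])
  have hF' : ∀ i ∈ s, ∀ x, F i (τ x) =
      c * levelChar p B ((φ 0).eval (loc i : ℤ_[p])) * F i x := by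
    simpa [Pi.single_apply] using hF
  have hconj : ∀ {u : ℂ}, ‖u‖ = 1 → u * (starRingEnd ℂ) u = 1 := fun hu => by
    simp [Complex.mul_conj', hu]
  have hadd : levelChar p B (y - z) * levelChar p B z = levelChar p B y := by
    rw [← AddChar.map_add_eq_mul, sub_add_cancel]
  have htranslate : S = levelChar p B (y - z) * S := by
    conv_lhs => rw [hS, ← Equiv.sum_comp τ]
    rw [hS, Finset.mul_sum]
    refine Finset.sum_congr rfl fun x _ => ?_
    rw [hτ, hF' i hi, hF' j hj, map_mul, map_mul, ← hadd]
    linear_combination (w x : ℂ) * levelChar p B (y - z) * F i x * (starRingEnd ℂ) (F j x) *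
      (c * (starRingEnd ℂ) c * hconj (norm_levelChar B z) + hconj hc)
  refine (mul_eq_zero.1 (by linear_combination -htranslate :
    (levelChar p B (y - z) - 1) * S = 0)).resolve_left fun hone => hne ?_
  exact (hφ.pow_dvd_eval_zero_sub_iff B _ _).1
    ((levelChar_eq_one_iff B _).1 (sub_eq_zero.1 hone))

lemma DecouplingData.sum_piece_mul_conj_eq_zero (c : DecouplingData p 1 m) {r r' : ℕ}
    (hne : r ≠ r') :
    ∑ x, (c.weight x : ℂ) * (c.piece m r x * (starRingEnd ℂ) (c.piece m r' x)) = 0 := by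
  simp_rw [DecouplingData.piece, map_sum, Finset.sum_mul_sum, Finset.mul_sum]
  rw [Finset.sum_comm]
  refine Finset.sum_eq_zero fun i hi => ?_
  rw [Finset.sum_comm]
  refine Finset.sum_eq_zero fun j hj => ?_
  rw [mem_residueClass] at hi hj
  exact c.isMomentSystem.sum_mul_conj_eq_zero hi.1 hj.1 (by rwa [mul_one, hi.2, hj.2])

lemma Decoupling.one : Decoupling p 1 m 1 := by
  intro c
  have htri : tri 1 = 1 := rfl
  have hpiece : ∀ x, c.piece 0 0 x = ∑ r ∈ range (p ^ m), c.piece m r x := fun x =>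
    (c.sum_piece_of_zero m x).symm
  simp_rw [htri, mul_one, one_mul, pow_one, hpiece]
  rw [sum_mul_norm_sum_sq_of_orthogonal _ _ _ fun r _ r' _ => c.sum_piece_mul_conj_eq_zero,
    c.mass_zero]
  refine Finset.sum_le_sum fun r hr => ?_
  simpa only [htri, mul_one, pow_one] using! c.moment_le r (Finset.mem_range.1 hr)

end DimensionOne

section Exponent
variable {p : ℕ} [Fact p.Prime] {k n : ℕ} {C η η' ε ε₀ : ℝ}

/-- Decoupling at all scales with a loss of `p ^ (η * m)` at scale `p ^ (-m)`, up to a constant. -/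
def DecouplingExponent (p : ℕ) [Fact p.Prime] (k : ℕ) (η : ℝ) : Prop :=
  ∃ C : ℝ, 1 ≤ C ∧ PowerDecoupling p k C η

lemma one_le_natCast_prime : (1 : ℝ) ≤ p := by exact_mod_cast (Fact.out : p.Prime).one_le

lemma PowerDecoupling.mono (h : PowerDecoupling p k C η) {C' : ℝ} (hC : C ≤ C') :
    PowerDecoupling p k C' η := fun m =>
  (h m).mono (mul_le_mul_of_nonneg_right hC (by positivity))

lemma DecouplingExponent.mono (h : DecouplingExponent p k η) (hη : η ≤ η') :
    DecouplingExponent p k η' := by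
  obtain ⟨C, hC, h⟩ := h
  refine ⟨C, hC, fun m => (h m).mono (mul_le_mul_of_nonneg_left ?_ (by positivity))⟩
  exact Real.rpow_le_rpow_of_exponent_le one_le_natCast_prime (by gcongr)

lemma DecouplingExponent.exists_common_constant (h : DecouplingExponent p k η)
    (hlow : ∀ l, 1 ≤ l → l < k → DecouplingExponent p l ε) :
    ∃ C : ℝ, 1 ≤ C ∧ PowerDecoupling p k C η ∧
      ∀ l, 1 ≤ l → l < k → PowerDecoupling p l C ε := by
  obtain ⟨C₀, hC₀, hD₀⟩ := h
  choose! c hc hD using hlow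
  have hnonneg : ∀ l ∈ Finset.Ico 1 k, 0 ≤ c l := fun l hl =>
    zero_le_one.trans (hc l (Finset.mem_Ico.1 hl).1 (Finset.mem_Ico.1 hl).2)
  have hle : C₀ ≤ C₀ + ∑ l ∈ Finset.Ico 1 k, c l :=
    le_add_of_nonneg_right (Finset.sum_nonneg hnonneg)
  refine ⟨_, hC₀.trans hle, hD₀.mono hle, fun l hl hlk => (hD l hl hlk).mono ?_⟩
  exact (Finset.single_le_sum hnonneg (Finset.mem_Ico.2 ⟨hl, hlk⟩)).trans
    (le_add_of_nonneg_left (by linarith))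

lemma exists_dvd_and_mul_le {L K m : ℕ} (hL : 0 < L) (hK : 0 < K) (hm : L * K ≤ m) :
    ∃ b, 1 ≤ b ∧ L ∣ b ∧ b * K ≤ m ∧ m ≤ (b + L) * K := by
  have hLK := Nat.mul_pos hL hK
  refine ⟨L * (m / (L * K)), Nat.mul_pos hL (Nat.div_pos hm hLK), dvd_mul_right _ _, ?_, ?_⟩
  · calc L * (m / (L * K)) * K = m / (L * K) * (L * K) := by ring
      _ ≤ m := Nat.div_mul_le_self _ _
  · calc m ≤ m / (L * K) * (L * K) + L * K := (Nat.lt_div_mul_add hLK).le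
      _ = _ := by ring

/-- Iterating `n + 1` times gains `η * n / k` scales, which beats both the cost `4 * k * tri k` of
passing to finer classes and the losses in lower dimensions. -/
lemma PowerDecoupling.exists_bilinearDecoupling (hk : 2 ≤ k) (hkp : k < p) (hC : 1 ≤ C)
    (hη : 0 ≤ η) (hε : 0 ≤ ε) (hn : (4 * k * tri k : ℕ) + 2 ≤ η * (n / k))
    (hloss : ε * loss k n ≤ 1) (hD : PowerDecoupling p k C η)
    (hlow : ∀ l, 1 ≤ l → l < k → PowerDecoupling p l C ε) :
    ∃ l, 1 ≤ l ∧ l < k ∧ ∀ m, k.factorial ^ (n + 1) * k ^ (n + 1) ≤ m →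
      BilinearDecoupling p k m l 1 1 (C ^ (n + 1) * (p : ℝ) ^ ((k.factorial ^ (n + 1) : ℕ) : ℝ) *
        (p : ℝ) ^ ((η - 1 / (k : ℝ) ^ (n + 1)) * m)) := by
  obtain ⟨l, hl, hlk, hgain⟩ := exists_div_le_gain hk n
  refine ⟨l, hl, hlk, fun m hm => ?_⟩
  set L := k.factorial ^ (n + 1)
  obtain ⟨b, hb, hdvd, hbm, hmb⟩ := exists_dvd_and_mul_le (L := L) (K := k ^ (n + 1))
    (pow_pos (Nat.factorial_pos k) _) (pow_pos (by omega) _) hm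
  have hlb : l ∣ b := dvd_of_factorial_pow_dvd hl hlk hdvd
  refine ((BilinearDecoupling.iterate hC hη hε hkp hD hlow n b l hb hdvd hbm hl hlk).coarsen
    (iterBound_nonneg hC _ _ _ _) hl hlk (pairedScale_pos hl hb hlb) hb).mono ?_
  have hp1 : (1 : ℝ) ≤ p := one_le_natCast_prime
  have hp0 : (0 : ℝ) < p := by linarith
  rw [iterBound, ← Real.rpow_natCast (p : ℝ), mul_left_comm, ← Real.rpow_add hp0,
    mul_assoc (C ^ (n + 1)), ← Real.rpow_add hp0]
  refine mul_le_mul_of_nonneg_left (Real.rpow_le_rpow_of_exponent_le hp1 ?_) (by positivity)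
  have hscale : (m : ℝ) * (1 / (k : ℝ) ^ (n + 1)) ≤ b + L := by
    rw [mul_one_div, div_le_iff₀ (by positivity)]
    exact_mod_cast hmb
  have hcoarse : (((pairedScale k l b + b) * (2 * tri k) : ℕ) : ℝ) ≤ (4 * k * tri k : ℕ) * b := by
    have := pairedScale_le (b := b) hl hlk
    norm_cast
    calc _ ≤ (2 * k * b) * (2 * tri k) := Nat.mul_le_mul_right _ (by nlinarith)
      _ = _ := by ring
  have hηgain : ((4 * k * tri k : ℕ) + 2 : ℝ) * b ≤ η * gain k n l * b := by gcongr; nlinarith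
  have hεloss : ε * loss k n * b ≤ 1 * b := by gcongr
  linarith

lemma PowerDecoupling.of_bilinear {l m₀ : ℕ} {E : ℝ} (hkp : k < p) (hl : 1 ≤ l) (hlk : l < k)
    (hm₀ : 1 ≤ m₀) (hC : 1 ≤ C) (hE : 0 ≤ E) (hη : 0 ≤ η) (hη' : 0 ≤ η')
    (hp : 2 * 4 ^ tri k ≤ (p : ℝ) ^ η') (hD : PowerDecoupling p k C η)
    (hbil : ∀ m, m₀ ≤ m → BilinearDecoupling p k m l 1 1 (E * (p : ℝ) ^ (η' * m))) :
    DecouplingExponent p k η' := by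
  have hp1 : (1 : ℝ) ≤ p := one_le_natCast_prime
  have hp0 : (0 : ℝ) < p := by linarith
  set C' : ℝ := C * (p : ℝ) ^ (η * m₀) + 2 * (2 * (p : ℝ)) ^ (2 * tri k) * E
  have hle : C * (p : ℝ) ^ (η * m₀) ≤ C' := le_add_of_nonneg_right (by positivity)
  have hle' : 2 * (2 * (p : ℝ)) ^ (2 * tri k) * E ≤ C' := le_add_of_nonneg_left (by positivity)
  have hC' : 1 ≤ C' := (one_le_mul_of_one_le_of_one_le hC
    (Real.one_le_rpow hp1 (by positivity))).trans hle
  have hsmall : ∀ m ≤ m₀, Decoupling p k m (C' * (p : ℝ) ^ (η' * m)) := fun m hm => by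
    refine (hD m).mono (le_trans ?_
      (le_mul_of_one_le_right (by positivity) (Real.one_le_rpow hp1 (by positivity))))
    refine (mul_le_mul_of_nonneg_left (Real.rpow_le_rpow_of_exponent_le hp1 ?_)
      (by positivity)).trans hle
    gcongr
  refine ⟨C', hC', fun m => ?_⟩
  induction m with
  | zero => exact hsmall 0 (Nat.zero_le _)
  | succ m ih =>
    rcases lt_or_ge (m + 1) m₀ with hlt | hge
    · exact hsmall _ hlt.le
    refine (Decoupling.of_bilinear (m := m + 1) hkp hl hlk (by omega) (by positivity)
      (by positivity) ih (hbil _ hge)).mono ?_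
    have hsucc : (p : ℝ) ^ (η' * (m + 1 : ℕ)) = (p : ℝ) ^ (η' * m) * (p : ℝ) ^ η' := by
      rw [← Real.rpow_add hp0]
      push_cast
      ring_nf
    have hnarrow : 4 ^ tri k * (C' * (p : ℝ) ^ (η' * m)) ≤
        C' * (p : ℝ) ^ (η' * (m + 1 : ℕ)) / 2 := by
      rw [hsucc]
      have : 0 ≤ C' * (p : ℝ) ^ (η' * m) := by positivity
      nlinarith [mul_le_mul_of_nonneg_left hp this]
    have hbroad : (2 * (p : ℝ)) ^ (2 * tri k) * (E * (p : ℝ) ^ (η' * (m + 1 : ℕ))) ≤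
        C' * (p : ℝ) ^ (η' * (m + 1 : ℕ)) / 2 := by
      rw [← mul_assoc, mul_div_right_comm]
      gcongr
      linarith
    linarith

lemma DecouplingExponent.improve (hk : 2 ≤ k) (hε₀ : 0 < ε₀) (hε : 0 ≤ ε)
    (hn : (4 * k * tri k : ℕ) + 2 ≤ ε₀ * (n / k)) (hloss : ε * loss k n ≤ 1) (hkp : k < p)
    (hp : 2 * 4 ^ tri k ≤ (p : ℝ) ^ ε₀)
    (hlow : ∀ l, 1 ≤ l → l < k → DecouplingExponent p l ε) (hη : ε₀ ≤ η)
    (h : DecouplingExponent p k η) :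
    DecouplingExponent p k (max (η - 1 / (k : ℝ) ^ (n + 1)) ε₀) := by
  obtain ⟨C, hC, hD, hlow⟩ := h.exists_common_constant hlow
  have hp1 : (1 : ℝ) ≤ p := one_le_natCast_prime
  obtain ⟨l, hl, hlk, hbil⟩ := hD.exists_bilinearDecoupling hk hkp hC (hε₀.le.trans hη) hε
    (hn.trans (mul_le_mul_of_nonneg_right hη (by positivity))) hloss hlow
  refine hD.of_bilinear (E := C ^ (n + 1) * (p : ℝ) ^ ((k.factorial ^ (n + 1) : ℕ) : ℝ))
    hkp hl hlk (Nat.mul_pos (pow_pos (Nat.factorial_pos k) _)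
    (pow_pos (by omega) _)) hC (by positivity) (hε₀.le.trans hη) (hε₀.le.trans (le_max_right _ _))
    (hp.trans (Real.rpow_le_rpow_of_exponent_le hp1 (le_max_right _ _)))
    fun m hm => (hbil m hm).mono ?_
  refine mul_le_mul_of_nonneg_left (Real.rpow_le_rpow_of_exponent_le hp1 ?_) (by positivity)
  exact mul_le_mul_of_nonneg_right (le_max_left _ _) (by positivity)

lemma decouplingExponent_two_mul_tri (hk : 1 ≤ k) :
    DecouplingExponent p k (2 * tri k : ℕ) := by
  refine ⟨1, le_rfl, fun m => (Decoupling.of_pow hk).mono ?_⟩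
  rw [one_mul, Nat.cast_pow, ← pow_mul, ← Real.rpow_natCast]
  refine Real.rpow_le_rpow_of_exponent_le one_le_natCast_prime ?_
  norm_cast
  rw [mul_comm]
  gcongr
  exact Nat.sub_le _ _

lemma decouplingExponent_one (hε : 0 ≤ ε) : DecouplingExponent p 1 ε := by
  refine ⟨1, le_rfl, fun m => Decoupling.one.mono ?_⟩
  rw [one_mul]
  exact Real.one_le_rpow one_le_natCast_prime (by positivity)

lemma of_iterate_max_sub {P : ℝ → Prop} {δ : ℝ} (hδ : 0 < δ)
    (hstep : ∀ η, ε₀ ≤ η → P η → P (max (η - δ) ε₀)) (hη : ε₀ ≤ η) (h : P η) : P ε₀ := by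
  have hiter : ∀ j : ℕ, P (max (η - j * δ) ε₀) := by
    intro j
    induction j with
    | zero => simpa [hη] using h
    | succ j ih =>
      have hmax : max (η - (j + 1 : ℕ) * δ) ε₀ = max (max (η - j * δ) ε₀ - δ) ε₀ := by
        push_cast
        grind
      rw [hmax]
      exact hstep _ (le_max_right _ _) ih
  obtain ⟨j, hj⟩ := exists_nat_ge ((η - ε₀) / δ)
  rw [div_le_iff₀ hδ] at hj
  have := hiter j
  rwa [max_eq_right (by linarith)] at this

/-- The induction on the dimension only needs the lower-dimensional exponent `1 / (loss k n + 1)`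
for a number of iterations `n` that depends on `k` and `ε`. -/
theorem eventually_decouplingExponent {k : ℕ} (hk : 1 ≤ k) {ε : ℝ} (hε : 0 < ε) :
    ∀ᶠ p : ℕ in Filter.atTop, ∀ _ : Fact p.Prime, DecouplingExponent p k ε := by
  induction k using Nat.strong_induction_on generalizing ε with
  | _ k ih =>
  rcases hk.eq_or_lt with rfl | hk2
  · exact Filter.Eventually.of_forall fun p _ => decouplingExponent_one hε.le
  obtain ⟨n, hn⟩ := exists_nat_ge ((((4 * k * tri k : ℕ) : ℝ) + 2) / (ε / k))
  have hgain : ((4 * k * tri k : ℕ) : ℝ) + 2 ≤ ε * (n / k) := by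
    rw [div_le_iff₀ (by positivity)] at hn
    exact hn.trans_eq (by ring)
  have hL := loss_nonneg k n
  have hloss : 1 / (loss k n + 1) * loss k n ≤ 1 := by
    rw [one_div_mul_eq_div, div_le_one (by positivity)]
    linarith
  have hlow : ∀ᶠ p : ℕ in Filter.atTop, ∀ l ∈ Finset.Ico 1 k, ∀ _ : Fact p.Prime,
      DecouplingExponent p l (1 / (loss k n + 1)) := by
    rw [Filter.eventually_all_finset]
    exact fun l hl => ih l (Finset.mem_Ico.1 hl).2 (Finset.mem_Ico.1 hl).1 (by positivity)
  have hlarge : ∀ᶠ p : ℕ in Filter.atTop, 2 * 4 ^ tri k ≤ (p : ℝ) ^ ε :=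
    ((tendsto_rpow_atTop hε).comp tendsto_natCast_atTop_atTop).eventually_ge_atTop _
  filter_upwards [hlow, hlarge, Filter.eventually_gt_atTop k] with p hlow hlarge hkp hp
  have htrivial := decouplingExponent_two_mul_tri (p := p) hk
  refine of_iterate_max_sub (δ := 1 / (k : ℝ) ^ (n + 1)) (by positivity)
    (fun η hη h => h.improve hk2 hε (by positivity) hgain hloss hkp hlarge
      (fun l hl hlk => hlow l (Finset.mem_Ico.2 ⟨hl, hlk⟩) hp) hη)
    (le_max_left ε _) (htrivial.mono (le_max_right _ _))

end Exponent

/-! ### Vinogradov's mean value theorem -/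

section AddChar
variable {A ι : Type*} [AddCommGroup A]

lemma addChar_sum {M : Type*} [CommMonoid M] (ψ : AddChar A M) (t : Finset ι) (f : ι → A) :
    ψ (∑ i ∈ t, f i) = ∏ i ∈ t, ψ (f i) :=
  map_prod ψ.toMonoidHom (fun i => Multiplicative.ofAdd (f i)) t

lemma sum_addChar_pow {R : Type*} [CommSemiring R] (ψ : AddChar A R) (t : Finset ι) (f : ι → A)
    (s : ℕ) :
    (∑ i ∈ t, ψ (f i)) ^ s = ∑ n ∈ Fintype.piFinset fun _ : Fin s => t, ψ (∑ i, f (n i)) := by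
  simp_rw [Finset.sum_pow', addChar_sum]

lemma norm_sum_addChar_sq (ψ : AddChar A ℂ) (hψ : ∀ a, ‖ψ a‖ = 1) (t : Finset ι) (f : ι → A) :
    ((‖∑ i ∈ t, ψ (f i)‖ ^ 2 : ℝ) : ℂ) = ∑ x ∈ t ×ˢ t, ψ (f x.1 - f x.2) := by
  rw [Complex.ofReal_pow, ← Complex.mul_conj', map_sum, Finset.sum_mul_sum, ← Finset.sum_product']
  refine Finset.sum_congr rfl fun x _ => ?_
  rw [AddChar.map_sub_eq_div, div_eq_mul_inv, Complex.inv_eq_conj (hψ _)]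

end AddChar

/-- The vector of power sums of degrees `0, …, D - 1` of a tuple. -/
def powerSums (D : ℕ) {s : ℕ} (n : Fin s → ℕ) : Fin D → ℕ := fun j => ∑ i, n i ^ (j : ℕ)

/-- The `s`-tuples of integers in `[1, N]`. -/
def tuples (s N : ℕ) : Finset (Fin s → ℕ) := Fintype.piFinset fun _ => Finset.Icc 1 N

/-- The solutions in `[1, N]` of Vinogradov's system: the pairs of `s`-tuples whose power sums of
degrees `0, …, d` agree. -/
def vinogradovSolutions (d s N : ℕ) : Finset ((Fin s → ℕ) × (Fin s → ℕ)) :=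
  (tuples s N ×ˢ tuples s N).filter fun x => powerSums (d + 1) x.1 = powerSums (d + 1) x.2

/-- The character with coefficient vector `α` modulo `q`, evaluated at the point
`(n, n ^ 2, …, n ^ d)` of the moment curve. -/
noncomputable def curveChar {d q : ℕ} [NeZero q] (α : Fin d → ZMod q) (n : ℕ) : ℂ :=
  ZMod.stdAddChar (α ⬝ᵥ fun j => (n : ZMod q) ^ ((j : ℕ) + 1))

section MeanValue
variable {d q : ℕ} [NeZero q]

lemma sum_stdAddChar_dotProduct (z : Fin d → ZMod q) :
    ∑ α : Fin d → ZMod q, (ZMod.stdAddChar (α ⬝ᵥ z) : ℂ) = if z = 0 then (q : ℂ) ^ d else 0 := by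
  simp_rw [dotProduct, addChar_sum]
  rw [← Fintype.piFinset_univ,
    ← Finset.prod_univ_sum (fun _ => Finset.univ) fun j a => (ZMod.stdAddChar (a * z j) : ℂ)]
  simp_rw [AddChar.sum_mulShift _ (ZMod.isPrimitive_stdAddChar q), ZMod.card, Nat.cast_ite,
    Nat.cast_zero]
  rw [Finset.prod_ite_zero]
  simp [funext_iff]

/-- The mean value of the exponential sum modulo `q` counts solutions of the system of congruences
modulo `q`, hence at least the solutions of the system of equations. -/
lemma card_vinogradovSolutions_le_sum_curveChar (s : ℕ) {N P : ℕ} (hNP : N < P) :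
    (q : ℝ) ^ d * (vinogradovSolutions d s N).card ≤
      ∑ α : Fin d → ZMod q, ‖∑ n ∈ range P, curveChar α n‖ ^ (2 * s) := by
  set T := Fintype.piFinset fun _ : Fin s => range P with hT
  set z : (Fin s → ℕ) → Fin d → ZMod q := fun n j => ∑ i, (n i : ZMod q) ^ ((j : ℕ) + 1)
  have hexpand : ∀ α : Fin d → ZMod q, ((‖∑ n ∈ range P, curveChar α n‖ ^ (2 * s) : ℝ) : ℂ) =
      ∑ x ∈ T ×ˢ T, ZMod.stdAddChar (α ⬝ᵥ (z x.1 - z x.2)) := by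
    intro α
    have hz : ∀ n : Fin s → ℕ, ∑ i, α ⬝ᵥ (fun j => (n i : ZMod q) ^ ((j : ℕ) + 1)) = α ⬝ᵥ z n := by
      intro n
      simp only [z, dotProduct, Finset.mul_sum]
      exact Finset.sum_comm
    rw [mul_comm, pow_mul, ← norm_pow]
    simp_rw [curveChar, sum_addChar_pow, hz, dotProduct_sub]
    exact norm_sum_addChar_sq _ (AddChar.norm_apply _) _ _
  have hsum : ∑ α : Fin d → ZMod q, ‖∑ n ∈ range P, curveChar α n‖ ^ (2 * s) =
      ∑ x ∈ T ×ˢ T, if z x.1 - z x.2 = 0 then (q : ℝ) ^ d else 0 := by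
    rw [← Complex.ofReal_inj, Complex.ofReal_sum, Finset.sum_congr rfl fun α _ => hexpand α,
      Finset.sum_comm]
    simp_rw [sum_stdAddChar_dotProduct]
    push_cast
    simp only [apply_ite ((↑) : ℝ → ℂ), Complex.ofReal_pow, Complex.ofReal_natCast,
      Complex.ofReal_zero]
  rw [hsum, ← Finset.sum_filter, Finset.sum_const, nsmul_eq_mul, mul_comm]
  gcongr
  intro x hx
  simp only [vinogradovSolutions, tuples, hT, mem_filter, mem_product, Fintype.mem_piFinset,
    mem_Icc, mem_range, sub_eq_zero] at hx ⊢
  refine ⟨⟨fun i => (hx.1.1 i).2.trans_lt hNP, fun i => (hx.1.2 i).2.trans_lt hNP⟩, ?_⟩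
  funext j
  simpa [powerSums, z] using congrArg (Nat.cast : ℕ → ZMod q) (congrFun hx.2 j.succ)

lemma isMomentSystem_curveChar (p : ℕ) [Fact p.Prime] (d B : ℕ) (s : Finset ℕ) :
    IsMomentSystem p d B (fun _ => 1) s id
      fun n (α : Fin d → ZMod (p ^ B)) => curveChar α n := by
  refine ⟨fun j => Polynomial.X ^ ((j : ℕ) + 1), fun j => ⟨0, by simp⟩, fun v =>
    ⟨Equiv.addRight fun j => PadicInt.toZModPow B (v j), fun _ => rfl, 1, norm_one,
      fun n _ α => ?_⟩⟩
  simp only [curveChar, levelChar_apply, Equiv.coe_addRight, add_dotProduct,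
    AddChar.map_add_eq_mul, map_sum, map_mul, Polynomial.eval_pow, Polynomial.eval_X, map_pow,
    map_natCast, id, one_mul]
  rw [mul_comm]
  rfl

lemma norm_curveChar (α : Fin d → ZMod q) (n : ℕ) : ‖curveChar α n‖ = 1 := AddChar.norm_apply _ _

/-- The decoupling inequality for the family of all characters, whose pieces at the finest scale are
single characters. -/
lemma Decoupling.sum_curveChar_le {p : ℕ} [Fact p.Prime] {m : ℕ} {D : ℝ} (hd : 1 ≤ d)
    (h : Decoupling p d m D) :
    ∑ α : Fin d → ZMod (p ^ (m * d)), ‖∑ n ∈ range (p ^ m), curveChar α n‖ ^ (2 * tri d) ≤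
      D * ((p ^ m : ℝ) ^ tri d * ((p ^ (m * d) : ℕ) : ℝ) ^ d) := by
  have ht : tri d ≠ 0 := Nat.one_le_iff_ne_zero.1 (tri_pos hd)
  set Q : ℝ := ((p ^ (m * d) : ℕ) : ℝ) ^ d with hQ
  have hQ0 : 0 ≤ Q := by positivity
  let c : DecouplingData p d m :=
    { Ω := Fin d → ZMod (p ^ (m * d))
      ι := ℕ
      fintype := inferInstance
      weight _ := 1
      weight_nonneg _ := zero_le_one
      index := range (p ^ m)
      loc := id
      F n α := curveChar α n
      bound _ := Q ^ ((tri d : ℝ)⁻¹)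
      bound_nonneg _ := by positivity
      isMomentSystem := isMomentSystem_curveChar p d (m * d) _
      moment_le r hr := by
        rw [residueClass_range_id hr, Real.rpow_inv_natCast_pow hQ0 ht]
        simp [norm_curveChar, hQ] }
  have hdec := h c
  have hmass : c.mass 0 0 = (p : ℝ) ^ m * Q ^ ((tri d : ℝ)⁻¹) := by
    simp [c.mass_zero, c]
  simp_rw [hmass, mul_pow, Real.rpow_inv_natCast_pow hQ0 ht, c.piece_zero] at hdec
  simpa only [c, one_mul] using hdec

end MeanValue

theorem exists_card_vinogradovSolutions_le {d : ℕ} (hd : 1 ≤ d) {ε : ℝ} (hε : 0 < ε) :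
    ∃ C : ℝ, 0 < C ∧ ∀ N : ℕ, 1 ≤ N →
      ((vinogradovSolutions d (tri d) N).card : ℝ) ≤ C * (N : ℝ) ^ ((tri d : ℝ) + ε) := by
  obtain ⟨p₀, hp₀⟩ := Filter.eventually_atTop.1 (eventually_decouplingExponent hd hε)
  obtain ⟨p, hp, hprime⟩ := Nat.exists_infinite_primes p₀
  have : Fact p.Prime := ⟨hprime⟩
  obtain ⟨C, hC, hD⟩ := hp₀ p hp this
  have hpos : (0 : ℝ) < p := by exact_mod_cast hprime.pos
  refine ⟨C * (p : ℝ) ^ ((tri d : ℝ) + ε), by positivity, fun N hN => ?_⟩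
  set m := Nat.log p N + 1 with hm
  have hlt : N < p ^ m := Nat.lt_pow_succ_log_self hprime.one_lt N
  have hle : p ^ m ≤ p * N := by
    rw [hm, pow_succ, mul_comm]
    exact Nat.mul_le_mul_left _ (Nat.pow_log_le_self p (by omega))
  have hmean := (card_vinogradovSolutions_le_sum_curveChar (q := p ^ (m * d)) (d := d) (tri d)
    hlt).trans ((hD m).sum_curveChar_le hd)
  have hpow : (p : ℝ) ^ (ε * m) * ((p : ℝ) ^ m) ^ tri d = ((p : ℝ) ^ m) ^ ((tri d : ℝ) + ε) := by
    rw [add_comm, Real.rpow_add (by positivity), Real.rpow_natCast, ← Real.rpow_natCast (p : ℝ) m,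
      ← Real.rpow_mul hpos.le, mul_comm ε]
  have hQ : (0 : ℝ) < ((p ^ (m * d) : ℕ) : ℝ) ^ d := by
    have := pow_pos hprime.pos (m * d)
    positivity
  calc ((vinogradovSolutions d (tri d) N).card : ℝ)
      ≤ C * (p : ℝ) ^ (ε * m) * ((p : ℝ) ^ m) ^ tri d :=
        le_of_mul_le_mul_left (hmean.trans_eq (by ring)) hQ
    _ = C * ((p : ℝ) ^ m) ^ ((tri d : ℝ) + ε) := by rw [mul_assoc, hpow]
    _ ≤ C * ((p : ℝ) * N) ^ ((tri d : ℝ) + ε) := by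
        gcongr
        exact_mod_cast hle
    _ = C * (p : ℝ) ^ ((tri d : ℝ) + ε) * (N : ℝ) ^ ((tri d : ℝ) + ε) := by
        rw [Real.mul_rpow hpos.le (Nat.cast_nonneg _), mul_assoc]

/-! ### Weyl sums with almost every leading coefficient -/

lemma e_add (x y : ℝ) : e (x + y) = e x * e y := by
  rw [e, e, e, ← Complex.exp_add]
  push_cast
  ring_nf

lemma norm_e (x : ℝ) : ‖e x‖ = 1 := by
  rw [e, show (2 * Real.pi * Complex.I * x : ℂ) = ((2 * Real.pi * x : ℝ) : ℂ) * Complex.I by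
    push_cast; ring]
  exact Complex.norm_exp_ofReal_mul_I _

lemma e_intCast (k : ℤ) : e k = 1 := by
  rw [e, Complex.exp_eq_one_iff]
  exact ⟨k, by push_cast; ring⟩

lemma e_zero : e 0 = 1 := by simpa using e_intCast 0

@[fun_prop]
lemma continuous_e : Continuous e := by
  unfold e
  fun_prop

/-- The function `e`, bundled as an additive character. -/
noncomputable def eChar : AddChar ℝ ℂ where
  toFun := e
  map_zero_eq_one' := e_zero
  map_add_eq_mul' := e_add

lemma e_intCast_mul (k : ℤ) (x : ℝ) :
    e (k * x) = Complex.exp ((2 * Real.pi * Complex.I * k : ℂ) * x) := by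
  rw [e]
  push_cast
  ring_nf

lemma integral_e_intCast_mul (k : ℤ) :
    ∫ x in (0 : ℝ)..1, e (k * x) = if k = 0 then 1 else 0 := by
  split_ifs with hk
  · simp [hk, e_zero]
  · have hc : (2 * Real.pi * Complex.I * k : ℂ) ≠ 0 := by
      simp [hk, Real.pi_ne_zero]
    simp_rw [e_intCast_mul]
    rw [integral_exp_mul_complex hc, ← e_intCast_mul, ← e_intCast_mul, mul_one, mul_zero,
      e_intCast, e_zero, sub_self, zero_div]

section SquareFunction
variable {d s N : ℕ}

/-- The part of the `s`-th power of a Weyl sum of degree `d` and leading coefficient `x` that comes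
from the tuples with the vector `v` of lower power sums, without its factor depending on the lower
coefficients. -/
noncomputable def fiberSum (d s N : ℕ) (v : Fin d → ℕ) (x : ℝ) : ℂ :=
  ∑ n ∈ (tuples s N).filter (powerSums d · = v), e (x * ((∑ i, n i ^ d : ℕ) : ℝ))

/-- The sum of `‖fiberSum d s N v x‖ ^ 2` over all possible `v`: a majorant, free of the lower
coefficients, for powers of Weyl sums with leading coefficient `x`. -/
noncomputable def squareFunction (d s N : ℕ) (x : ℝ) : ℝ :=
  ∑ v ∈ (tuples s N).image (powerSums d), ‖fiberSum d s N v x‖ ^ 2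

lemma squareFunction_nonneg (d s N : ℕ) (x : ℝ) : 0 ≤ squareFunction d s N x :=
  Finset.sum_nonneg fun _ _ => by positivity

@[fun_prop]
lemma continuous_fiberSum (v : Fin d → ℕ) : Continuous (fiberSum d s N v) := by
  unfold fiberSum
  fun_prop

@[fun_prop]
lemma continuous_squareFunction (d s N : ℕ) : Continuous (squareFunction d s N) := by
  unfold squareFunction
  fun_prop

lemma sum_fin_val_add_self (d : ℕ) : ∑ j : Fin d, (j : ℕ) + d = tri d := by
  rw [Fin.sum_univ_eq_sum_range fun j => j, ← Finset.sum_range_succ, Finset.sum_range_id, tri,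
    Nat.add_sub_cancel, mul_comm]

lemma card_image_powerSums_le (d s : ℕ) (hN : 1 ≤ N) :
    ((tuples s N).image (powerSums d)).card ≤ (s + 1) ^ d * N ^ (tri d - d) := by
  have hsub : (tuples s N).image (powerSums d) ⊆
      Fintype.piFinset fun j : Fin d => range (s * N ^ (j : ℕ) + 1) := by
    intro v hv
    obtain ⟨n, hn, rfl⟩ := mem_image.1 hv
    simp only [tuples, Fintype.mem_piFinset, mem_Icc] at hn
    simp only [Fintype.mem_piFinset, mem_range, powerSums, Nat.lt_succ_iff]
    intro j
    simpa using Finset.sum_le_card_nsmul univ _ _ fun i _ =>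
      Nat.pow_le_pow_left (hn i).2 (j : ℕ)
  calc ((tuples s N).image (powerSums d)).card
      ≤ ∏ j : Fin d, (s * N ^ (j : ℕ) + 1) := by
        simpa [Fintype.card_piFinset] using card_le_card hsub
    _ ≤ ∏ j : Fin d, ((s + 1) * N ^ (j : ℕ)) := by
        gcongr with j
        rw [add_one_mul]
        exact Nat.add_le_add_left (Nat.one_le_pow _ _ hN) _
    _ = (s + 1) ^ d * N ^ (tri d - d) := by
        rw [Finset.prod_mul_distrib, Finset.prod_pow_eq_pow_sum,
          Nat.eq_sub_of_add_eq (sum_fin_val_add_self d)]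
        simp

lemma sum_eval_eq_powerSums {P : Polynomial ℝ} (hP : P.natDegree ≤ d) (n : Fin s → ℕ) :
    ∑ i, P.eval (n i : ℝ) =
      ∑ j : Fin d, P.coeff j * (powerSums d n j : ℝ) + P.coeff d * ((∑ i, n i ^ d : ℕ) : ℝ) := by
  simp_rw [Polynomial.eval_eq_sum_range' (Nat.lt_succ_of_le hP), Finset.sum_range_succ,
    Finset.sum_add_distrib, ← Finset.mul_sum]
  rw [Finset.sum_comm, ← Fin.sum_univ_eq_sum_range fun j => ∑ i, P.coeff j * (n i : ℝ) ^ j]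
  simp [powerSums, Finset.mul_sum]

/-- Grouping the tuples by their lower power sums and applying Cauchy–Schwarz removes the lower
coefficients. -/
lemma norm_sum_e_eval_pow_le (s : ℕ) (hN : 1 ≤ N) {P : Polynomial ℝ} (hP : P.natDegree ≤ d) :
    ‖∑ n ∈ Icc 1 N, e (P.eval (n : ℝ))‖ ^ (2 * s) ≤
      (s + 1 : ℝ) ^ d * (N : ℝ) ^ (tri d - d) * squareFunction d s N (P.coeff d) := by
  set V := (tuples s N).image (powerSums d)
  have hpow : (∑ n ∈ Icc 1 N, e (P.eval (n : ℝ))) ^ s =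
      ∑ v ∈ V, e (∑ j : Fin d, P.coeff j * (v j : ℝ)) * fiberSum d s N v (P.coeff d) := by
    refine (sum_addChar_pow eChar (Icc 1 N) (fun n : ℕ => P.eval (n : ℝ)) s).trans ?_
    rw [← tuples, ← Finset.sum_fiberwise_of_maps_to (t := V) (g := powerSums d)
      fun n hn => mem_image_of_mem _ hn]
    refine Finset.sum_congr rfl fun v _ => ?_
    rw [fiberSum, Finset.mul_sum]
    refine Finset.sum_congr rfl fun n hn => ?_
    obtain ⟨_, rfl⟩ := mem_filter.1 hn
    rw [sum_eval_eq_powerSums hP, ← e_add]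
    rfl
  calc ‖∑ n ∈ Icc 1 N, e (P.eval (n : ℝ))‖ ^ (2 * s)
      = ‖∑ v ∈ V, e (∑ j : Fin d, P.coeff j * (v j : ℝ)) * fiberSum d s N v (P.coeff d)‖ ^ 2 := by
        rw [mul_comm, pow_mul, ← norm_pow, hpow]
    _ ≤ (∑ v ∈ V, ‖fiberSum d s N v (P.coeff d)‖) ^ 2 := by
        gcongr
        refine (norm_sum_le _ _).trans_eq (Finset.sum_congr rfl fun v _ => ?_)
        rw [norm_mul, norm_e, one_mul]
    _ ≤ V.card * squareFunction d s N (P.coeff d) := sq_sum_le_card_mul_sum_sq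
    _ ≤ _ := by
        refine mul_le_mul_of_nonneg_right ?_ (squareFunction_nonneg d s N _)
        exact_mod_cast card_image_powerSums_le d s hN

lemma integral_norm_sq_sum_e {ι : Type*} (T : Finset ι) (f : ι → ℤ) {h : ℕ} (hh : h ≠ 0) :
    ∫ x in (0 : ℝ)..1, ‖∑ i ∈ T, e (h * x * f i)‖ ^ 2 =
      ((T ×ˢ T).filter fun q => f q.1 = f q.2).card := by
  have hsq : ∀ x : ℝ, ((‖∑ i ∈ T, e (h * x * f i)‖ ^ 2 : ℝ) : ℂ) =
      ∑ q ∈ T ×ˢ T, e (((h * (f q.1 - f q.2) : ℤ) : ℝ) * x) := by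
    intro x
    refine (norm_sum_addChar_sq eChar norm_e T fun i => h * x * f i).trans ?_
    refine Finset.sum_congr rfl fun q _ => congrArg e ?_
    push_cast
    ring
  rw [← Complex.ofReal_inj, ← intervalIntegral.integral_ofReal]
  simp_rw [hsq]
  rw [intervalIntegral.integral_finsetSum
    fun q _ => Continuous.intervalIntegrable (by fun_prop) _ _]
  simp_rw [integral_e_intCast_mul]
  simp [sub_eq_zero, hh]

lemma powerSums_succ_eq_iff {n n' : Fin s → ℕ} :
    powerSums (d + 1) n = powerSums (d + 1) n' ↔
      powerSums d n = powerSums d n' ∧ ∑ i, n i ^ d = ∑ i, n' i ^ d := by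
  simp only [funext_iff, Fin.forall_fin_succ', powerSums, Fin.val_castSucc, Fin.val_last]

/-- Orthogonality: the mean of the square function counts the solutions of Vinogradov's system. -/
lemma integral_squareFunction (d s N : ℕ) {h : ℕ} (hh : h ≠ 0) :
    ∫ x in (0 : ℝ)..1, squareFunction d s N (h * x) = (vinogradovSolutions d s N).card := by
  have hfiber : ∀ v : Fin d → ℕ, ∫ x in (0 : ℝ)..1, ‖fiberSum d s N v (h * x)‖ ^ 2 =
      ((vinogradovSolutions d s N).filter fun q => powerSums d q.1 = v).card := by
    intro v
    refine (integral_norm_sq_sum_e ((tuples s N).filter (powerSums d · = v))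
      (fun n => ((∑ i, n i ^ d : ℕ) : ℤ)) hh).trans ?_
    congr 2
    ext q
    simp only [vinogradovSolutions, mem_filter, mem_product, powerSums_succ_eq_iff, Nat.cast_inj]
    grind
  unfold squareFunction
  rw [intervalIntegral.integral_finsetSum
    fun v _ => Continuous.intervalIntegrable (by fun_prop) _ _]
  simp_rw [hfiber]
  rw [Finset.card_eq_sum_card_fiberwise (f := fun q => powerSums d q.1)
    (t := (tuples s N).image (powerSums d)), Nat.cast_sum]
  exact fun q hq => mem_coe.2 (mem_image_of_mem _ (mem_product.1 (mem_filter.1 hq).1).1)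

end SquareFunction

lemma ae_bddAbove_of_summable_integral {α : Type*} [MeasurableSpace α] {μ : Measure α}
    {f : ℕ → α → ℝ} (hf : ∀ j, Integrable (f j) μ) (hf0 : ∀ j x, 0 ≤ f j x)
    (hsum : Summable fun j => ∫ x, f j x ∂μ) :
    ∀ᵐ x ∂μ, BddAbove (Set.range fun j => f j x) := by
  have hmeas : ∀ j, AEMeasurable (fun x => ENNReal.ofReal (f j x)) μ := fun j =>
    (hf j).aemeasurable.ennreal_ofReal
  have htop : ∫⁻ x, ∑' j, ENNReal.ofReal (f j x) ∂μ ≠ ⊤ := by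
    simp_rw [lintegral_tsum hmeas, ← ofReal_integral_eq_lintegral_ofReal (hf _)
      (Filter.Eventually.of_forall (hf0 _))]
    exact hsum.tsum_ofReal_ne_top
  filter_upwards [ae_lt_top' (AEMeasurable.tsum hmeas) htop] with x hx
  refine ⟨(∑' j, ENNReal.ofReal (f j x)).toReal, ?_⟩
  rintro _ ⟨j, rfl⟩
  exact (ENNReal.ofReal_le_iff_le_toReal hx.ne).1 (ENNReal.le_tsum j)

section AlmostEverywhere
variable {d : ℕ}

/-- A union bound over the `j` frequencies; by Vinogradov's mean value theorem the mean of
`∑ h ≤ j, squareFunction d (tri d) (j ^ (d + 2)) (h * x)`, divided by the bound below, is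
`O (j ^ (-(1 + η)))`, which is summable. -/
lemma ae_squareFunction_le (hd : 1 ≤ d) {η : ℝ} (hη : 0 < η) :
    ∀ᵐ x ∂volume.restrict (Set.Icc (0 : ℝ) 1), ∃ B : ℝ, 0 ≤ B ∧ ∀ j : ℕ, ∀ h ∈ Icc 1 j,
      squareFunction d (tri d) (j ^ (d + 2)) (h * x) ≤
        B * ((j : ℝ) ^ (2 + η) * ((j ^ (d + 2) : ℕ) : ℝ) ^ (tri d + η)) := by
  obtain ⟨C, hC, hcard⟩ := exists_card_vinogradovSolutions_le hd hη
  set W : ℕ → ℝ := fun j => (j : ℝ) ^ (2 + η) * ((j ^ (d + 2) : ℕ) : ℝ) ^ (tri d + η) with hW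
  set Φ : ℕ → ℝ → ℝ := fun j x =>
    (∑ h ∈ Icc 1 j, squareFunction d (tri d) (j ^ (d + 2)) (h * x)) / W j with hΦ
  have hΦ0 : ∀ j x, 0 ≤ Φ j x := fun j x => div_nonneg
    (Finset.sum_nonneg fun h _ => squareFunction_nonneg _ _ _ _) (by positivity)
  have hmean : ∀ j, ∫ x in Set.Icc (0 : ℝ) 1, Φ j x ≤ C * (1 / (j : ℝ) ^ (1 + η)) := by
    intro j
    rw [integral_Icc_eq_integral_Ioc, ← intervalIntegral.integral_of_le zero_le_one]
    simp only [hΦ]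
    rw [intervalIntegral.integral_div, intervalIntegral.integral_finsetSum
      fun h _ => Continuous.intervalIntegrable (by fun_prop) _ _,
      Finset.sum_congr rfl fun h hh => integral_squareFunction d (tri d) (j ^ (d + 2))
        (Nat.one_le_iff_ne_zero.1 (mem_Icc.1 hh).1)]
    rcases j.eq_zero_or_pos with rfl | hj
    · simpa using mul_nonneg hC.le (inv_nonneg.2 (Real.zero_rpow_nonneg _))
    have hj0 : (0 : ℝ) < j := by exact_mod_cast hj
    have hN := hcard (j ^ (d + 2)) (Nat.one_le_pow _ _ hj)
    rw [div_le_iff₀ (by positivity), Finset.sum_const, Nat.card_Icc, nsmul_eq_mul,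
      Nat.add_sub_cancel]
    calc (j : ℝ) * (vinogradovSolutions d (tri d) (j ^ (d + 2))).card
        ≤ (j : ℝ) * (C * ((j ^ (d + 2) : ℕ) : ℝ) ^ (tri d + η)) := by gcongr
      _ = C * (1 / (j : ℝ) ^ (1 + η)) * W j := by
        simp only [hW]
        rw [show (2 : ℝ) + η = 1 + (1 + η) by ring, Real.rpow_add hj0 1 (1 + η), Real.rpow_one]
        field_simp
  have hsum : Summable fun j => ∫ x in Set.Icc (0 : ℝ) 1, Φ j x :=
    .of_nonneg_of_le (fun j => integral_nonneg (hΦ0 j)) hmean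
      ((Real.summable_one_div_nat_rpow.2 (by linarith)).mul_left C)
  have hΦint : ∀ j, IntegrableOn (Φ j) (Set.Icc 0 1) := fun j =>
    Continuous.integrableOn_Icc (by fun_prop)
  filter_upwards [ae_bddAbove_of_summable_integral hΦint hΦ0 hsum] with x ⟨B, hB⟩
  have hle : ∀ j, Φ j x ≤ B := fun j => hB ⟨j, rfl⟩
  refine ⟨B, (hΦ0 0 x).trans (hle 0), fun j h hh => ?_⟩
  have hj : 0 < j := (mem_Icc.1 hh).1.trans (mem_Icc.1 hh).2
  have hsingle := Finset.single_le_sum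
    (f := fun h : ℕ => squareFunction d (tri d) (j ^ (d + 2)) (h * x))
    (fun _ _ => squareFunction_nonneg _ _ _ _) hh
  exact hsingle.trans ((div_le_iff₀ (by positivity)).1 (hle j))

/-- Up to the terms in `η` and `ε` the two sides differ by `d - 2`; this is the room for the factor
`j ^ 2` lost in the union bound over the frequencies. -/
lemma weylExponent_le (hd : 2 ≤ d) {η : ℝ} (hη : 0 ≤ η) :
    ((d : ℝ) + 2) * (tri d - d) + (2 + η) + ((d : ℝ) + 2) * (tri d + η) ≤
      ((d : ℝ) + 1 + (d + 3) * η) * (2 * tri d) := by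
  have hd2 : (2 : ℝ) ≤ d := by exact_mod_cast hd
  have htri : (2 * tri d : ℝ) = d * (d + 1) := by exact_mod_cast two_mul_tri d
  have htri1 : (1 : ℝ) ≤ tri d := by exact_mod_cast tri_pos (by omega : 1 ≤ d)
  have hη_le : (d + 3) * η ≤ (d + 3) * η * (2 * tri d) :=
    le_mul_of_one_le_right (by positivity) (by linarith)
  linarith

theorem ae_norm_sum_e_eval_le (hd : 2 ≤ d) {ε : ℝ} (hε : 0 < ε) :
    ∀ᵐ x ∂volume.restrict (Set.Icc (0 : ℝ) 1), ∃ K : ℝ, 1 ≤ K ∧ ∀ j : ℕ, ∀ h ∈ Icc 1 j,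
      ∀ P : Polynomial ℝ, P.natDegree ≤ d → P.coeff d = h * x →
        ‖∑ n ∈ Icc 1 (j ^ (d + 2)), e (P.eval (n : ℝ))‖ ≤ K * (j : ℝ) ^ ((d : ℝ) + 1 + ε) := by
  set η : ℝ := ε / (d + 3) with hη
  have hηε : (d + 3) * η = ε := by rw [hη]; field_simp
  set t := tri d with ht
  have ht1 : 1 ≤ t := tri_pos (by omega)
  have htd : d ≤ t := by rw [ht, ← sum_fin_val_add_self]; exact Nat.le_add_left _ _
  filter_upwards [ae_squareFunction_le (d := d) (by omega) (by positivity : 0 < η)]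
    with x ⟨B, hB0, hB⟩
  set K : ℝ := (t + 1 : ℝ) ^ d * B + 1
  have hK1 : 1 ≤ K := le_add_of_nonneg_left (by positivity)
  refine ⟨K, hK1, fun j h hh P hP hcoeff => ?_⟩
  have hj : 1 ≤ j := (mem_Icc.1 hh).1.trans (mem_Icc.1 hh).2
  have hj1 : (1 : ℝ) ≤ j := by exact_mod_cast hj
  have hj0 : (0 : ℝ) < j := by linarith
  have hN : ((j ^ (d + 2) : ℕ) : ℝ) = (j : ℝ) ^ ((d : ℝ) + 2) := by exact_mod_cast rfl
  refine le_of_pow_le_pow_left₀ (n := 2 * t) (by omega) (by positivity) ?_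
  have hexponent : ((d : ℝ) + 2) * (t - d) + (2 + η) + ((d : ℝ) + 2) * (t + η) ≤
      ((d : ℝ) + 1 + ε) * (2 * t) := by
    rw [← hηε]
    exact weylExponent_le hd (by positivity)
  calc ‖∑ n ∈ Icc 1 (j ^ (d + 2)), e (P.eval (n : ℝ))‖ ^ (2 * t)
      ≤ (t + 1 : ℝ) ^ d * ((j ^ (d + 2) : ℕ) : ℝ) ^ (t - d) *
          (B * ((j : ℝ) ^ (2 + η) * ((j ^ (d + 2) : ℕ) : ℝ) ^ (t + η))) := by
        refine (norm_sum_e_eval_pow_le t (Nat.one_le_pow _ _ hj) hP).trans ?_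
        rw [hcoeff]
        gcongr
        exact hB j h hh
    _ = (t + 1 : ℝ) ^ d * B *
          (j : ℝ) ^ (((d : ℝ) + 2) * (t - d) + (2 + η) + ((d : ℝ) + 2) * (t + η)) := by
        rw [Real.rpow_add hj0 (((d : ℝ) + 2) * (t - d) + (2 + η)),
          Real.rpow_add hj0 (((d : ℝ) + 2) * (t - d)), Real.rpow_mul hj0.le, Real.rpow_mul hj0.le,
          ← hN, ← Nat.cast_sub htd, Real.rpow_natCast]
        ring
    _ ≤ K * (j : ℝ) ^ (((d : ℝ) + 1 + ε) * (2 * t)) :=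
        mul_le_mul (le_add_of_nonneg_right zero_le_one)
          (Real.rpow_le_rpow_of_exponent_le hj1 hexponent) (by positivity) (by positivity)
    _ ≤ K ^ (2 * t) * (j : ℝ) ^ (((d : ℝ) + 1 + ε) * (2 * t)) := by
        gcongr
        exact le_self_pow₀ hK1 (by omega)
    _ = (K * (j : ℝ) ^ ((d : ℝ) + 1 + ε)) ^ (2 * t) := by
        rw [mul_pow, Real.rpow_mul hj0.le]
        exact_mod_cast rfl

end AlmostEverywhere

/-! ### An inequality of Erdős–Turán type -/

lemma conj_e (x : ℝ) : (starRingEnd ℂ) (e x) = e (-x) := by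
  simp [e, ← Complex.exp_conj, Complex.conj_ofNat]

lemma four_mul_abs_sub_round_le_norm_e_sub_one (t : ℝ) : 4 * |t - round t| ≤ ‖e t - 1‖ := by
  set s := t - round t
  have he : e t = e s := by
    rw [← sub_add_cancel t (round t : ℝ), e_add, e_intCast, mul_one]
  have hsin : ‖e s - 1‖ = 2 * |Real.sin (Real.pi * s)| := by
    rw [e, show (2 * Real.pi * Complex.I * s : ℂ) = Complex.I * ((2 * Real.pi * s : ℝ) : ℂ) by
      push_cast; ring, Complex.norm_exp_I_mul_ofReal_sub_one, norm_mul, Real.norm_eq_abs,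
      Real.norm_eq_abs, show 2 * Real.pi * s / 2 = Real.pi * s by ring, abs_two]
  have habs : |Real.pi * s| = Real.pi * |s| := by rw [abs_mul, abs_of_pos Real.pi_pos]
  have hjordan : 2 / Real.pi * |Real.pi * s| ≤ |Real.sin (Real.pi * s)| := by
    refine Real.mul_abs_le_abs_sin ?_
    rw [habs]
    linarith [mul_le_mul_of_nonneg_left (abs_sub_round t) Real.pi_pos.le]
  rw [habs, ← mul_assoc, div_mul_cancel₀ _ Real.pi_ne_zero] at hjordan
  rw [he, hsin]
  linarith

/-- The indicator function of the half-open arc `[0, β)` modulo `1`. -/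
noncomputable def arcIndicator (β u : ℝ) : ℝ := if Int.fract u < β then 1 else 0

lemma arcIndicator_nonneg (β u : ℝ) : 0 ≤ arcIndicator β u := by
  unfold arcIndicator
  split_ifs <;> norm_num

lemma arcIndicator_le_one (β u : ℝ) : arcIndicator β u ≤ 1 := by
  unfold arcIndicator
  split_ifs <;> norm_num

lemma measurable_arcIndicator (β : ℝ) : Measurable (arcIndicator β) :=
  Measurable.ite (measurableSet_lt measurable_fract measurable_const) measurable_const
    measurable_const

lemma intervalIntegrable_arcIndicator_smul {E : Type*} [NormedAddCommGroup E] [NormedSpace ℝ E]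
    (β z : ℝ) {φ : ℝ → E} (hφ : Continuous φ) :
    IntervalIntegrable (fun t => arcIndicator β (z + t) • φ t) volume 0 1 := by
  refine (hφ.intervalIntegrable 0 1).mono_fun ?_ (Filter.Eventually.of_forall fun t => ?_)
  · exact ((measurable_arcIndicator β).comp (measurable_const_add z)).aestronglyMeasurable.smul
      hφ.aestronglyMeasurable
  · beta_reduce
    rw [norm_smul, Real.norm_of_nonneg (arcIndicator_nonneg _ _)]
    exact mul_le_of_le_one_left (norm_nonneg _) (arcIndicator_le_one _ _)

/-- The Fourier coefficient of `arcIndicator β` at the frequency `-h`. -/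
noncomputable def arcCoeff (β : ℝ) (h : ℤ) : ℂ := ∫ t in (0 : ℝ)..β, e (h * t)

lemma arcCoeff_zero (β : ℝ) : arcCoeff β 0 = β := by simp [arcCoeff, e_zero]

lemma norm_arcCoeff_le (β : ℝ) {h : ℤ} (hh : h ≠ 0) : ‖arcCoeff β h‖ ≤ 1 / (h.natAbs : ℝ) := by
  have hc : (2 * Real.pi * Complex.I * h : ℂ) ≠ 0 := by simp [hh, Real.pi_ne_zero]
  have hnorm : ‖(2 * Real.pi * Complex.I * h : ℂ)‖ = 2 * Real.pi * h.natAbs := by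
    simp [Real.pi_pos.le, Nat.cast_natAbs]
  have hh0 : (0 : ℝ) < h.natAbs := by exact_mod_cast Int.natAbs_pos.2 hh
  have hdiff : ‖e (h * β) - e (h * (0 : ℝ))‖ ≤ 2 :=
    (norm_sub_le _ _).trans_eq (by rw [norm_e, norm_e]; norm_num)
  unfold arcCoeff
  simp_rw [e_intCast_mul]
  rw [integral_exp_mul_complex hc, ← e_intCast_mul, ← e_intCast_mul, norm_div, hnorm,
    div_le_div_iff₀ (by positivity) hh0]
  nlinarith [Real.pi_gt_three]

lemma integral_arcIndicator_smul_e {β : ℝ} (hβ0 : 0 ≤ β) (hβ1 : β ≤ 1) (z : ℝ) (h : ℤ) :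
    ∫ t in (0 : ℝ)..1, arcIndicator β (z + t) • e (h * t) = e (-(h * z)) * arcCoeff β h := by
  set φ : ℝ → ℂ := fun t => arcIndicator β t • e (h * t) with hφ
  have hperiodic : Function.Periodic φ 1 := by
    intro t
    simp only [hφ, arcIndicator, Int.fract_add_one]
    rw [mul_add, e_add, mul_one, e_intCast, mul_one]
  have hshift : ∀ t : ℝ, arcIndicator β (z + t) • e (h * t) = e (-(h * z)) * φ (z + t) := by
    intro t
    simp only [hφ]
    rw [mul_smul_comm, ← e_add]
    congr 2
    ring
  have hindicator : ∀ t ∈ Set.Ico (0 : ℝ) 1,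
      φ t = (Set.Ico 0 β).indicator (fun t : ℝ => e (h * t)) t := by
    intro t ht
    simp only [hφ, arcIndicator, Int.fract_eq_self.2 ht, Set.indicator, Set.mem_Ico, ht.1, true_and]
    split_ifs <;> simp
  simp_rw [hshift]
  rw [intervalIntegral.integral_const_mul, intervalIntegral.integral_comp_add_left φ z,
    add_zero, hperiodic.intervalIntegral_add_eq z 0, zero_add,
    intervalIntegral.integral_of_le zero_le_one, ← integral_Ico_eq_integral_Ioc,
    setIntegral_congr_fun measurableSet_Ico hindicator, setIntegral_indicator measurableSet_Ico,
    Set.Ico_inter_Ico, max_self, min_eq_right hβ1, arcCoeff, intervalIntegral.integral_of_le hβ0,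
    integral_Ico_eq_integral_Ioc]

/-- The trigonometric polynomial of degree less than `n` with real coefficients `w`. -/
noncomputable def trigPoly (w : ℕ → ℝ) (n : ℕ) (t : ℝ) : ℂ := ∑ k ∈ range n, w k * e (k * t)

@[fun_prop]
lemma continuous_trigPoly (w : ℕ → ℝ) (n : ℕ) : Continuous (trigPoly w n) := by
  unfold trigPoly
  fun_prop

lemma sq_norm_trigPoly (w : ℕ → ℝ) (n : ℕ) (t : ℝ) : ((‖trigPoly w n t‖ ^ 2 : ℝ) : ℂ) =
    ∑ q ∈ range n ×ˢ range n, ((w q.1 * w q.2 : ℝ) : ℂ) * e ((((q.1 : ℤ) - q.2 : ℤ) : ℝ) * t) := by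
  push_cast
  rw [← Complex.mul_conj', trigPoly, map_sum, Finset.sum_mul_sum, ← Finset.sum_product']
  refine Finset.sum_congr rfl fun q _ => ?_
  rw [map_mul, conj_e, Complex.conj_ofReal, mul_mul_mul_comm, ← e_add]
  congr 2
  ring

lemma integral_sq_norm_trigPoly (w : ℕ → ℝ) (n : ℕ) :
    ∫ t in (0 : ℝ)..1, ‖trigPoly w n t‖ ^ 2 = ∑ k ∈ range n, w k ^ 2 := by
  rw [← Complex.ofReal_inj, ← intervalIntegral.integral_ofReal]
  simp_rw [sq_norm_trigPoly]
  rw [intervalIntegral.integral_finsetSum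
    fun q _ => Continuous.intervalIntegrable (by fun_prop) _ _]
  simp_rw [intervalIntegral.integral_const_mul, integral_e_intCast_mul, sub_eq_zero,
    Int.natCast_inj]
  push_cast
  rw [Finset.sum_product]
  refine Finset.sum_congr rfl fun k hk => ?_
  simp [mem_range.1 hk, sq]

/-- Multiplication by `e t - 1` is summation by parts. -/
lemma norm_trigPoly_mul_norm_e_sub_one {w : ℕ → ℝ} {n : ℕ} (h0 : w 0 = 0) (hn : w n = 0) (t : ℝ) :
    ‖trigPoly w n t‖ * ‖e t - 1‖ = ‖trigPoly (fun k => w k - w (k + 1)) n t‖ := by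
  have hshift : trigPoly w n t = ∑ k ∈ range n, (w (k + 1) : ℂ) * e ((k + 1 : ℕ) * t) := by
    have hsplit := Finset.sum_range_succ (fun k => (w k : ℂ) * e (k * t)) n
    rw [Finset.sum_range_succ'] at hsplit
    simpa [trigPoly, h0, hn] using hsplit.symm
  have hmul : ∀ v : ℕ → ℝ,
      trigPoly v n t * e t = ∑ k ∈ range n, (v k : ℂ) * e ((k + 1 : ℕ) * t) := by
    intro v
    rw [trigPoly, Finset.sum_mul]
    refine Finset.sum_congr rfl fun k _ => ?_
    rw [mul_assoc, ← e_add, Nat.cast_succ, add_one_mul]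
  have hdiff : trigPoly w n t * (e t - 1) = trigPoly (fun k => w k - w (k + 1)) n t * e t := by
    rw [mul_sub, mul_one, hmul, hmul, hshift, ← Finset.sum_sub_distrib]
    simp_rw [← sub_mul, Complex.ofReal_sub]
  rw [← norm_mul, hdiff, norm_mul, norm_e, mul_one]

/-- The coefficients of the kernel of the averages over rotations: a triangle on `[0, 2 m]`. -/
noncomputable def triangle (m k : ℕ) : ℝ := min (k : ℝ) (2 * m - k)

lemma sq_triangle_sub_le_one (m k : ℕ) : (triangle m k - triangle m (k + 1)) ^ 2 ≤ 1 := by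
  rw [sq_le_one_iff_abs_le_one, triangle, triangle]
  refine (abs_min_sub_min_le_max _ _ _ _).trans (max_le ?_ ?_) <;> simp

lemma cube_div_three_le_sum_sq_triangle (m : ℕ) (hm : 1 ≤ m) :
    (m : ℝ) ^ 3 / 3 ≤ ∑ k ∈ range (2 * m), triangle m k ^ 2 := by
  have hsq : ∀ n : ℕ, (n : ℝ) ^ 3 / 3 ≤ ∑ k ∈ range (n + 1), (k : ℝ) ^ 2 := by
    intro n
    induction n with
    | zero => simp
    | succ n ih =>
      rw [Finset.sum_range_succ]
      push_cast
      nlinarith [(Nat.cast_nonneg n : (0 : ℝ) ≤ n)]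
  calc (m : ℝ) ^ 3 / 3 ≤ ∑ k ∈ range (m + 1), (k : ℝ) ^ 2 := hsq m
    _ = ∑ k ∈ range (m + 1), triangle m k ^ 2 := by
        refine Finset.sum_congr rfl fun k hk => ?_
        have hkm : (k : ℝ) ≤ m := by exact_mod_cast Nat.lt_succ_iff.1 (mem_range.1 hk)
        rw [triangle, min_eq_left (by linarith)]
    _ ≤ ∑ k ∈ range (2 * m), triangle m k ^ 2 :=
        Finset.sum_le_sum_of_subset_of_nonneg (range_subset_range.2 (by omega))
          fun _ _ _ => sq_nonneg _

lemma integral_sq_norm_trigPoly_triangle_mul_le (m : ℕ) :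
    ∫ t in (0 : ℝ)..1, ‖trigPoly (triangle m) (2 * m) t‖ ^ 2 * ‖e t - 1‖ ^ 2 ≤ 2 * m := by
  simp_rw [← mul_pow, norm_trigPoly_mul_norm_e_sub_one (w := triangle m) (n := 2 * m)
    (by simp [triangle]) (by simp [triangle])]
  rw [integral_sq_norm_trigPoly]
  simpa using Finset.sum_le_sum fun k (_ : k ∈ range (2 * m)) => sq_triangle_sub_le_one m k

section DifferenceForm
variable {g : ℕ → ℝ} {n : ℕ}

lemma sum_comp_le_sum_Icc (hg : ∀ h, 0 ≤ g h) (hg0 : g 0 = 0) {φ : ℕ → ℕ}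
    (hφn : ∀ l ∈ range n, φ l ≤ n) (hφ : ∀ a b, φ a ≠ 0 → φ a = φ b → a = b) :
    ∑ l ∈ range n, g (φ l) ≤ ∑ h ∈ Icc 1 n, g h := by
  calc ∑ l ∈ range n, g (φ l) = ∑ l ∈ range n with φ l ≠ 0, g (φ l) :=
        (Finset.sum_filter_of_ne fun l _ hl => mt (fun h0 => by rw [h0, hg0]) hl).symm
    _ = ∑ h ∈ ((range n).filter (φ · ≠ 0)).image φ, g h :=
        (Finset.sum_image fun a ha b _ => hφ a b (mem_filter.1 ha).2).symm
    _ ≤ ∑ h ∈ Icc 1 n, g h := by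
        refine Finset.sum_le_sum_of_subset_of_nonneg ?_ fun _ _ _ => hg _
        simp only [subset_iff, mem_image, mem_filter, mem_Icc]
        rintro _ ⟨l, ⟨hl, hl0⟩, rfl⟩
        exact ⟨Nat.one_le_iff_ne_zero.2 hl0, hφn l hl⟩

lemma sum_natAbs_sub_le (hg : ∀ h, 0 ≤ g h) (hg0 : g 0 = 0) {k : ℕ} (hk : k < n) :
    ∑ l ∈ range n, g ((k : ℤ) - l).natAbs ≤ 2 * ∑ h ∈ Icc 1 n, g h := by
  have hsplit : ∀ l : ℕ, g ((k : ℤ) - l).natAbs ≤ g (k - l) + g (l - k) := by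
    intro l
    rcases le_total k l with h | h
    · rw [show ((k : ℤ) - l).natAbs = l - k by omega]
      exact le_add_of_nonneg_left (hg _)
    · rw [show ((k : ℤ) - l).natAbs = k - l by omega]
      exact le_add_of_nonneg_right (hg _)
  calc ∑ l ∈ range n, g ((k : ℤ) - l).natAbs
      ≤ ∑ l ∈ range n, g (k - l) + ∑ l ∈ range n, g (l - k) := by
        rw [← Finset.sum_add_distrib]
        exact Finset.sum_le_sum fun l _ => hsplit l
    _ ≤ ∑ h ∈ Icc 1 n, g h + ∑ h ∈ Icc 1 n, g h := by
        exact add_le_add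
          (sum_comp_le_sum_Icc (φ := fun l => k - l) hg hg0 (fun _ _ => by omega)
            fun _ _ _ _ => by omega)
          (sum_comp_le_sum_Icc (φ := fun l => l - k) hg hg0
            (fun _ hl => (Nat.sub_le _ _).trans (mem_range.1 hl).le) fun _ _ _ _ => by omega)
    _ = 2 * ∑ h ∈ Icc 1 n, g h := (two_mul _).symm

lemma sum_abs_mul_natAbs_sub_le (hg : ∀ h, 0 ≤ g h) (hg0 : g 0 = 0) (w : ℕ → ℝ) :
    ∑ q ∈ range n ×ˢ range n, |w q.1 * w q.2| * g ((q.1 : ℤ) - q.2).natAbs ≤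
      (∑ k ∈ range n, w k ^ 2) * (2 * ∑ h ∈ Icc 1 n, g h) := by
  set S := ∑ q ∈ range n ×ˢ range n, w q.1 ^ 2 * g ((q.1 : ℤ) - q.2).natAbs with hS
  have hsymm : ∑ q ∈ range n ×ˢ range n, w q.2 ^ 2 * g ((q.1 : ℤ) - q.2).natAbs = S := by
    rw [hS, Finset.sum_product, Finset.sum_product_right]
    refine Finset.sum_congr rfl fun k _ => Finset.sum_congr rfl fun l _ => ?_
    rw [← Int.natAbs_neg, neg_sub]
  have hamgm : ∀ x y : ℝ, |x * y| ≤ (x ^ 2 + y ^ 2) / 2 := fun x y => by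
    rw [abs_mul]
    nlinarith [sq_nonneg (|x| - |y|), sq_abs x, sq_abs y]
  calc ∑ q ∈ range n ×ˢ range n, |w q.1 * w q.2| * g ((q.1 : ℤ) - q.2).natAbs
      ≤ ∑ q ∈ range n ×ˢ range n, (w q.1 ^ 2 + w q.2 ^ 2) / 2 * g ((q.1 : ℤ) - q.2).natAbs :=
        Finset.sum_le_sum fun q _ => mul_le_mul_of_nonneg_right (hamgm _ _) (hg _)
    _ = S := by
        simp_rw [div_mul_eq_mul_div, add_mul]
        rw [← Finset.sum_div, Finset.sum_add_distrib, hsymm, ← hS, add_self_div_two]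
    _ ≤ (∑ k ∈ range n, w k ^ 2) * (2 * ∑ h ∈ Icc 1 n, g h) := by
        rw [hS, Finset.sum_product, Finset.sum_mul]
        refine Finset.sum_le_sum fun k hk => ?_
        simp only [← Finset.mul_sum]
        exact mul_le_mul_of_nonneg_left (sum_natAbs_sub_le hg hg0 (mem_range.1 hk)) (sq_nonneg _)

end DifferenceForm

section ErdosTuran
variable (ξ : ℕ → ℝ) (N : ℕ)

/-- The number of `n ∈ [1, N]` for which `ξ n` lies in the arc `[a, a + β)` modulo `1`. -/
noncomputable def arcCount (a β : ℝ) : ℝ := ∑ n ∈ Icc 1 N, arcIndicator β (ξ n - a)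

lemma arcCount_nonneg (a β : ℝ) : 0 ≤ arcCount ξ N a β :=
  Finset.sum_nonneg fun _ _ => arcIndicator_nonneg _ _

lemma arcCount_le (a β : ℝ) : arcCount ξ N a β ≤ N := by
  simpa [arcCount] using
    Finset.sum_le_sum fun n (_ : n ∈ Icc 1 N) => arcIndicator_le_one β (ξ n - a)

lemma intervalIntegrable_arcCount_smul {E : Type*} [NormedAddCommGroup E] [NormedSpace ℝ E]
    (b β : ℝ) {φ : ℝ → E} (hφ : Continuous φ) :
    IntervalIntegrable (fun t => arcCount ξ N (b - t) β • φ t) volume 0 1 := by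
  refine (IntervalIntegrable.sum (Icc 1 N) fun n _ =>
    intervalIntegrable_arcIndicator_smul β (ξ n - b) hφ).congr fun t _ => ?_
  simp only [Finset.sum_apply, arcCount, Finset.sum_smul, sub_sub_eq_add_sub, sub_add_eq_add_sub]

lemma arcCount_compl (a : ℝ) {β : ℝ} (hβ0 : 0 ≤ β) (hβ1 : β ≤ 1) :
    arcCount ξ N (a + β) (1 - β) = N - arcCount ξ N a β := by
  suffices hz : ∀ z, arcIndicator (1 - β) (z - β) = 1 - arcIndicator β z by
    simp [arcCount, ← sub_sub, hz]
  intro z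
  have h0 := Int.fract_nonneg z
  have h1 := Int.fract_lt_one z
  have hfloor := Int.floor_add_fract z
  unfold arcIndicator
  rcases lt_or_ge (Int.fract z) β with h | h
  · have hfract : Int.fract (z - β) = Int.fract z - β + 1 :=
      Int.fract_eq_iff.2 ⟨by linarith, by linarith, ⌊z⌋ - 1, by push_cast; linarith⟩
    rw [hfract, if_pos h, if_neg (by linarith), sub_self]
  · have hfract : Int.fract (z - β) = Int.fract z - β :=
      Int.fract_eq_iff.2 ⟨by linarith, by linarith, ⌊z⌋, by linarith⟩
    rw [hfract, if_pos (by linarith), if_neg (by linarith), sub_zero]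

/-- Rotating an arc by at most `δ` keeps it inside its enlargement by `δ` on both sides. -/
lemma arcCount_le_arcCount_rotate (a : ℝ) {β δ t : ℝ} (hβ : β + 2 * δ ≤ 1)
    (ht : |t - round t| ≤ δ) : arcCount ξ N a β ≤ arcCount ξ N (a - δ - t) (β + 2 * δ) := by
  refine Finset.sum_le_sum fun n _ => ?_
  set z := ξ n - a with hz
  have h0 := Int.fract_nonneg z
  have hfloor := Int.floor_add_fract z
  rw [abs_le] at ht
  by_cases h : Int.fract z < β
  · have hfract : Int.fract (ξ n - (a - δ - t)) = Int.fract z + δ + (t - round t) :=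
      Int.fract_eq_iff.2
        ⟨by linarith, by linarith, ⌊z⌋ + round t, by push_cast; linarith⟩
    rw [arcIndicator, arcIndicator, hfract, if_pos h, if_pos (by linarith)]
  · rw [arcIndicator, if_neg h]
    exact arcIndicator_nonneg _ _

/-- The Weyl sum at frequency `h`, divided by `h`; the junk value at `h = 0` is `0`. -/
noncomputable def scaledWeylSum (h : ℕ) : ℝ := ‖∑ n ∈ Icc 1 N, e (h * ξ n)‖ / h

lemma scaledWeylSum_nonneg (h : ℕ) : 0 ≤ scaledWeylSum ξ N h := by
  unfold scaledWeylSum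
  positivity

lemma norm_sum_e_neg_mul_sub (b : ℝ) (h : ℤ) :
    ‖∑ n ∈ Icc 1 N, e (-(h * (ξ n - b)))‖ = ‖∑ n ∈ Icc 1 N, e (h.natAbs * ξ n)‖ := by
  have hrotate : ∑ n ∈ Icc 1 N, e (-(h * (ξ n - b))) =
      e (h * b) * ∑ n ∈ Icc 1 N, e (-(h * ξ n)) := by
    rw [Finset.mul_sum]
    refine Finset.sum_congr rfl fun n _ => ?_
    rw [← e_add]
    congr 1
    ring
  have hconj : ‖∑ n ∈ Icc 1 N, e (-(h * ξ n))‖ = ‖∑ n ∈ Icc 1 N, e (h * ξ n)‖ := by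
    simp_rw [← conj_e, ← map_sum, Complex.norm_conj]
  rw [hrotate, norm_mul, norm_e, one_mul]
  rcases Int.natAbs_eq h with hh | hh
  · rw [hconj, hh]
    simp
  · rw [hh]
    simp

lemma integral_arcCount_smul_e (b : ℝ) {β : ℝ} (hβ0 : 0 ≤ β) (hβ1 : β ≤ 1) (h : ℤ) :
    ∫ t in (0 : ℝ)..1, arcCount ξ N (b - t) β • e (h * t) =
      (∑ n ∈ Icc 1 N, e (-(h * (ξ n - b)))) * arcCoeff β h := by
  simp_rw [arcCount, Finset.sum_smul, ← sub_add]
  rw [intervalIntegral.integral_finsetSum fun n _ =>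
    intervalIntegrable_arcIndicator_smul β (ξ n - b) (by fun_prop), Finset.sum_mul]
  simp_rw [integral_arcIndicator_smul_e hβ0 hβ1]

lemma integral_arcCount_mul_sq_norm_trigPoly (b : ℝ) {β : ℝ} (hβ0 : 0 ≤ β) (hβ1 : β ≤ 1)
    (w : ℕ → ℝ) (n : ℕ) :
    ((∫ t in (0 : ℝ)..1, arcCount ξ N (b - t) β * ‖trigPoly w n t‖ ^ 2 : ℝ) : ℂ) =
      ∑ q ∈ range n ×ˢ range n, ((w q.1 * w q.2 : ℝ) : ℂ) *
        ((∑ i ∈ Icc 1 N, e (-(((q.1 - q.2 : ℤ) : ℝ) * (ξ i - b)))) * arcCoeff β (q.1 - q.2)) := by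
  have hexpand : ∀ t : ℝ, ((arcCount ξ N (b - t) β * ‖trigPoly w n t‖ ^ 2 : ℝ) : ℂ) =
      ∑ q ∈ range n ×ˢ range n, ((w q.1 * w q.2 : ℝ) : ℂ) *
        arcCount ξ N (b - t) β • e (((q.1 - q.2 : ℤ) : ℝ) * t) := by
    intro t
    rw [Complex.ofReal_mul, sq_norm_trigPoly, Finset.mul_sum]
    simp_rw [Complex.real_smul, mul_left_comm]
  rw [← intervalIntegral.integral_ofReal]
  simp_rw [hexpand]
  rw [intervalIntegral.integral_finsetSum fun q _ =>
    (intervalIntegrable_arcCount_smul ξ N b β (by fun_prop)).const_mul _]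
  simp_rw [intervalIntegral.integral_const_mul, integral_arcCount_smul_e ξ N b hβ0 hβ1]

lemma norm_sum_mul_arcCoeff_sub_le (b β : ℝ) (h : ℤ) :
    ‖(∑ n ∈ Icc 1 N, e (-(h * (ξ n - b)))) * arcCoeff β h - (if h = 0 then (β * N : ℂ) else 0)‖ ≤
      scaledWeylSum ξ N h.natAbs := by
  split_ifs with hh
  · simp [hh, arcCoeff_zero, e_zero, scaledWeylSum, mul_comm]
  · rw [sub_zero, norm_mul, norm_sum_e_neg_mul_sub, scaledWeylSum, div_eq_mul_one_div]
    exact mul_le_mul_of_nonneg_left (norm_arcCoeff_le β hh) (norm_nonneg _)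

lemma integral_arcCount_mul_sq_norm_trigPoly_le (b : ℝ) {β : ℝ} (hβ0 : 0 ≤ β) (hβ1 : β ≤ 1)
    (w : ℕ → ℝ) (n : ℕ) :
    ∫ t in (0 : ℝ)..1, arcCount ξ N (b - t) β * ‖trigPoly w n t‖ ^ 2 ≤
      (∑ k ∈ range n, w k ^ 2) * (β * N + 2 * ∑ h ∈ Icc 1 n, scaledWeylSum ξ N h) := by
  set W := ∑ k ∈ range n, w k ^ 2 with hW
  set I := ∫ t in (0 : ℝ)..1, arcCount ξ N (b - t) β * ‖trigPoly w n t‖ ^ 2 with hI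
  have hdiag : ((W * (β * N) : ℝ) : ℂ) = ∑ q ∈ range n ×ˢ range n, ((w q.1 * w q.2 : ℝ) : ℂ) *
      (if (q.1 - q.2 : ℤ) = 0 then (β * N : ℂ) else 0) := by
    rw [Finset.sum_product, hW]
    push_cast
    rw [Finset.sum_mul]
    refine Finset.sum_congr rfl fun k hk => ?_
    simp [sub_eq_zero, mem_range.1 hk, sq]
  have hdist : |I - W * (β * N)| ≤ W * (2 * ∑ h ∈ Icc 1 n, scaledWeylSum ξ N h) := by
    rw [← Real.norm_eq_abs, ← Complex.norm_real, Complex.ofReal_sub, hI,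
      integral_arcCount_mul_sq_norm_trigPoly ξ N b hβ0 hβ1, hdiag, ← Finset.sum_sub_distrib]
    refine (norm_sum_le _ _).trans <| (Finset.sum_le_sum fun q _ => ?_).trans
      (sum_abs_mul_natAbs_sub_le (scaledWeylSum_nonneg ξ N) (by simp [scaledWeylSum]) w)
    rw [← mul_sub, norm_mul, Complex.norm_real, Real.norm_eq_abs]
    exact mul_le_mul_of_nonneg_left (norm_sum_mul_arcCoeff_sub_le ξ N b β _) (abs_nonneg _)
  linarith [(abs_le.1 hdist).2]

variable {ξ N} in
/-- The bound is that of an enlarged arc containing `[a, a + β)` if `t` is within `δ` of an integer,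
and the trivial one otherwise, where the factor in parentheses is at most `0`. -/
lemma le_arcCount_rotate {B : ℝ}
    (hB : ∀ a β : ℝ, 0 ≤ β → β ≤ 1 → |arcCount ξ N a β - β * N| ≤ B) (a : ℝ) {β δ : ℝ}
    (hβ0 : 0 ≤ β) (hδ : 0 < δ) (hβδ : β + 2 * δ ≤ 1)
    (hX : 0 ≤ arcCount ξ N a β - (β + 2 * δ) * N + B) (t : ℝ) :
    (β + 2 * δ) * N - B + (arcCount ξ N a β - (β + 2 * δ) * N + B) *
      (1 - ‖e t - 1‖ ^ 2 / (16 * δ ^ 2)) ≤ arcCount ξ N (a - δ - t) (β + 2 * δ) := by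
  rcases le_total |t - round t| δ with ht | ht
  · have hmono := arcCount_le_arcCount_rotate ξ N a hβδ ht
    have hle : 1 - ‖e t - 1‖ ^ 2 / (16 * δ ^ 2) ≤ 1 := sub_le_self _ (by positivity)
    linarith [mul_le_mul_of_nonneg_left hle hX]
  · have hrotated := (abs_le.1 (hB (a - δ - t) (β + 2 * δ) (by positivity) hβδ)).1
    have hge : 1 ≤ ‖e t - 1‖ ^ 2 / (16 * δ ^ 2) := by
      rw [one_le_div (by positivity), show 16 * δ ^ 2 = (4 * δ) ^ 2 by ring]
      gcongr
      linarith [four_mul_abs_sub_round_le_norm_e_sub_one t]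
    linarith [mul_nonneg hX (sub_nonneg.2 hge)]

variable {ξ N} in
/-- If an arc had a large excess, so would all its slightly enlarged rotations by at most `δ`,
whereas the mean of the excess over rotations is small. -/
lemma excess_le_of_le {B : ℝ}
    (hB : ∀ a β : ℝ, 0 ≤ β → β ≤ 1 → |arcCount ξ N a β - β * N| ≤ B) {m : ℕ} (hm : 1 ≤ m)
    (a : ℝ) {β : ℝ} (hβ0 : 0 ≤ β) (hβ : β + 2 * (2 / m) ≤ 1) :
    3 / 4 * (arcCount ξ N a β - (β + 2 * (2 / m)) * N + B) ≤
      B + 2 * ∑ h ∈ Icc 1 (2 * m), scaledWeylSum ξ N h := by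
  have hB0 : 0 ≤ B := (abs_nonneg _).trans (hB 0 0 le_rfl zero_le_one)
  have hm0 : (0 : ℝ) < m := by exact_mod_cast hm
  set δ : ℝ := 2 / m with hδ
  have hδ0 : 0 < δ := by positivity
  set γ := β + 2 * δ with hγ
  set R := ∑ h ∈ Icc 1 (2 * m), scaledWeylSum ξ N h
  have hR0 : 0 ≤ R := Finset.sum_nonneg fun _ _ => scaledWeylSum_nonneg _ _ _
  set X := arcCount ξ N a β - γ * N + B with hXdef
  rcases lt_or_ge X 0 with hX | hX
  · linarith
  set K : ℝ → ℝ := fun t => ‖trigPoly (triangle m) (2 * m) t‖ ^ 2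
  have hKcont : Continuous K := by fun_prop
  set W := ∑ k ∈ range (2 * m), triangle m k ^ 2 with hW
  have hWm : (m : ℝ) ^ 3 / 3 ≤ W := cube_div_three_le_sum_sq_triangle m hm
  have hpointwise : ∀ t, (γ * N - B + X) * K t - X / (16 * δ ^ 2) * (K t * ‖e t - 1‖ ^ 2) ≤
      arcCount ξ N (a - δ - t) γ * K t := fun t =>
    (mul_le_mul_of_nonneg_right (le_arcCount_rotate hB a hβ0 hδ0 hβ hX t)
      (sq_nonneg _)).trans' (by rw [← hXdef, ← hγ]; exact le_of_eq (by ring))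
  have hmean := (intervalIntegral.integral_mono_on zero_le_one
    (Continuous.intervalIntegrable (by fun_prop) _ _)
    (intervalIntegrable_arcCount_smul ξ N (a - δ) γ hKcont) fun t _ => hpointwise t).trans
      (integral_arcCount_mul_sq_norm_trigPoly_le ξ N (a - δ) (by positivity) hβ (triangle m)
        (2 * m))
  rw [intervalIntegral.integral_sub (Continuous.intervalIntegrable (by fun_prop) _ _)
    (Continuous.intervalIntegrable (by fun_prop) _ _), intervalIntegral.integral_const_mul,
    intervalIntegral.integral_const_mul, integral_sq_norm_trigPoly, ← hW] at hmean
  have hmoment : X / (16 * δ ^ 2) * ∫ t in (0 : ℝ)..1, K t * ‖e t - 1‖ ^ 2 ≤ X * (W / 4) :=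
    calc _ ≤ X / (16 * δ ^ 2) * (2 * m) := by
          gcongr
          exact integral_sq_norm_trigPoly_triangle_mul_le m
      _ = X * ((m : ℝ) ^ 3 / 32) := by rw [hδ]; field_simp; ring
      _ ≤ X * (W / 4) := mul_le_mul_of_nonneg_left (by linarith [pow_pos hm0 3]) hX
  refine le_of_mul_le_mul_left ?_ ((by positivity : 0 < (m : ℝ) ^ 3 / 3).trans_le hWm)
  linarith

variable {ξ N} in
lemma arcCount_sub_le_of_le {B : ℝ}
    (hB : ∀ a β : ℝ, 0 ≤ β → β ≤ 1 → |arcCount ξ N a β - β * N| ≤ B) {m : ℕ} (hm : 1 ≤ m)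
    (a : ℝ) {β : ℝ} (hβ0 : 0 ≤ β) :
    arcCount ξ N a β - β * N ≤
      B / 3 + (8 / 3 * ∑ h ∈ Icc 1 (2 * m), scaledWeylSum ξ N h + 4 * N / m) := by
  have hN0 : (0 : ℝ) ≤ N := by positivity
  have hmul : 4 * (N : ℝ) / m = 2 * (2 / m) * N := by ring
  rcases le_or_gt (β + 2 * (2 / m)) 1 with hβ | hβ
  · linarith [excess_le_of_le hB hm a hβ0 hβ]
  · have hB0 : 0 ≤ B := (abs_nonneg _).trans (hB 0 0 le_rfl zero_le_one)
    have hR0 : 0 ≤ ∑ h ∈ Icc 1 (2 * m), scaledWeylSum ξ N h :=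
      Finset.sum_nonneg fun _ _ => scaledWeylSum_nonneg _ _ _
    linarith [arcCount_le ξ N a β, mul_le_mul_of_nonneg_right hβ.le hN0]

/-- The supremum `B` of the left-hand sides satisfies `B ≤ B / 3 + c`, since the deficit of an arc
is the excess of its complement. -/
lemma abs_arcCount_sub_le {m : ℕ} (hm : 1 ≤ m) (a : ℝ) {β : ℝ} (hβ0 : 0 ≤ β) (hβ1 : β ≤ 1) :
    |arcCount ξ N a β - β * N| ≤
      4 * ∑ h ∈ Icc 1 (2 * m), scaledWeylSum ξ N h + 6 * N / m := by
  set S : Set ℝ := {D | ∃ a β : ℝ, 0 ≤ β ∧ β ≤ 1 ∧ D = |arcCount ξ N a β - β * N|}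
  have hbdd : BddAbove S := by
    refine ⟨N, ?_⟩
    rintro D ⟨a, β, h0, h1, rfl⟩
    have hN0 : (0 : ℝ) ≤ N := by positivity
    exact abs_sub_le_of_nonneg_of_le (arcCount_nonneg ξ N a β) (arcCount_le ξ N a β)
      (by positivity) (mul_le_of_le_one_left hN0 h1)
  have hle : ∀ a β : ℝ, 0 ≤ β → β ≤ 1 → |arcCount ξ N a β - β * N| ≤ sSup S :=
    fun a β h0 h1 => le_csSup hbdd ⟨a, β, h0, h1, rfl⟩
  have hexcess := arcCount_sub_le_of_le hle hm
  have hself : sSup S ≤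
      sSup S / 3 + (8 / 3 * ∑ h ∈ Icc 1 (2 * m), scaledWeylSum ξ N h + 4 * N / m) := by
    refine csSup_le ⟨_, 0, 0, le_rfl, zero_le_one, rfl⟩ ?_
    rintro D ⟨a, β, h0, h1, rfl⟩
    refine abs_le.2 ⟨?_, hexcess a h0⟩
    have hcompl := hexcess (a + β) (sub_nonneg.2 h1)
    rw [arcCount_compl ξ N a h0 h1] at hcompl
    linarith
  have hdiv : 6 * (N : ℝ) / m = 3 / 2 * (4 * N / m) := by ring
  linarith [hle a β hβ0 hβ1]

section Intervals
variable {a b : ℝ} [DecidablePred fun n => Int.fract (ξ n) ∈ Set.Ioo a b]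

lemma card_filter_fract_mem_Ioo_le_arcCount (ha : 0 ≤ a) (hb : b ≤ 1) :
    (((Icc 1 N).filter fun n => Int.fract (ξ n) ∈ Set.Ioo a b).card : ℝ) ≤
      arcCount ξ N a (b - a) := by
  rw [Finset.natCast_card_filter]
  refine Finset.sum_le_sum fun n _ => ?_
  split_ifs with h
  · have hfract : Int.fract (ξ n - a) = Int.fract (ξ n) - a := by
      have hfloor := Int.floor_add_fract (ξ n)
      exact Int.fract_eq_iff.2
        ⟨by linarith [h.1], by linarith [h.2], ⌊ξ n⌋, by linarith⟩
    rw [arcIndicator, hfract, if_pos (by linarith [h.2])]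
  · exact arcIndicator_nonneg _ _

lemma arcCount_le_card_filter_fract_mem_Ioo (ha : 0 ≤ a) (hb : b ≤ 1) {η : ℝ} (hη : 0 < η) :
    arcCount ξ N (a + η) (b - a - η) ≤
      ((Icc 1 N).filter fun n => Int.fract (ξ n) ∈ Set.Ioo a b).card := by
  rw [Finset.natCast_card_filter]
  refine Finset.sum_le_sum fun n _ => ?_
  set z := ξ n - (a + η)
  by_cases h : Int.fract z < b - a - η
  · have h0 := Int.fract_nonneg z
    have hfloor := Int.floor_add_fract z
    have hfract : Int.fract (ξ n) = a + η + Int.fract z :=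
      Int.fract_eq_iff.2 ⟨by linarith, by linarith, ⌊z⌋, by linarith⟩
    rw [arcIndicator, if_pos h, if_pos]
    rw [hfract]
    exact ⟨by linarith, by linarith⟩
  · rw [arcIndicator, if_neg h]
    split_ifs <;> norm_num

end Intervals

theorem discrepancy_le_sum_scaledWeylSum {m : ℕ} (hm : 1 ≤ m) :
    discrepancy ξ N ≤ 4 * ∑ h ∈ Icc 1 (2 * m), scaledWeylSum ξ N h + 6 * N / m := by
  classical
  set c := 4 * ∑ h ∈ Icc 1 (2 * m), scaledWeylSum ξ N h + 6 * N / m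
  refine csSup_le ⟨_, 0, 1, le_rfl, zero_lt_one, le_rfl, rfl⟩ ?_
  rintro D ⟨a, b, ha, hab, hb, rfl⟩
  refine abs_le.2 ⟨?_, ?_⟩
  · have hlim : Filter.Tendsto (fun η : ℝ => (b - a - η) * N - c) (nhdsWithin 0 (Set.Ioi 0))
        (nhds ((b - a - 0) * N - c)) :=
      (Continuous.tendsto (by fun_prop) 0).mono_left nhdsWithin_le_nhds
    rw [sub_zero] at hlim
    rw [neg_le_sub_iff_le_add, ← sub_le_iff_le_add]
    refine le_of_tendsto hlim (Filter.mem_of_superset (Ioo_mem_nhdsGT (sub_pos.2 hab)) ?_)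
    intro η hη
    have hdeficit := (abs_le.1 (abs_arcCount_sub_le ξ N hm (a + η)
      (sub_nonneg.2 hη.2.le) (by linarith [hη.1]))).1
    have hcount := arcCount_le_card_filter_fract_mem_Ioo ξ N ha hb hη.1
    change (b - a - η) * N - c ≤ _
    linarith
  · have hexcess := (abs_le.1 (abs_arcCount_sub_le ξ N hm a
      (sub_nonneg.2 hab.le) (by linarith))).2
    have hcount := card_filter_fract_mem_Ioo_le_arcCount ξ N ha hb
    linarith

end ErdosTuran

/-! ### The discrepancy bound -/

lemma discrepancy_le (ξ : ℕ → ℝ) (N : ℕ) : discrepancy ξ N ≤ N := by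
  refine csSup_le ⟨_, 0, 1, le_rfl, zero_lt_one, le_rfl, rfl⟩ ?_
  rintro _ ⟨a, b, ha, hab, hb, rfl⟩
  refine abs_sub_le_of_nonneg_of_le (Nat.cast_nonneg _) ?_
    (mul_nonneg (by linarith) (Nat.cast_nonneg _))
    (mul_le_of_le_one_left (Nat.cast_nonneg _) (by linarith))
  exact_mod_cast (Finset.card_filter_le _ _).trans (by simp)

lemma sum_one_div_le_mul_rpow {j : ℕ} (hj : 1 ≤ j) {δ : ℝ} (hδ : 0 < δ) :
    ∑ h ∈ Icc 1 j, (1 : ℝ) / h ≤ (1 + 1 / δ) * (j : ℝ) ^ δ :=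
  calc ∑ h ∈ Icc 1 j, (1 : ℝ) / h = (harmonic j : ℝ) := by simp [harmonic_eq_sum_Icc]
    _ ≤ 1 + Real.log j := harmonic_le_one_add_log j
    _ ≤ (j : ℝ) ^ δ + (j : ℝ) ^ δ / δ :=
        add_le_add (Real.one_le_rpow (by exact_mod_cast hj) hδ.le)
          (Real.log_le_rpow_div (Nat.cast_nonneg j) hδ)
    _ = (1 + 1 / δ) * (j : ℝ) ^ δ := by ring

lemma add_one_pow_sub_pow_le {x : ℝ} (hx : 1 ≤ x) (k : ℕ) :
    (x + 1) ^ (k + 1) - x ^ (k + 1) ≤ (k + 1) * 2 ^ k * x ^ k :=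
  calc (x + 1) ^ (k + 1) - x ^ (k + 1)
      ≤ |x + 1 - x| * ((k + 1 : ℕ) : ℝ) * max |x + 1| |x| ^ k :=
        (le_abs_self _).trans (abs_pow_sub_pow_le _ _ _)
    _ = (k + 1) * (x + 1) ^ k := by
        rw [abs_of_nonneg (by linarith : 0 ≤ x + 1), abs_of_nonneg (by linarith : 0 ≤ x),
          max_eq_left (by linarith)]
        simp
    _ ≤ (k + 1) * (2 * x) ^ k := by gcongr; linarith
    _ = (k + 1) * 2 ^ k * x ^ k := by ring

lemma norm_sum_e_le_add_sub (f : ℕ → ℝ) {L N : ℕ} (hLN : L ≤ N) :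
    ‖∑ n ∈ Icc 1 N, e (f n)‖ ≤ ‖∑ n ∈ Icc 1 L, e (f n)‖ + (N - L) := by
  have hsub : Icc 1 L ⊆ Icc 1 N := Finset.Icc_subset_Icc le_rfl hLN
  rw [← Finset.sum_sdiff hsub, add_comm]
  refine (norm_add_le _ _).trans (add_le_add_right ((norm_sum_le _ _).trans_eq ?_) _)
  simp [norm_e, Finset.card_sdiff_of_subset hsub, Nat.cast_sub hLN]

lemma discrepancy_le_of_norm_sum_e_le {ξ : ℕ → ℝ} {N j : ℕ} (hj : 1 ≤ j) {S δ : ℝ} (hδ : 0 < δ)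
    (hS : ∀ h ∈ Icc 1 j, ‖∑ n ∈ Icc 1 N, e (h * ξ n)‖ ≤ S) :
    discrepancy ξ N ≤ 4 * (S * ((1 + 1 / δ) * (j : ℝ) ^ δ)) + 18 * (N / j) := by
  have hS0 : 0 ≤ S := (norm_nonneg _).trans (hS 1 (by simp [hj]))
  rcases hj.eq_or_lt with rfl | hj2
  · have hN := discrepancy_le ξ N
    have : 0 ≤ 4 * (S * ((1 + 1 / δ) * ((1 : ℕ) : ℝ) ^ δ)) := by positivity
    rw [Nat.cast_one, div_one] at *
    linarith [Nat.cast_nonneg (α := ℝ) N]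
  obtain ⟨m, hm1, hmj, hjm⟩ : ∃ m, 1 ≤ m ∧ 2 * m ≤ j ∧ j ≤ 3 * m := ⟨j / 2, by omega⟩
  have hsum : ∑ h ∈ Icc 1 (2 * m), scaledWeylSum ξ N h ≤ S * ((1 + 1 / δ) * (j : ℝ) ^ δ) :=
    calc ∑ h ∈ Icc 1 (2 * m), scaledWeylSum ξ N h ≤ ∑ h ∈ Icc 1 j, scaledWeylSum ξ N h :=
          Finset.sum_le_sum_of_subset_of_nonneg (Finset.Icc_subset_Icc le_rfl hmj)
            fun _ _ _ => scaledWeylSum_nonneg _ _ _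
      _ ≤ ∑ h ∈ Icc 1 j, S * (1 / h) := Finset.sum_le_sum fun h hh => by
          rw [scaledWeylSum, mul_one_div]
          exact div_le_div_of_nonneg_right (hS h hh) (Nat.cast_nonneg _)
      _ = S * ∑ h ∈ Icc 1 j, (1 : ℝ) / h := (Finset.mul_sum _ _ _).symm
      _ ≤ S * ((1 + 1 / δ) * (j : ℝ) ^ δ) :=
          mul_le_mul_of_nonneg_left (sum_one_div_le_mul_rpow hj hδ) hS0
  have hcutoff : 6 * (N : ℝ) / m ≤ 18 * (N / j) := by
    have hm0 : (0 : ℝ) < m := by exact_mod_cast hm1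
    rw [← mul_div_assoc, div_le_div_iff₀ hm0 (by positivity)]
    have : (j : ℝ) ≤ 3 * m := by exact_mod_cast hjm
    calc 6 * (N : ℝ) * j ≤ 6 * N * (3 * m) := by gcongr
      _ = 18 * N * m := by ring
  linarith [discrepancy_le_sum_scaledWeylSum ξ N hm1]

/-- Interpolation: lengths between `j ^ (d + 2)` and `(j + 1) ^ (d + 2)` cost only the trivial
bound for the `O(j ^ (d + 1))` extra terms. -/
lemma discrepancy_le_of_pow_le_of_lt {d : ℕ} {δ K : ℝ} (hδ : 0 < δ) {ξ : ℕ → ℝ} {j N : ℕ}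
    (hj : 1 ≤ j) (hjN : j ^ (d + 2) ≤ N) (hNj : N < (j + 1) ^ (d + 2))
    (hweyl : ∀ h ∈ Icc 1 j,
      ‖∑ n ∈ Icc 1 (j ^ (d + 2)), e (h * ξ n)‖ ≤ K * (j : ℝ) ^ ((d : ℝ) + 1 + δ)) :
    discrepancy ξ N ≤ (4 * ((K + (d + 2) * 2 ^ (d + 1)) * (1 + 1 / δ)) + 18 * 2 ^ (d + 2)) *
      (j : ℝ) ^ ((d : ℝ) + 1 + 2 * δ) := by
  have hj1 : (1 : ℝ) ≤ j := by exact_mod_cast hj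
  have hj0 : (0 : ℝ) < j := by linarith
  have hNle : (N : ℝ) ≤ ((j : ℝ) + 1) ^ (d + 2) := by exact_mod_cast hNj.le
  have hpow_le {η : ℝ} (hη : 0 ≤ η) : (j : ℝ) ^ (d + 1) ≤ (j : ℝ) ^ ((d : ℝ) + 1 + η) := by
    rw [← Real.rpow_natCast]
    exact Real.rpow_le_rpow_of_exponent_le hj1 (by push_cast; linarith)
  have hgap : (N : ℝ) - (j ^ (d + 2) : ℕ) ≤
      (d + 2) * 2 ^ (d + 1) * (j : ℝ) ^ ((d : ℝ) + 1 + δ) :=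
    calc (N : ℝ) - (j ^ (d + 2) : ℕ) ≤ ((j : ℝ) + 1) ^ (d + 2) - (j : ℝ) ^ (d + 2) := by
          push_cast; linarith
      _ ≤ ((d + 1 : ℕ) + 1) * 2 ^ (d + 1) * (j : ℝ) ^ (d + 1) := add_one_pow_sub_pow_le hj1 _
      _ = (d + 2) * 2 ^ (d + 1) * (j : ℝ) ^ (d + 1) := by push_cast; ring
      _ ≤ (d + 2) * 2 ^ (d + 1) * (j : ℝ) ^ ((d : ℝ) + 1 + δ) :=
          mul_le_mul_of_nonneg_left (hpow_le hδ.le) (by positivity)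
  have hweylN : ∀ h ∈ Icc 1 j, ‖∑ n ∈ Icc 1 N, e (h * ξ n)‖ ≤
      (K + (d + 2) * 2 ^ (d + 1)) * (j : ℝ) ^ ((d : ℝ) + 1 + δ) := fun h hh => by
    rw [add_mul]
    exact (norm_sum_e_le_add_sub (fun n => h * ξ n) hjN).trans (add_le_add (hweyl h hh) hgap)
  have hcutoff : (N : ℝ) / j ≤ 2 ^ (d + 2) * (j : ℝ) ^ ((d : ℝ) + 1 + 2 * δ) := by
    rw [div_le_iff₀ hj0]
    calc (N : ℝ) ≤ (2 * j) ^ (d + 2) := hNle.trans (by gcongr; linarith)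
      _ = 2 ^ (d + 2) * (j : ℝ) ^ (d + 1) * j := by ring
      _ ≤ 2 ^ (d + 2) * (j : ℝ) ^ ((d : ℝ) + 1 + 2 * δ) * j :=
          mul_le_mul_of_nonneg_right
            (mul_le_mul_of_nonneg_left (hpow_le (by positivity)) (by positivity)) hj0.le
  have hrpow : (j : ℝ) ^ ((d : ℝ) + 1 + 2 * δ) = (j : ℝ) ^ ((d : ℝ) + 1 + δ) * (j : ℝ) ^ δ := by
    rw [← Real.rpow_add hj0]
    ring_nf
  refine (discrepancy_le_of_norm_sum_e_le hj hδ hweylN).trans ?_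
  rw [hrpow] at hcutoff ⊢
  linarith

lemma rpow_le_rpow_of_pow_le {d j N : ℕ} {δ ε : ℝ} (hj : 1 ≤ j) (hjN : j ^ (d + 2) ≤ N)
    (hδ : 0 ≤ δ) (hδε : δ ≤ ε) :
    (j : ℝ) ^ ((d : ℝ) + 1 + 2 * δ) ≤ (N : ℝ) ^ (1 - 1 / ((d : ℝ) + 2) + ε) := by
  set κ := 1 - 1 / ((d : ℝ) + 2) + ε with hκ
  have hmul : ((d + 2 : ℕ) : ℝ) * κ = d + 1 + (d + 2) * ε := by
    rw [hκ]; push_cast; field_simp; ring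
  have hκ0 : 0 ≤ κ := by
    refine nonneg_of_mul_nonneg_right (?_ : 0 ≤ ((d + 2 : ℕ) : ℝ) * κ) (by positivity)
    rw [hmul]
    have := hδ.trans hδε
    positivity
  calc (j : ℝ) ^ ((d : ℝ) + 1 + 2 * δ) ≤ (j : ℝ) ^ (((d + 2 : ℕ) : ℝ) * κ) := by
        refine Real.rpow_le_rpow_of_exponent_le (by exact_mod_cast hj) ?_
        rw [hmul]
        nlinarith [mul_nonneg (Nat.cast_nonneg (α := ℝ) d) (hδ.trans hδε)]
    _ = ((j : ℝ) ^ (d + 2)) ^ κ := Real.rpow_natCast_mul (by positivity) _ _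
    _ ≤ (N : ℝ) ^ κ := Real.rpow_le_rpow (by positivity) (by exact_mod_cast hjN) hκ0

theorem discrepancy_eval_le {d : ℕ} {δ ε K x : ℝ} (hδ : 0 < δ) (hδε : δ ≤ ε) (hK : 0 ≤ K)
    (hweyl : ∀ j : ℕ, ∀ h ∈ Icc 1 j, ∀ P : Polynomial ℝ, P.natDegree ≤ d → P.coeff d = h * x →
      ‖∑ n ∈ Icc 1 (j ^ (d + 2)), e (P.eval (n : ℝ))‖ ≤ K * (j : ℝ) ^ ((d : ℝ) + 1 + δ))
    {N : ℕ} (hN : 1 ≤ N) {P : Polynomial ℝ} (hdeg : P.natDegree ≤ d) (hcoeff : P.coeff d = x) :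
    discrepancy (fun n => P.eval (n : ℝ)) N ≤
      (4 * ((K + (d + 2) * 2 ^ (d + 1)) * (1 + 1 / δ)) + 18 * 2 ^ (d + 2)) *
        (N : ℝ) ^ (1 - 1 / ((d : ℝ) + 2) + ε) := by
  have hd : d + 2 ≠ 0 := by omega
  set j := Nat.nthRoot (d + 2) N
  have hj : 1 ≤ j := (Nat.le_nthRoot_iff hd).2 (by simpa)
  have hjN : j ^ (d + 2) ≤ N := Nat.pow_nthRoot_le (.inl hd)
  refine (discrepancy_le_of_pow_le_of_lt hδ hj hjN (Nat.lt_pow_nthRoot_add_one hd N)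
    fun h hh => ?_).trans
      (mul_le_mul_of_nonneg_left (rpow_le_rpow_of_pow_le hj hjN hδ.le hδε) (by positivity))
  simpa using hweyl j h hh (Polynomial.C (h : ℝ) * P)
    ((Polynomial.natDegree_C_mul_le _ _).trans hdeg) (by rw [Polynomial.coeff_C_mul, hcoeff])

lemma coeff_taylor_of_natDegree_le {R : Type*} [CommSemiring R] {P : Polynomial R} {d : ℕ}
    (hdeg : P.natDegree ≤ d) (r : R) : (Polynomial.taylor r P).coeff d = P.coeff d := by
  rcases hdeg.eq_or_lt with rfl | hlt
  · exact Polynomial.coeff_taylor_natDegree r P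
  · rw [Polynomial.coeff_eq_zero_of_natDegree_lt hlt, Polynomial.coeff_eq_zero_of_natDegree_lt]
    rwa [Polynomial.natDegree_taylor]

lemma exists_polynomial_eval_eq_sum_mul_add_pow {d : ℕ} (hd : 1 ≤ d) (a : Fin d → ℝ) (M : ℝ) :
    ∃ P : Polynomial ℝ, P.natDegree ≤ d ∧ P.coeff d = a ⟨d - 1, by omega⟩ ∧
      ∀ t, P.eval t = ∑ j : Fin d, a j * (M + t) ^ ((j : ℕ) + 1) := by
  set Q : Polynomial ℝ := ∑ j : Fin d, Polynomial.C (a j) * Polynomial.X ^ ((j : ℕ) + 1) with hQ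
  have hdeg : Q.natDegree ≤ d := Polynomial.natDegree_sum_le_of_forall_le _ _ fun j _ =>
    (Polynomial.natDegree_C_mul_X_pow_le _ _).trans j.isLt
  refine ⟨Polynomial.taylor M Q, (Polynomial.natDegree_taylor Q M).trans_le hdeg, ?_, fun t => ?_⟩
  · rw [coeff_taylor_of_natDegree_le hdeg, hQ, Polynomial.finsetSum_coeff,
      Finset.sum_eq_single ⟨d - 1, by omega⟩]
    · simp [Nat.sub_add_cancel hd]
    · intro j _ hj
      have : d ≠ (j : ℕ) + 1 := fun h => hj (Fin.ext (by simp; omega))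
      simp [Polynomial.coeff_X_pow, this]
    · simp
  · rw [Polynomial.taylor_eval, hQ, Polynomial.eval_finsetSum, add_comm]
    simp

end Vinogradov

theorem discrepancy_short_intervals_general (d : ℕ) (hd : 2 ≤ d) :
    ∀ᵐ x : ℝ, x ∈ Set.Icc (0 : ℝ) 1 →
      ∀ ε : ℝ, 0 < ε → ∃ C : ℝ, ∀ N : ℕ, 1 ≤ N →
        ∀ P : Polynomial ℝ, P.natDegree ≤ d → P.coeff d = x →
          discrepancy (fun n => P.eval (n : ℝ)) N ≤
            C * (N : ℝ) ^ (1 - 1 / ((d : ℝ) + 2) + ε) := by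
  have hweyl := ae_all_iff.2 fun i : ℕ =>
    Vinogradov.ae_norm_sum_e_eval_le hd (Nat.one_div_pos_of_nat (α := ℝ) (n := i))
  filter_upwards [(ae_restrict_iff' measurableSet_Icc).1 hweyl] with x hx hx01 ε hε
  obtain ⟨i, hi⟩ := exists_nat_one_div_lt hε
  obtain ⟨K, hK, hKweyl⟩ := hx hx01 i
  exact ⟨_, fun N hN P hdeg hcoeff => Vinogradov.discrepancy_eval_le Nat.one_div_pos_of_nat hi.le
    (zero_le_one.trans hK) hKweyl hN hdeg hcoeff⟩

theorem discrepancy_short_intervals (d : ℕ) (hd : 2 ≤ d) :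
    ∀ᵐ x : ℝ, x ∈ Set.Icc (0 : ℝ) 1 →
      ∀ ε : ℝ, 0 < ε → ∃ C : ℝ, ∀ N : ℕ, 1 ≤ N →
        ∀ y : Fin (d - 1) → ℝ, (∀ j, y j ∈ Set.Ico (0 : ℝ) 1) → ∀ M : ℤ,
          discrepancy (fun n => ∑ j : Fin d,
            (if h : (j : ℕ) < d - 1 then y ⟨(j : ℕ), h⟩ else x) *
              ((M : ℝ) + (n : ℝ)) ^ ((j : ℕ) + 1)) N ≤
          C * (N : ℝ) ^ (1 - 1 / ((d : ℝ) + 2) + ε) := by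
  filter_upwards [discrepancy_short_intervals_general d hd] with x hx hx01 ε hε
  refine (hx hx01 ε hε).imp fun C hC N hN y _ M => ?_
  obtain ⟨P, hdeg, hcoeff, heval⟩ := Vinogradov.exists_polynomial_eval_eq_sum_mul_add_pow
    (one_le_two.trans hd) (fun j => if h : (j : ℕ) < d - 1 then y ⟨j, h⟩ else x) M
  simpa only [heval] using hC N hN P hdeg (by simpa using hcoeff)
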